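/- arXiv:1004.2613 — 4 statements merged into one kernel-verified Lean document; each statement's English description precedes it below -/
import Mathlib

section
/- Let F be a number field and T a torus over F split by a finite Galois extension E/F. Then there exists a positive integer c, depending only on F and T (one may take c = 2·gcd(μ(E), [E:F]) where μ(E) is the number of roots of unity in E), such that for every positive integer k, the Tate–Shafarevich group Ш¹_F(T[k]) = ker(H¹(F, T[k]) → ∏_{𝔭 finite} H¹(F_𝔭, T[k])) is killed by c. -/
open IsDedekindDomain NumberField

open Filter Topology in
/-- If a size function `a` grows linearly, there is no injection of pairs, multiplicative in the
sizes, into a set whose size function grows linearly. -/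
lemma not_injective_of_linear_growth {α β : Type*} (a : α → ℕ) (b : β → ℕ)
    (ha : ∀ i, 0 < a i) (hfa : ∀ n, {i | a i ≤ n}.Finite) (hfb : ∀ n, {i | b i ≤ n}.Finite)
    {r s : ℝ} (hr : 0 < r)
    (hA : Tendsto (fun x : ℝ ↦ (Nat.card {i // (a i : ℝ) ≤ x} : ℝ) / x) atTop (𝓝 r))
    (hB : Tendsto (fun x : ℝ ↦ (Nat.card {i // (b i : ℝ) ≤ x} : ℝ) / x) atTop (𝓝 s))
    (Φ : α × α → β) (hΦ : ∀ i j, b (Φ (i, j)) = a i * a j) : ¬ Function.Injective Φ := by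
  intro hinj
  have hfina (x : ℝ) : {i | (a i : ℝ) ≤ x}.Finite :=
    (hfa ⌊x⌋₊).subset fun i hi ↦ Nat.le_floor hi
  have hfinb (x : ℝ) : {i | (b i : ℝ) ≤ x}.Finite :=
    (hfb ⌊x⌋₊).subset fun i hi ↦ Nat.le_floor hi
  have hA' : ∀ᶠ x in atTop, r / 2 * x ≤ (Nat.card {i // (a i : ℝ) ≤ x} : ℝ) := by
    filter_upwards [hA.eventually (lt_mem_nhds (half_lt_self hr)), eventually_gt_atTop 0]
      with x hx hx0
    exact ((lt_div_iff₀ hx0).mp hx).le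
  have hB' : ∀ᶠ x in atTop, (Nat.card {i // (b i : ℝ) ≤ x} : ℝ) ≤ (s + 1) * x := by
    filter_upwards [hB.eventually (gt_mem_nhds (lt_add_one s)), eventually_gt_atTop 0]
      with x hx hx0
    exact ((div_lt_iff₀ hx0).mp hx).le
  have hsum : Summable fun i ↦ (a i : ℝ)⁻¹ := by
    refine summable_of_sum_le (c := (s + 1) / (r / 2)) (fun i ↦ by positivity) fun u ↦ ?_
    have h1 : ∀ᶠ x in atTop, ∀ j ∈ u,
        r / 2 * (x / a j) ≤ (Nat.card {i // (a i : ℝ) ≤ x / a j} : ℝ) :=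
      (Finset.eventually_all u).mpr fun j _ ↦
        (tendsto_id.atTop_div_const (by exact_mod_cast ha j)).eventually hA'
    obtain ⟨x, hx1, hx2, hx0⟩ := (h1.and (hB'.and (eventually_gt_atTop 0))).exists
    have h2 : ∑ j ∈ u, Nat.card {i // (a i : ℝ) ≤ x / a j} ≤
        Nat.card {i // (b i : ℝ) ≤ x} := by
      have : Finite {i // (b i : ℝ) ≤ x} := (hfinb x).to_subtype
      have (j : u) : Finite {i // (a i : ℝ) ≤ x / a j} := (hfina (x / a j)).to_subtype
      rw [← Finset.sum_coe_sort, ← Nat.card_sigma]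
      refine Nat.card_le_card_of_injective
        (fun p : Σ j : u, {i // (a i : ℝ) ≤ x / a j} ↦ ⟨Φ (p.2.1, p.1.1), ?_⟩) ?_
      · rw [hΦ, Nat.cast_mul]
        exact (le_div_iff₀ (by exact_mod_cast ha _)).mp p.2.2
      · rintro ⟨⟨j, hj⟩, ⟨i, hi⟩⟩ ⟨⟨j', hj'⟩, ⟨i', hi'⟩⟩ h
        have := hinj (Subtype.ext_iff.mp h)
        simp only [Prod.mk.injEq] at this
        obtain ⟨rfl, rfl⟩ := this
        rfl
    have h3 : (r / 2 * ∑ j ∈ u, (a j : ℝ)⁻¹) * x ≤ (s + 1) * x := by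
      refine le_trans ?_ hx2
      refine le_trans ?_ (Nat.cast_le.mpr h2)
      rw [Nat.cast_sum, Finset.mul_sum, Finset.sum_mul]
      refine Finset.sum_le_sum fun j hj ↦ le_trans (le_of_eq ?_) (hx1 j hj)
      rw [div_eq_mul_inv x]; ring
    rw [le_div_iff₀ (half_pos hr), mul_comm]
    exact le_of_mul_le_mul_right h3 hx0
  obtain ⟨t, ht⟩ := summable_iff_vanishing_norm.mp hsum (r / 4) (by positivity)
  have h4 : ∀ᶠ x : ℝ in atTop, (t.card : ℝ) ≤ r / 4 * x :=
    (tendsto_id.const_mul_atTop (by positivity : 0 < r / 4)).eventually_ge_atTop _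
  obtain ⟨x, hx1, hx2, hx0⟩ := (hA'.and (h4.and (eventually_gt_atTop 0))).exists
  classical
  have hfx := hfina x
  have h5 := ht (hfx.toFinset \ t) Finset.sdiff_disjoint
  have h6 : ((hfx.toFinset \ t).card : ℝ) * x⁻¹ ≤ ∑ i ∈ hfx.toFinset \ t, (a i : ℝ)⁻¹ := by
    rw [← nsmul_eq_mul]
    refine Finset.card_nsmul_le_sum _ _ _ fun i hi ↦ ?_
    have : (a i : ℝ) ≤ x := by simpa using (Finset.mem_sdiff.mp hi).1
    exact inv_anti₀ (by exact_mod_cast ha i) this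
  have h7 : ((hfx.toFinset \ t).card : ℝ) < r / 4 * x := by
    rw [← mul_inv_lt_iff₀ hx0]
    exact h6.trans_lt ((le_abs_self _).trans_lt h5)
  have h8 : Nat.card {i // (a i : ℝ) ≤ x} = hfx.toFinset.card := by
    rw [← Nat.card_eq_card_finite_toFinset]; rfl
  have h9 : (hfx.toFinset.card : ℝ) ≤ (hfx.toFinset \ t).card + t.card := by
    exact_mod_cast Finset.card_le_card_sdiff_add_card
  rw [h8] at hx1
  linarith

section Pairs

open UniqueFactorizationMonoid nonZeroDivisors

/-- Two disjoint norm-preserving sections of the restriction of primes give a norm-multiplicative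
injection of pairs of ideals. -/
lemma exists_injective_pairs {A B : Type*} [CommRing A] [IsDedekindDomain A] [Module.Free ℤ A]
    [CommRing B] [IsDedekindDomain B] [Module.Free ℤ B] [Algebra A B]
    (P Q : Ideal A → Ideal B)
    (hP : ∀ p, Prime p → Prime (P p)) (hQ : ∀ p, Prime p → Prime (Q p))
    (hPu : ∀ p, Prime p → (P p).under A = p) (hQu : ∀ p, Prime p → (Q p).under A = p)
    (hPQ : ∀ p, Prime p → P p ≠ Q p)
    (hPn : ∀ p, Prime p → Ideal.absNorm (P p) = Ideal.absNorm p)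
    (hQn : ∀ p, Prime p → Ideal.absNorm (Q p) = Ideal.absNorm p) :
    ∃ Φ : (Ideal A)⁰ × (Ideal A)⁰ → (Ideal B)⁰, Function.Injective Φ ∧
      ∀ I J, Ideal.absNorm (Φ (I, J) : Ideal B) =
        Ideal.absNorm (I : Ideal A) * Ideal.absNorm (J : Ideal A) := by
  classical
  let m (I J : Ideal A) : Multiset (Ideal B) :=
    (normalizedFactors I).map P + (normalizedFactors J).map Q
  have hm (I J : Ideal A) : ∀ p ∈ m I J, Prime p := by
    intro p hp
    rcases Multiset.mem_add.mp hp with h | h <;> obtain ⟨q, hq, rfl⟩ := Multiset.mem_map.mp h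
    · exact hP _ (prime_of_normalized_factor _ hq)
    · exact hQ _ (prime_of_normalized_factor _ hq)
  have hm0 (I J : Ideal A) : (m I J).prod ∈ (Ideal B)⁰ := by
    refine mem_nonZeroDivisors_of_ne_zero (Multiset.prod_ne_zero fun h ↦ ?_)
    exact (hm I J _ h).ne_zero rfl
  have hfP (I : Ideal A) : ((normalizedFactors I).map P).filter (fun x ↦ P (x.under A) = x) =
      (normalizedFactors I).map P := by
    refine Multiset.filter_eq_self.mpr fun x hx ↦ ?_
    obtain ⟨q, hq, rfl⟩ := Multiset.mem_map.mp hx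
    rw [hPu _ (prime_of_normalized_factor _ hq)]
  have hfQ (I : Ideal A) : ((normalizedFactors I).map Q).filter (fun x ↦ P (x.under A) = x) =
      0 := by
    refine Multiset.filter_eq_nil.mpr fun x hx ↦ ?_
    obtain ⟨q, hq, rfl⟩ := Multiset.mem_map.mp hx
    rw [hQu _ (prime_of_normalized_factor _ hq)]
    exact hPQ _ (prime_of_normalized_factor _ hq)
  have hinj (R : Ideal A → Ideal B) (hR : ∀ p, Prime p → (R p).under A = p) {I J : Ideal A}
      (hI : I ≠ ⊥) (hJ : J ≠ ⊥)
      (h : (normalizedFactors I).map R = (normalizedFactors J).map R) : I = J := by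
    have key (I : Ideal A) :
        ((normalizedFactors I).map R).map (fun x ↦ x.under A) = normalizedFactors I := by
      rw [Multiset.map_map]
      refine (Multiset.map_congr rfl fun q hq ↦ ?_).trans (Multiset.map_id _)
      exact hR _ (prime_of_normalized_factor _ hq)
    rw [← Ideal.prod_normalizedFactors_eq_self hI, ← Ideal.prod_normalizedFactors_eq_self hJ,
      ← key I, h, key J]
  have hnorm (R : Ideal A → Ideal B) (hR : ∀ p, Prime p → Ideal.absNorm (R p) = Ideal.absNorm p)
      {I : Ideal A} (hI : I ≠ ⊥) :
      Ideal.absNorm ((normalizedFactors I).map R).prod = Ideal.absNorm I := by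
    conv_rhs => rw [← Ideal.prod_normalizedFactors_eq_self hI]
    rw [map_multiset_prod, map_multiset_prod, Multiset.map_map]
    congr 1
    exact Multiset.map_congr rfl fun q hq ↦ hR _ (prime_of_normalized_factor _ hq)
  refine ⟨fun x ↦ ⟨(m x.1 x.2).prod, hm0 _ _⟩, ?_, fun I J ↦ ?_⟩
  · rintro ⟨I, J⟩ ⟨I', J'⟩ h
    have h1 : m I J = m I' J' := by
      rw [← normalizedFactors_prod_of_prime (hm I J), ← normalizedFactors_prod_of_prime (hm I' J')]
      exact congrArg normalizedFactors (Subtype.ext_iff.mp h)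
    have h2 := congrArg (Multiset.filter fun x ↦ P (x.under A) = x) h1
    simp only [m, Multiset.filter_add, hfP, hfQ, add_zero] at h2
    simp only [m, h2, add_right_inj] at h1
    have ne (I : (Ideal A)⁰) : (I : Ideal A) ≠ ⊥ := nonZeroDivisors.ne_zero I.2
    exact Prod.ext (Subtype.ext (hinj P hPu (ne _) (ne _) h2))
      (Subtype.ext (hinj Q hQu (ne _) (ne _) h1))
  · have ne (I : (Ideal A)⁰) : (I : Ideal A) ≠ ⊥ := nonZeroDivisors.ne_zero I.2
    simp only [m, Multiset.prod_add, map_mul, hnorm P hPn (ne I), hnorm Q hQn (ne J)]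

/-- The primes of a number field do not admit two disjoint systems of norm-preserving lifts to an
extension. -/
lemma not_two_norm_preserving_lifts (M L : Type*) [Field M] [NumberField M] [Field L]
    [NumberField L] [Algebra M L]
    (h : ∀ p : Ideal (𝓞 M), Prime p → ∃ P Q : Ideal (𝓞 L), Prime P ∧ Prime Q ∧
      P.under (𝓞 M) = p ∧ Q.under (𝓞 M) = p ∧ P ≠ Q ∧
      Ideal.absNorm P = Ideal.absNorm p ∧ Ideal.absNorm Q = Ideal.absNorm p) : False := by
  choose! P Q hP hQ hPu hQu hPQ hPn hQn using h
  obtain ⟨Φ, hinj, hΦ⟩ := exists_injective_pairs P Q hP hQ hPu hQu hPQ hPn hQn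
  refine not_injective_of_linear_growth (fun I : (Ideal (𝓞 M))⁰ ↦ Ideal.absNorm (I : Ideal (𝓞 M)))
    (fun I : (Ideal (𝓞 L))⁰ ↦ Ideal.absNorm (I : Ideal (𝓞 L))) (fun I ↦ ?_)
    Ideal.finite_setOfPred_absNorm_le₀ Ideal.finite_setOfPred_absNorm_le₀
    (dedekindZeta_residue_pos M)
    (NumberField.Ideal.tendsto_norm_le_div_atTop₀ M)
    (NumberField.Ideal.tendsto_norm_le_div_atTop₀ L) Φ hΦ hinj
  exact Ideal.absNorm_pos_of_nonZeroDivisors I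

end Pairs

section Splitting

open NNReal Pointwise

lemma valuation_le_one_of_isIntegral {L Γ₀ : Type*} [Field L] [LinearOrderedCommGroupWithZero Γ₀]
    (w : Valuation L Γ₀) {x : L} (hx : IsIntegral ℤ x) : w x ≤ 1 :=
  (Valuation.integer.integers w).mem_of_integral (hx.tower_top (A := w.integer))

variable {L : Type*} [Field L] (w : Valuation L ℝ≥0)

/-- The prime of `𝓞 L` on which the valuation `w` is less than `1`. -/
def valuationCenter : Ideal (𝓞 L) where
  carrier := {x | w (x : L) < 1}
  add_mem' {a b} ha hb := by
    simpa using (w.map_add _ _).trans_lt (max_lt ha hb)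
  zero_mem' := by simp
  smul_mem' a b hb := by
    simpa using mul_lt_one_of_nonneg_of_lt_one_right
      (valuation_le_one_of_isIntegral w a.isIntegral_coe) zero_le hb

lemma mem_valuationCenter {x : 𝓞 L} : x ∈ valuationCenter w ↔ w (x : L) < 1 := Iff.rfl

lemma valuation_eq_one_of_notMem_center {x : 𝓞 L} (hx : x ∉ valuationCenter w) :
    w (x : L) = 1 :=
  le_antisymm (valuation_le_one_of_isIntegral w x.isIntegral_coe)
    (not_lt.mp ((mem_valuationCenter w).not.mp hx))

instance : (valuationCenter w).IsPrime where
  ne_top' := by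
    rw [Ideal.ne_top_iff_one, mem_valuationCenter]
    simp
  mem_or_mem' {x y} h := by
    by_contra! hxy
    rw [mem_valuationCenter] at h
    simp [valuation_eq_one_of_notMem_center w hxy.1,
      valuation_eq_one_of_notMem_center w hxy.2] at h

variable [NumberField L]

/-- An automorphism preserving the center of `w` preserves the valuation ring of `w`. -/
lemma valuation_le_one_of_preserves_center (h0 : valuationCenter w ≠ ⊥)
    (σ : L →+* L) (τ : 𝓞 L → 𝓞 L) (hτ : ∀ x : 𝓞 L, (τ x : L) = σ x)
    (hc : ∀ x, x ∉ valuationCenter w → τ x ∉ valuationCenter w) {x : L} (hx : w x ≤ 1) :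
    w (σ x) ≤ 1 := by
  obtain ⟨n, d, hd, h⟩ : ∃ n d : 𝓞 L, d ∉ valuationCenter w ∧ x * d = n := by
    obtain ⟨n, ⟨d, hd⟩, h | h⟩ := HeightOneSpectrum.exists_primeCompl_mul_eq_or_mul_eq
      (⟨valuationCenter w, inferInstance, h0⟩ : HeightOneSpectrum (𝓞 L)) x
    · exact ⟨n, d, hd, h⟩
    · refine ⟨d, n, fun hn ↦ ?_, h⟩
      have h1 := congrArg w h
      rw [map_mul] at h1
      have h2 : w (d : L) = 1 := valuation_eq_one_of_notMem_center w hd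
      have h3 := mul_lt_one_of_nonneg_of_lt_one_right hx zero_le ((mem_valuationCenter w).mp hn)
      exact (h3.trans_eq h2.symm).ne h1
  have h1 := congrArg (fun y ↦ w (σ y)) h
  simp only [map_mul, ← hτ] at h1
  rw [valuation_eq_one_of_notMem_center w (hc d hd), mul_one] at h1
  rw [h1]
  exact valuation_le_one_of_isIntegral w (τ n).isIntegral_coe

lemma eq_self_of_dense_fixed (h0 : valuationCenter w ≠ ⊥)
    (σ : L →+* L) (τ : 𝓞 L → 𝓞 L) (hτ : ∀ x : 𝓞 L, (τ x : L) = σ x)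
    (hc : ∀ x, x ∉ valuationCenter w → τ x ∉ valuationCenter w)
    {π : L} (hπ0 : π ≠ 0) (hπ1 : w π < 1) (hσπ : σ π = π)
    (hd : ∀ (x : L) (ε : ℝ≥0), 0 < ε → ∃ y, σ y = y ∧ w (x - y) < ε) (x : L) : σ x = x := by
  by_contra hne
  have hw : 0 < w (σ x - x) := by simpa [pos_iff_ne_zero, sub_eq_zero] using hne
  obtain ⟨j, hj⟩ := NNReal.exists_pow_lt_of_lt_one hw hπ1
  have hπj : 0 < w π ^ j := pow_pos (by simpa [pos_iff_ne_zero] using hπ0) j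
  obtain ⟨y, hy, hxy⟩ := hd x _ hπj
  have h1 : w ((x - y) / π ^ j) ≤ 1 := by
    rw [map_div₀, map_pow]
    exact (div_lt_one hπj).mpr hxy |>.le
  have h2 := valuation_le_one_of_preserves_center w h0 σ τ hτ hc h1
  rw [map_div₀, map_sub, map_pow, hσπ, hy, map_div₀, map_pow, div_le_one hπj] at h2
  refine hj.not_ge ?_
  rw [show σ x - x = (σ x - y) - (x - y) by ring]
  exact (w.map_sub _ _).trans (max_le h2 hxy.le)

end Splitting

section Splitting

open NNReal Pointwise

/-- If a Galois subfield `M` is dense in `L` for a valuation above every finite place of the base,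
then `M = L`. -/
theorem finrank_eq_one_of_dense (F M L : Type*) [Field F] [NumberField F] [Field M]
    [NumberField M] [Field L] [NumberField L] [Algebra F M] [Algebra M L] [Algebra F L]
    [IsScalarTower F M L] [IsGalois F M] [IsGalois F L]
    (h : ∀ v : HeightOneSpectrum (𝓞 F), ∃ w : Valuation L ℝ≥0,
      (∀ x ∈ v.asIdeal, w (algebraMap F L x) < 1) ∧
      ∀ (x : L) (ε : ℝ≥0), 0 < ε → ∃ y : M, w (x - algebraMap M L y) < ε) :
    Module.finrank M L = 1 := by
  have : IsGalois M L := IsGalois.tower_top_of_isGalois F M L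
  rw [← IsGalois.card_aut_eq_finrank]
  by_contra hcard
  have hcard : 1 < Nat.card Gal(L/M) := by
    have : 0 < Nat.card Gal(L/M) := Nat.card_pos
    lia
  refine not_two_norm_preserving_lifts M L fun p hp ↦ ?_
  have hpp : p.IsPrime := Ideal.isPrime_of_prime hp
  have hp0 : p ≠ ⊥ := hp.ne_zero
  let v : HeightOneSpectrum (𝓞 F) := ⟨p.under (𝓞 F), inferInstance,
    Ideal.IsIntegral.comap_ne_bot (𝓞 F) hp0⟩
  obtain ⟨w, hw, hd⟩ := h v
  set Q := valuationCenter w with hQ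
  have hQv : Q.LiesOver v.asIdeal := by
    refine ⟨(v.isMaximal.eq_of_le (Ideal.IsPrime.under (𝓞 F) Q).ne_top fun x hx ↦ ?_)⟩
    exact hw _ hx
  obtain ⟨π, hπv, hπ0⟩ := Submodule.exists_mem_ne_zero_of_ne_bot v.ne_bot
  have hQ0 : Q ≠ ⊥ := by
    rintro h0
    refine v.ne_bot ?_
    rw [hQv.over, h0, Ideal.under_bot]
  have hπL : algebraMap F L π ≠ 0 := by simpa using hπ0
  have hstab : MulAction.stabilizer Gal(L/M) Q = ⊥ := by
    rw [eq_bot_iff]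
    intro σ hσ
    rw [MulAction.mem_stabilizer_iff] at hσ
    rw [Subgroup.mem_bot]
    ext x
    refine eq_self_of_dense_fixed w hQ0 (σ : L →+* L) (fun x ↦ σ • x) (fun x ↦ rfl)
      (fun x hx hx' ↦ hx ?_) hπL (hw π hπv) ?_ (fun x ε hε ↦ ?_) x
    · rw [← hQ, ← hσ] at hx'
      exact Ideal.smul_mem_pointwise_smul_iff.mp hx'
    · rw [IsScalarTower.algebraMap_apply F M L]
      exact σ.commutes _
    · obtain ⟨y, hy⟩ := hd x ε hε
      exact ⟨algebraMap M L y, σ.commutes y, hy⟩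
  let q := Q.under (𝓞 M)
  have hqv : q.LiesOver v.asIdeal := ⟨by rw [Ideal.under_under]; exact hQv.over⟩
  have hpv : p.LiesOver v.asIdeal := ⟨rfl⟩
  have hcq : (q.primesOver (𝓞 L)).ncard = Nat.card Gal(L/M) := by
    rw [← Algebra.IsInvariant.orbit_eq_primesOver (𝓞 M) (𝓞 L) Gal(L/M) q Q,
      ← MulAction.index_stabilizer, hstab, Subgroup.index_bot]
  have hq := Ideal.ncard_primesOver_mul_ramificationIdxIn_mul_inertiaDegIn q (𝓞 L) Gal(L/M)
  rw [hcq, mul_eq_left₀ (by lia)] at hq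
  have hpI := Ideal.inertiaDegIn_mul_inertiaDegIn v.asIdeal p Gal(M/F) (𝓞 L) Gal(L/F) Gal(L/M)
  have hqI := Ideal.inertiaDegIn_mul_inertiaDegIn v.asIdeal q Gal(M/F) (𝓞 L) Gal(L/F) Gal(L/M)
  have hpR := Ideal.ramificationIdxIn_mul_ramificationIdxIn (p := v.asIdeal) p Gal(M/F) (𝓞 L)
    Gal(L/F) Gal(L/M)
  have hqR := Ideal.ramificationIdxIn_mul_ramificationIdxIn (p := v.asIdeal) q Gal(M/F) (𝓞 L)
    Gal(L/F) Gal(L/M)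
  obtain ⟨hqR1, hqI1⟩ := mul_eq_one.mp hq
  have hI1 : p.inertiaDegIn (𝓞 L) = 1 := by
    rw [← hpI, hqI1] at hqI
    exact (mul_left_cancel₀ (Ideal.inertiaDegIn_ne_zero Gal(M/F)) hqI).symm
  have hR1 : p.ramificationIdxIn (𝓞 L) = 1 := by
    rw [← hpR, hqR1] at hqR
    exact (mul_left_cancel₀ (Ideal.ramificationIdxIn_ne_zero Gal(M/F)) hqR).symm
  have hcp := Ideal.ncard_primesOver_mul_ramificationIdxIn_mul_inertiaDegIn p (𝓞 L) Gal(L/M)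
  rw [hI1, hR1, mul_one, mul_one] at hcp
  rw [← hcp, Set.one_lt_ncard_iff (Set.finite_of_ncard_pos (by lia))] at hcard
  obtain ⟨P₁, P₂, hP₁, hP₂, hne⟩ := hcard
  have key : ∀ P ∈ p.primesOver (𝓞 L), Prime P ∧ P.under (𝓞 M) = p ∧ P.absNorm = p.absNorm := by
    rintro P ⟨hP, hPp⟩
    have hpm : p.IsMaximal := hpp.isMaximal hp0
    have hP0 : P ≠ ⊥ := Ideal.ne_bot_of_liesOver_of_ne_bot hp0 P
    have hPm : P.IsMaximal := hP.isMaximal hP0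
    refine ⟨Ideal.prime_of_isPrime hP0 hP, hPp.over.symm, ?_⟩
    rw [Ideal.absNorm_eq_pow_inertiaDeg'_of_liesOver P p hpp hp0, Ideal.inertiaDeg'_eq_inertiaDeg,
      ← Ideal.inertiaDegIn_eq_inertiaDeg p P Gal(L/M), hI1, pow_one]
  obtain ⟨h1, h2, h3⟩ := key P₁ hP₁
  obtain ⟨h4, h5, h6⟩ := key P₂ hP₂
  exact ⟨P₁, P₂, h1, h4, h2, h5, hne, h3, h6⟩

end Splitting

section Local

open NNReal

/-- A dense subfield of a complete nonarchimedean field: if the decomposition group fixes `L`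
whenever it fixes `M`, then `M` is dense in `L`. -/
theorem exists_valuation_dense {F K Kv : Type*} [Field F] [Field K] [Algebra F K]
    [NontriviallyNormedField Kv] [IsUltrametricDist Kv] [CompleteSpace Kv] [PerfectField Kv]
    (i : F →+* Kv) (hi : DenseRange i)
    (ι : K →+* AlgebraicClosure Kv)
    (hι : ∀ x : F, ι (algebraMap F K x) = algebraMap Kv (AlgebraicClosure Kv) (i x))
    (M L : IntermediateField F K)
    (hML : ∀ γ : AlgebraicClosure Kv ≃ₐ[Kv] AlgebraicClosure Kv, (∀ x ∈ M, γ (ι x) = ι x) →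
      ∀ x ∈ L, γ (ι x) = ι x) :
    ∃ w : Valuation K ℝ≥0, (∀ x : F, w (algebraMap F K x) = ‖i x‖₊) ∧
      ∀ x ∈ L, ∀ ε : ℝ≥0, 0 < ε → ∃ y ∈ M, w (x - y) < ε := by
  let : NormedField (AlgebraicClosure Kv) := spectralNorm.normedField Kv (AlgebraicClosure Kv)
  have : IsUltrametricDist (AlgebraicClosure Kv) :=
    IsUltrametricDist.isUltrametricDist_of_isNonarchimedean_norm isNonarchimedean_spectralNorm
  have hnorm : ∀ x : Kv, ‖algebraMap Kv (AlgebraicClosure Kv) x‖ = ‖x‖ := spectralNorm_extends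
  have hcont : Continuous (algebraMap Kv (AlgebraicClosure Kv)) :=
    (AddMonoidHomClass.isometry_of_norm (algebraMap Kv (AlgebraicClosure Kv)) hnorm).continuous
  let T : Subfield (AlgebraicClosure Kv) := (M.toSubfield.map ι).topologicalClosure
  have hT : ∀ x : Kv, algebraMap Kv (AlgebraicClosure Kv) x ∈ T := by
    intro x
    refine map_mem_closure hcont (hi x) ?_
    rintro _ ⟨y, rfl⟩
    exact ⟨algebraMap F K y, M.algebraMap_mem y, hι y⟩
  let T' : IntermediateField Kv (AlgebraicClosure Kv) := T.toIntermediateField hT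
  have hLT : ∀ x ∈ L, ι x ∈ T' := by
    intro x hx
    rw [← InfiniteGalois.fixedField_fixingSubgroup T', IntermediateField.mem_fixedField_iff]
    intro γ hγ
    refine hML γ (fun y hy ↦ ?_) x hx
    exact (IntermediateField.mem_fixingSubgroup_iff _ _).mp hγ _
      (subset_closure ⟨y, hy, rfl⟩)
  refine ⟨NormedField.valuation.comap ι, fun x ↦ ?_, fun x hx ε hε ↦ ?_⟩
  · rw [Valuation.comap_apply, hι, NormedField.valuation_apply]
    exact NNReal.eq (hnorm _)
  · obtain ⟨_, ⟨y, hy, rfl⟩, hxy⟩ := Metric.mem_closure_iff.mp (hLT x hx) ε hε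
    refine ⟨y, hy, ?_⟩
    rw [Valuation.comap_apply, map_sub, NormedField.valuation_apply]
    rwa [dist_eq_norm] at hxy

theorem exists_valuation_dense_of_heightOneSpectrum {F K : Type*} [Field F] [NumberField F]
    [Field K] [Algebra F K] (v : HeightOneSpectrum (𝓞 F))
    (ι : K →+* AlgebraicClosure (v.adicCompletion F))
    (hι : ∀ x : F, ι (algebraMap F K x) =
      algebraMap (v.adicCompletion F) (AlgebraicClosure (v.adicCompletion F))
        (algebraMap F (v.adicCompletion F) x))
    (M L : IntermediateField F K)
    (hML : ∀ γ : AlgebraicClosure (v.adicCompletion F) ≃ₐ[v.adicCompletion F]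
      AlgebraicClosure (v.adicCompletion F),
      (∀ x ∈ M, γ (ι x) = ι x) → ∀ x ∈ L, γ (ι x) = ι x) :
    ∃ w : Valuation K ℝ≥0, (∀ x ∈ v.asIdeal, w (algebraMap F K x) < 1) ∧
      ∀ x ∈ L, ∀ ε : ℝ≥0, 0 < ε → ∃ y ∈ M, w (x - y) < ε := by
  obtain ⟨π, hπv, hπ0⟩ := Submodule.exists_mem_ne_zero_of_ne_bot v.ne_bot
  let : NontriviallyNormedField (v.adicCompletion F) :=
    .ofNormNeOne ⟨algebraMap F (v.adicCompletion F) π, by simpa using hπ0,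
      ((FinitePlace.norm_lt_one_iff_mem F v π).mpr hπv).ne⟩
  have : CharZero (v.adicCompletion F) :=
    charZero_of_injective_algebraMap (algebraMap F (v.adicCompletion F)).injective
  obtain ⟨w, hw, hd⟩ := exists_valuation_dense (algebraMap F (v.adicCompletion F))
    (HeightOneSpectrum.denseRange_algebraMap F v) ι hι M L hML
  refine ⟨w, fun x hx ↦ ?_, hd⟩
  rw [hw]
  exact (FinitePlace.norm_lt_one_iff_mem F v x).mpr hx

end Local

section LocalGlobal

open NNReal

/-- A finite Galois extension `L` of `M` is trivial if every local Galois group fixing `M` fixes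
`L`. -/
theorem le_of_locally_fixed {F K : Type*} [Field F] [NumberField F] [Field K] [Algebra F K]
    [IsAlgClosure F K] (M L : IntermediateField F K) [FiniteDimensional F M] [IsGalois F M]
    [FiniteDimensional F L] [IsGalois F L] (hle : M ≤ L)
    (h : ∀ (v : HeightOneSpectrum (𝓞 F))
      (ι : K →+* AlgebraicClosure (v.adicCompletion F)),
      (∀ x : F, ι (algebraMap F K x) =
        algebraMap (v.adicCompletion F) (AlgebraicClosure (v.adicCompletion F))
          (algebraMap F (v.adicCompletion F) x)) →
      ∀ ρ : (AlgebraicClosure (v.adicCompletion F) ≃ₐ[v.adicCompletion F]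
        AlgebraicClosure (v.adicCompletion F)) →* (K ≃ₐ[F] K),
      (∀ γ (x : K), ι (ρ γ x) = γ (ι x)) →
      ∀ γ, (∀ x ∈ M, ρ γ x = x) → ∀ x ∈ L, ρ γ x = x) :
    L ≤ M := by
  let : Algebra M L := (IntermediateField.inclusion hle).toAlgebra
  have : IsScalarTower F M L := .of_algebraMap_eq fun x ↦ rfl
  have : IsScalarTower M L K := .of_algebraMap_eq fun x ↦ rfl
  have : NumberField M := .of_module_finite F M
  have : NumberField L := .of_module_finite F L
  have hfin : Module.finrank M L = 1 := by
    refine finrank_eq_one_of_dense F M L fun v ↦ ?_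
    let ι : K →ₐ[F] AlgebraicClosure (v.adicCompletion F) := IsAlgClosed.lift
    have hι : ∀ x : F, ι (algebraMap F K x) =
        algebraMap (v.adicCompletion F) (AlgebraicClosure (v.adicCompletion F))
          (algebraMap F (v.adicCompletion F) x) := fun x ↦ by
      rw [ι.commutes, ← IsScalarTower.algebraMap_apply]
    let : Algebra K (AlgebraicClosure (v.adicCompletion F)) := ι.toRingHom.toAlgebra
    have : IsScalarTower F K (AlgebraicClosure (v.adicCompletion F)) :=
      .of_algebraMap_eq fun x ↦ (ι.commutes x).symm
    let ρ := (AlgEquiv.restrictNormalHom (F := F)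
      (K₁ := AlgebraicClosure (v.adicCompletion F)) K).comp
      (AlgEquiv.restrictScalarsHom F (S := v.adicCompletion F))
    have hρ : ∀ γ (x : K), ι (ρ γ x) = γ (ι x) := fun γ x ↦
      AlgEquiv.restrictNormal_commutes (γ.restrictScalars F) K x
    obtain ⟨w, hw, hd⟩ := exists_valuation_dense_of_heightOneSpectrum v ι.toRingHom hι M L
      fun γ hγ x hx ↦ by
        have := h v ι.toRingHom hι ρ hρ γ (fun y hy ↦ ι.injective ((hρ γ y).trans (hγ y hy))) x hx
        exact (hρ γ x).symm.trans (congrArg ι this)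
    refine ⟨w.comap (algebraMap L K), fun x hx ↦ hw x hx, fun x ε hε ↦ ?_⟩
    obtain ⟨y, hy, hxy⟩ := hd x x.2 ε hε
    exact ⟨⟨y, hy⟩, hxy⟩
  have := Module.finrank_mul_finrank F M L
  rw [hfin, mul_one] at this
  exact (IntermediateField.eq_of_le_of_finrank_eq hle this).ge

end LocalGlobal

section Cocycle

/-- A locally trivial cocycle vanishes on a subgroup of finite index acting trivially. -/
theorem cocycle_eq_zero_of_locally_trivial {F K : Type*} [Field F] [NumberField F] [Field K]
    [Algebra F K] [IsAlgClosure F K] (M : IntermediateField F K) [FiniteDimensional F M] [IsGalois F M]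
    {A : Type*} [AddCommGroup A] [DistribMulAction (K ≃ₐ[F] K) A]
    (hA : ∀ γ ∈ M.fixingSubgroup, ∀ a : A, γ • a = a)
    (f : (K ≃ₐ[F] K) → A) (hf : ∀ γ δ : K ≃ₐ[F] K, f (γ * δ) = f γ + γ • f δ)
    (hfc : IsOpen (f ⁻¹' {0}))
    (hloc : ∀ (v : HeightOneSpectrum (𝓞 F))
        (ι : K →+* AlgebraicClosure (v.adicCompletion F)),
        (∀ x : F, ι (algebraMap F K x) =
          algebraMap (v.adicCompletion F) (AlgebraicClosure (v.adicCompletion F))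
            (algebraMap F (v.adicCompletion F) x)) →
        ∀ ρ : (AlgebraicClosure (v.adicCompletion F) ≃ₐ[v.adicCompletion F]
            AlgebraicClosure (v.adicCompletion F)) →* (K ≃ₐ[F] K),
        (∀ γ (x : K), ι (ρ γ x) = γ (ι x)) →
        ∃ a : A, ∀ γ, f (ρ γ) = ρ γ • a - a)
    (γ : K ≃ₐ[F] K) (hγ : γ ∈ M.fixingSubgroup) : f γ = 0 := by
  have hf1 : f 1 = 0 := by simpa using hf 1 1
  have hfi : ∀ γ, f γ⁻¹ = - (γ⁻¹ • f γ) := fun γ ↦ by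
    have := hf γ⁻¹ γ
    rw [inv_mul_cancel, hf1] at this
    exact eq_neg_of_add_eq_zero_left this.symm
  have : IsGalois F K := IsAlgClosure.isGalois F K
  have hN : M.fixingSubgroup.Normal := inferInstance
  let H : Subgroup (K ≃ₐ[F] K) :=
    { carrier := {γ | γ ∈ M.fixingSubgroup ∧ f γ = 0}
      mul_mem' := fun {a b} ha hb ↦ ⟨mul_mem ha.1 hb.1, by rw [hf, ha.2, hb.2, smul_zero, add_zero]⟩
      one_mem' := ⟨one_mem _, hf1⟩
      inv_mem' := fun {a} ha ↦ ⟨inv_mem ha.1, by rw [hfi, ha.2, smul_zero, neg_zero]⟩ }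
  have hHo : IsOpen (H : Set (K ≃ₐ[F] K)) :=
    (IntermediateField.fixingSubgroup_isOpen M).inter hfc
  have hHn : H.Normal := ⟨fun n hn g ↦ by
    have h1 := hN.conj_mem n hn.1 g
    refine ⟨h1, ?_⟩
    rw [hf, hf, hfi, hn.2, smul_zero, add_zero, smul_neg, smul_smul, hA _ h1, add_neg_cancel]⟩
  let Hc : ClosedSubgroup (K ≃ₐ[F] K) := ⟨H, H.isClosed_of_isOpen hHo⟩
  let L : IntermediateField F K := IntermediateField.fixedField H
  have hL : L.fixingSubgroup = H := InfiniteGalois.fixingSubgroup_fixedField Hc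
  have : FiniteDimensional F L := (InfiniteGalois.isOpen_iff_finite L).mp (hL ▸ hHo)
  have : IsGalois F L := (InfiniteGalois.normal_iff_isGalois L).mp (hL ▸ hHn)
  have hle : M ≤ L := (IntermediateField.le_iff_le _ _).mpr fun γ hγ ↦ hγ.1
  have hLM : L ≤ M := by
    refine le_of_locally_fixed M L hle fun v ι hι ρ hρ δ hδ ↦ ?_
    obtain ⟨a, ha⟩ := hloc v ι hι ρ hρ
    have h1 : ρ δ ∈ M.fixingSubgroup := (IntermediateField.mem_fixingSubgroup_iff _ _).mpr hδ
    have h2 : ρ δ ∈ L.fixingSubgroup := by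
      rw [hL]
      exact ⟨h1, by rw [ha, hA _ h1, sub_self]⟩
    exact (IntermediateField.mem_fixingSubgroup_iff _ _).mp h2
  have := IntermediateField.fixingSubgroup_le hLM hγ
  rw [hL] at this
  exact this.2

end Cocycle

section Arithmetic

lemma exists_coprime_pow_sub_one_dvd (D k : ℕ) (hk : 0 < k) :
    ∃ u t : ℕ, u.Coprime k ∧
      (((2 ^ D - 1) * (3 ^ D - 1) : ℕ) : ℤ) ≡ t * ((u : ℤ) ^ D - 1) [ZMOD k] := by
  obtain ⟨m, r, hr, rfl⟩ := Nat.exists_eq_two_pow_mul_odd hk.ne'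
  have hco : (2 ^ m).Coprime r := (Nat.coprime_two_left.mpr hr).pow_left m
  obtain ⟨u, hu2, hur⟩ := Nat.chineseRemainder hco 3 2
  obtain ⟨t, ht2, htr⟩ := Nat.chineseRemainder hco (2 ^ D - 1) (3 ^ D - 1)
  refine ⟨u, t, ?_, ?_⟩
  · refine Nat.Coprime.mul_right ?_ ?_
    · rw [Nat.Coprime, hu2.gcd_eq]
      exact Nat.Coprime.pow_right m (by norm_num)
    · rw [Nat.Coprime, hur.gcd_eq]
      exact Nat.coprime_two_left.mpr hr
  · have h2 : ((2 ^ D - 1 : ℕ) : ℤ) = 2 ^ D - 1 := by simp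
    have h3 : ((3 ^ D - 1 : ℕ) : ℤ) = 3 ^ D - 1 := by
      simp [Nat.cast_sub (Nat.one_le_pow D 3 (by norm_num))]
    rw [Nat.cast_mul (2 ^ m), ← Int.modEq_and_modEq_iff_modEq_mul (by simpa using hco)]
    have hu2 := Int.natCast_modEq_iff.mpr hu2
    have hur := Int.natCast_modEq_iff.mpr hur
    have ht2 := Int.natCast_modEq_iff.mpr ht2
    have htr := Int.natCast_modEq_iff.mpr htr
    rw [h2] at ht2
    rw [h3] at htr
    rw [Nat.cast_mul, h2, h3]
    constructor
    · exact (ht2.mul ((hu2.pow D).sub_right 1)).symm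
    · rw [mul_comm]
      exact (htr.mul ((hur.pow D).sub_right 1)).symm

end Arithmetic

section GroupCohomology

variable {G A : Type*} [Group G] [AddCommGroup A] [DistribMulAction G A]

/-- A cocycle vanishing on a subgroup of finite index is killed by the index. -/
lemma exists_index_smul_eq_of_cocycle (H : Subgroup G) [H.FiniteIndex] (g : G → A)
    (hg : ∀ γ δ, g (γ * δ) = g γ + γ • g δ) (hgH : ∀ γ ∈ H, g γ = 0) :
    ∃ s : A, ∀ γ, H.index • g γ = γ • s - s := by
  have : Fintype (G ⧸ H) := H.fintypeQuotientOfFiniteIndex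
  let g' : G ⧸ H → A := Quotient.lift g fun x y hxy ↦ by
    have := hg x (x⁻¹ * y)
    rwa [mul_inv_cancel_left, hgH _ (QuotientGroup.leftRel_apply.mp hxy), smul_zero, add_zero,
      eq_comm] at this
  have hg' : ∀ γ q, g' (γ • q) = g γ + γ • g' q := fun γ q ↦ by
    induction q using QuotientGroup.induction_on with
    | H x => exact hg γ x
  refine ⟨-∑ q, g' q, fun γ ↦ ?_⟩
  have h := Equiv.sum_comp (MulAction.toPerm γ) g'
  simp only [MulAction.toPerm_apply, hg', Finset.sum_add_distrib, Finset.sum_const,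
    Finset.card_univ, ← Finset.smul_sum] at h
  rw [Subgroup.index, Nat.card_eq_fintype_card, smul_neg, neg_sub_neg]
  exact eq_sub_of_add_eq h

/-- **Sah's lemma** for an element `τ` that acts by a scalar and is central modulo a subgroup on
which the cocycle vanishes. -/
lemma sub_one_zsmul_cocycle_eq (N : Subgroup G) (f : G → A)
    (hf : ∀ γ δ, f (γ * δ) = f γ + γ • f δ) (hfN : ∀ γ ∈ N, f γ = 0)
    {τ : G} {a : ℤ} (hτ : ∀ x : A, τ • x = a • x) {γ : G} (hγ : (τ * γ)⁻¹ * (γ * τ) ∈ N) :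
    (a - 1) • f γ = γ • f τ - f τ := by
  have h := hf (τ * γ) ((τ * γ)⁻¹ * (γ * τ))
  rw [mul_inv_cancel_left, hfN _ hγ, smul_zero, add_zero, hf, hf, hτ] at h
  rw [sub_smul, one_smul, sub_eq_sub_iff_add_eq_add, add_comm, ← h, add_comm]

end GroupCohomology

section Automorphism

/-- In the algebraic closure of a number field, some automorphism fixing `E` raises `ζ` to the power
`u ^ D`, with an exponent `D` depending only on `E`. -/
lemma exists_fixing_apply_eq_pow {F K : Type*} [Field F] [NumberField F] [Field K] [Algebra F K]
    [IsAlgClosure F K] (E : IntermediateField F K) [FiniteDimensional F E] {k u : ℕ}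
    (hk : 0 < k) (hu : u.Coprime k) {ζ : K} (hζ : IsPrimitiveRoot ζ k) :
    ∃ τ ∈ E.fixingSubgroup, τ ζ = ζ ^ u ^ Nat.card (Equiv.Perm (E →+* K)) := by
  have : NumberField E := .of_module_finite F E
  have : CharZero K := charZero_of_injective_algebraMap (algebraMap F K).injective
  have : IsAlgClosed K := IsAlgClosure.isAlgClosed F
  have : Algebra.IsAlgebraic F K := IsAlgClosure.isAlgebraic
  have : Algebra.IsAlgebraic ℚ K := .trans ℚ F K
  have : IsAlgClosure ℚ K := ⟨inferInstance, inferInstance⟩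
  set D := Nat.card (Equiv.Perm (E →+* K))
  obtain ⟨σ, hσ⟩ : ∃ σ : K ≃ₐ[ℚ] K, σ ζ = ζ ^ u := by
    have : IsConjRoot ℚ (ζ ^ u) ζ := by
      rw [IsConjRoot, ← Polynomial.cyclotomic_eq_minpoly_rat hζ hk,
        ← Polynomial.cyclotomic_eq_minpoly_rat (hζ.pow_of_coprime u hu) hk]
    exact isConjRoot_iff_exists_algEquiv.mp this
  have hpow : ∀ j : ℕ, (σ ^ j) ζ = ζ ^ u ^ j := fun j ↦ by
    induction j with
    | zero => simp
    | succ j ih => rw [pow_succ, AlgEquiv.mul_apply, hσ, map_pow, ih, ← pow_mul, pow_succ]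
  let P : (K ≃ₐ[ℚ] K) →* Equiv.Perm (E →+* K) :=
    { toFun := fun s ↦
        ⟨fun e ↦ (s : K →+* K).comp e, fun e ↦ (s⁻¹ : K ≃ₐ[ℚ] K).toRingEquiv.toRingHom.comp e,
          fun e ↦ RingHom.ext fun x ↦ s.symm_apply_apply _,
          fun e ↦ RingHom.ext fun x ↦ s.apply_symm_apply _⟩
      map_one' := rfl
      map_mul' := fun s t ↦ rfl }
  have hP : P (σ ^ D) = 1 := by rw [map_pow, pow_card_eq_one']
  have hE : ∀ x : E, (σ ^ D) (x : K) = x := fun x ↦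
    RingHom.congr_fun (Equiv.congr_fun hP (algebraMap E K)) x
  refine ⟨AlgEquiv.ofRingEquiv (f := (σ ^ D).toRingEquiv) fun x ↦ hE (algebraMap F E x),
    (IntermediateField.mem_fixingSubgroup_iff _ _).mpr fun x hx ↦ hE ⟨x, hx⟩, hpow D⟩

lemma isGalois_adjoin_isPrimitiveRoot {F K : Type*} [Field F] [Field K] [Algebra F K]
    [IsGalois F K] {k : ℕ} (hk : 0 < k) {ζ : K} (hζ : IsPrimitiveRoot ζ k) :
    IsGalois F (IntermediateField.adjoin F {ζ}) := by
  have : NeZero k := ⟨hk.ne'⟩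
  have : Normal F (IntermediateField.adjoin F {ζ}) := by
    rw [IntermediateField.normal_iff_forall_map_le']
    intro σ
    rw [IntermediateField.adjoin_map, Set.image_singleton, IntermediateField.adjoin_simple_le_iff]
    obtain ⟨i, -, hi⟩ := hζ.eq_pow_of_pow_eq_one (ξ := σ ζ)
      (by rw [← map_pow, hζ.pow_eq_one, map_one])
    exact hi ▸ pow_mem (IntermediateField.mem_adjoin_simple_self F ζ) i
  exact ⟨⟩

end Automorphism

section Main

lemma apply_eq_zpow {F K : Type*} [Field F] [Field K] [Algebra F K] {k : ℕ} [NeZero k] {ζ : K}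
    (hζ : IsPrimitiveRoot ζ k) {γ : K ≃ₐ[F] K} {a : ℕ} (hγ : γ ζ = ζ ^ a) {x : Kˣ}
    (hx : x ∈ rootsOfUnity k K) : γ (x : K) = (x : K) ^ a := by
  obtain ⟨i, -, hi⟩ := hζ.eq_pow_of_pow_eq_one (show (x : K) ^ k = 1 from
    congrArg Units.val hx)
  rw [← hi, map_pow, hγ, ← pow_mul, ← pow_mul, mul_comm]

end Main

open IsDedekindDomain NumberField

/-- Let `F` be a number field and `T` a torus over `F` split by a finite
Galois extension `E/F`, say of dimension `n`, inside a fixed algebraic closure `K` of `F`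
with absolute Galois group `Γ = Gal(K/F)` (with the Krull topology).  For a positive
integer `k`, the Galois module `A = T[k](K)` is a finite continuous `Γ`-module which,
as a module over `Gal(K/E)`, is isomorphic to `μ_k^n`.  Then there is a positive integer
`c = c(F, T)`, independent of `k`, killing the Tate–Shafarevich group
`Ш¹_F(T[k]) = ker(H¹(F, T[k]) → ∏_{𝔭 < ∞} H¹(F_𝔭, T[k]))`: every continuous 1-cocycle
`f : Γ → A` whose restriction along every embedding of local absolute Galois groups
`Gal(F̄_𝔭/F_𝔭) → Γ` (for every finite place `𝔭`) is a coboundary becomes a coboundary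
after multiplication by `c`. -/
theorem tate_shafarevich_of_torus_torsion_killed_uniformly
    (F : Type*) [Field F] [NumberField F]
    (K : Type*) [Field K] [Algebra F K] [IsAlgClosure F K]
    (E : IntermediateField F K) [FiniteDimensional F E] [IsGalois F E]
    (n : ℕ) :
    ∃ c : ℕ, 0 < c ∧
      ∀ (k : ℕ), 0 < k →
      ∀ (A : Type) [AddCommGroup A] [DistribMulAction (K ≃ₐ[F] K) A],
      -- the action of `Γ` on `A` is continuous (`A` discrete)
      (∀ a : A, IsOpen {γ : K ≃ₐ[F] K | γ • a = a}) →
      -- over `E`, `A` is isomorphic to `μ_k^n = T_E[k]` compatibly with the action of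
      -- `Gal(K/E)`
      (∃ e : A ≃+ (Fin n → Additive ↥(rootsOfUnity k K)),
        ∀ γ : K ≃ₐ[F] K, (∀ x : E, γ (x : K) = (x : K)) →
          ∀ (a : A) (ι : Fin n),
            (((Additive.toMul (e (γ • a) ι) : ↥(rootsOfUnity k K)) : Kˣ) : K) =
              γ (((Additive.toMul (e a ι) : ↥(rootsOfUnity k K)) : Kˣ) : K)) →
      ∀ f : (K ≃ₐ[F] K) → A,
      -- `f` is a continuous 1-cocycle
      (∀ γ δ : K ≃ₐ[F] K, f (γ * δ) = f γ + γ • f δ) →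
      (∀ a : A, IsOpen (f ⁻¹' {a})) →
      -- the class of `f` is locally trivial: for every finite place `𝔭` of `F` and every
      -- embedding `ι : K → F̄_𝔭` over `F`, the restriction of `f` along the induced map
      -- `ρ : Gal(F̄_𝔭/F_𝔭) → Γ` is a coboundary
      (∀ (v : HeightOneSpectrum (𝓞 F))
        (ι : K →+* AlgebraicClosure (v.adicCompletion F)),
        (∀ x : F, ι (algebraMap F K x) =
          algebraMap (v.adicCompletion F) (AlgebraicClosure (v.adicCompletion F))
            (algebraMap F (v.adicCompletion F) x)) →
        ∀ ρ : (AlgebraicClosure (v.adicCompletion F) ≃ₐ[v.adicCompletion F]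
            AlgebraicClosure (v.adicCompletion F)) →* (K ≃ₐ[F] K),
        (∀ γ (x : K), ι (ρ γ x) = γ (ι x)) →
        ∃ a : A, ∀ γ, f (ρ γ) = ρ γ • a - a) →
      -- then `c` kills the class of `f`
      ∃ a : A, ∀ γ : K ≃ₐ[F] K, c • f γ = γ • a - a := by
  have : IsAlgClosed K := IsAlgClosure.isAlgClosed F
  have : IsGalois F K := IsAlgClosure.isGalois F K
  have : NumberField E := .of_module_finite F E
  have : CharZero K := charZero_of_injective_algebraMap (algebraMap F K).injective
  set D := Nat.card (Equiv.Perm (E →+* K))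
  have hD : D ≠ 0 := Nat.card_pos.ne'
  have hd : 0 < E.fixingSubgroup.index :=
    E.finrank_eq_fixingSubgroup_index (F := F) ▸ Module.finrank_pos
  have : E.fixingSubgroup.FiniteIndex := ⟨hd.ne'⟩
  refine ⟨E.fixingSubgroup.index * ((2 ^ D - 1) * (3 ^ D - 1)), ?_, ?_⟩
  · have h2 := Nat.one_lt_two_pow hD
    have h3 := Nat.one_lt_pow hD (show 1 < 3 by norm_num)
    have : 0 < 2 ^ D - 1 := by lia
    have : 0 < 3 ^ D - 1 := by lia
    positivity
  intro k hk A _ _ _ ⟨e, he⟩ f hf hfc hloc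
  have : NeZero k := ⟨hk.ne'⟩
  have : NeZero (k : K) := ⟨by exact_mod_cast hk.ne'⟩
  obtain ⟨ζ, hζ⟩ := HasEnoughRootsOfUnity.exists_primitiveRoot K k
  obtain ⟨u, t, hu, hut⟩ := exists_coprime_pow_sub_one_dvd D k hk
  obtain ⟨τ, hτE, hτ⟩ := exists_fixing_apply_eq_pow E hk hu hζ
  have hpow : ∀ {γ : K ≃ₐ[F] K} {a : ℕ}, γ ∈ E.fixingSubgroup → γ ζ = ζ ^ a →
      ∀ x : A, γ • x = a • x := fun {γ a} hγE hγ x ↦ e.injective <| funext fun i ↦ by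
    refine Additive.toMul.injective (Subtype.ext (Units.ext ?_))
    rw [he γ (fun y ↦ (IntermediateField.mem_fixingSubgroup_iff _ _).mp hγE y y.2),
      apply_eq_zpow hζ hγ (Subtype.prop _)]
    simp
  have hkA : ∀ x : A, k • x = 0 := fun x ↦ e.injective <| funext fun i ↦ by
    refine Additive.toMul.injective (Subtype.ext ?_)
    rw [map_nsmul, map_zero]
    exact (Additive.toMul (e x i)).2
  let M := E ⊔ IntermediateField.adjoin F {ζ}
  have hζi : IsIntegral F ζ := Algebra.IsIntegral.isIntegral ζ
  have := IntermediateField.adjoin.finiteDimensional hζi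
  have := isGalois_adjoin_isPrimitiveRoot (F := F) hk hζ
  have : IsGalois F M := ⟨⟩
  have hM : ∀ γ, γ ∈ M.fixingSubgroup ↔ γ ∈ E.fixingSubgroup ∧ γ ζ = ζ := fun γ ↦ by
    rw [IntermediateField.fixingSubgroup_sup, Subgroup.mem_inf, and_congr_right_iff]
    refine fun _ ↦ ⟨fun h ↦ (IntermediateField.mem_fixingSubgroup_iff _ _).mp h _
      (IntermediateField.mem_adjoin_simple_self F ζ), fun h ↦ ?_⟩
    have : IntermediateField.adjoin F {ζ} ≤ IntermediateField.fixedField (Subgroup.zpowers γ) := by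
      rw [IntermediateField.adjoin_simple_le_iff, IntermediateField.mem_fixedField_iff]
      exact fun g hg ↦ Subgroup.zpowers_le.mpr
        (MulAction.mem_stabilizer_iff.mpr h : γ ∈ MulAction.stabilizer (K ≃ₐ[F] K) ζ) hg
    exact (IntermediateField.le_iff_le _ _).mp this (Subgroup.mem_zpowers γ)
  have hfM : ∀ γ ∈ M.fixingSubgroup, f γ = 0 := by
    refine cocycle_eq_zero_of_locally_trivial M (fun γ hγ x ↦ ?_) f hf (hfc 0) hloc
    obtain ⟨hγE, hγζ⟩ := (hM γ).mp hγ
    rw [hpow hγE (hγζ.trans (pow_one ζ).symm), one_smul]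
  have hfE : ∀ γ ∈ E.fixingSubgroup,
      ((2 ^ D - 1) * (3 ^ D - 1)) • f γ = γ • (t • f τ) - t • f τ := fun γ hγ ↦ by
    have hcomm : (τ * γ)⁻¹ * (γ * τ) ∈ M.fixingSubgroup := by
      refine (hM _).mpr ⟨mul_mem (inv_mem (mul_mem hτE hγ)) (mul_mem hγ hτE), ?_⟩
      rw [AlgEquiv.mul_apply, AlgEquiv.aut_inv, AlgEquiv.symm_apply_eq]
      obtain ⟨i, -, hi⟩ := hζ.eq_pow_of_pow_eq_one (ξ := γ ζ)
        (by rw [← map_pow, hζ.pow_eq_one, map_one])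
      rw [AlgEquiv.mul_apply, AlgEquiv.mul_apply, hτ, ← hi, map_pow, map_pow, hτ, ← hi,
        ← pow_mul, ← pow_mul, mul_comm]
    have h1 := sub_one_zsmul_cocycle_eq M.fixingSubgroup f hf hfM
      (fun x ↦ (hpow hτE hτ x).trans (natCast_zsmul x _).symm) hcomm
    obtain ⟨z, hz⟩ := hut.dvd
    rw [smul_comm, ← smul_sub, ← h1, ← natCast_zsmul, ← natCast_zsmul, smul_smul, ← sub_eq_zero,
      ← sub_smul, Nat.cast_pow, ← neg_sub, hz, neg_smul, mul_smul, natCast_zsmul, hkA, neg_zero]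
  obtain ⟨s, hs⟩ := exists_index_smul_eq_of_cocycle E.fixingSubgroup
    (fun γ ↦ ((2 ^ D - 1) * (3 ^ D - 1)) • f γ - (γ • (t • f τ) - t • f τ))
    (fun γ δ ↦ by
      rw [hf, smul_add, mul_smul γ δ, smul_sub, smul_sub,
        smul_comm γ ((2 ^ D - 1) * (3 ^ D - 1)) (f δ)]
      abel)
    (fun γ hγ ↦ sub_eq_zero.mpr (hfE γ hγ))
  refine ⟨s + E.fixingSubgroup.index • t • f τ, fun γ ↦ ?_⟩
  have := hs γ
  rw [smul_sub, sub_eq_iff_eq_add] at this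
  rw [mul_smul, this, smul_add, smul_sub, smul_comm γ E.fixingSubgroup.index]
  abel
end

section
/- Let F be a number field and k a positive integer. If x ∈ F^× satisfies x ∈ (F_𝔭^×)^{2k} for every finite place 𝔭 of F, then x² ∈ (F^×)^{2k}; consequently there exists y ∈ F^× with x = y^k or x = −y^k. -/
open IsDedekindDomain NumberField
open Filter Topology
open scoped ENNReal

/-- The weight `N(I)^{-s}` of an ideal, which is `0` for the zero ideal when `s ≠ 0`. -/
noncomputable def idealWeight {K : Type*} [Field K] [NumberField K] (s : ℝ) (I : Ideal (𝓞 K)) :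
    ℝ≥0∞ :=
  ENNReal.ofReal ((Ideal.absNorm I : ℝ) ^ (-s))

theorem idealWeight_mul {K : Type*} [Field K] [NumberField K] (s : ℝ) (I J : Ideal (𝓞 K)) :
    idealWeight s (I * J) = idealWeight s I * idealWeight s J := by
  rw [idealWeight, idealWeight, idealWeight, ← ENNReal.ofReal_mul (by positivity), map_mul,
    Nat.cast_mul, Real.mul_rpow (by positivity) (by positivity)]

theorem idealWeight_bot {K : Type*} [Field K] [NumberField K] {s : ℝ} (hs : s ≠ 0) :
    idealWeight s (⊥ : Ideal (𝓞 K)) = 0 := by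
  simp [idealWeight, Real.zero_rpow (neg_ne_zero.mpr hs)]

theorem tsum_idealWeight_eq {K : Type*} [Field K] [NumberField K] {s : ℝ} (hs : s ≠ 0) :
    ∑' I : Ideal (𝓞 K), idealWeight s I =
      ∑' n : ℕ, ENNReal.ofReal
        ((Nat.card {I : Ideal (𝓞 K) // Ideal.absNorm I = n} : ℝ) * (n : ℝ) ^ (-s)) := by
  rw [← (Equiv.sigmaFiberEquiv (Ideal.absNorm : Ideal (𝓞 K) → ℕ)).tsum_eq, ENNReal.tsum_sigma']
  refine tsum_congr fun n => ?_
  rcases eq_or_ne n 0 with rfl | hn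
  · have h0 : ∀ b : {I : Ideal (𝓞 K) // Ideal.absNorm I = 0},
        idealWeight s (Equiv.sigmaFiberEquiv Ideal.absNorm ⟨0, b⟩) = 0 := fun b => by
      simp [Equiv.sigmaFiberEquiv, idealWeight, b.2, Real.zero_rpow (neg_ne_zero.mpr hs)]
    rw [tsum_congr h0]
    simp [Real.zero_rpow (neg_ne_zero.mpr hs)]
  · have : Finite {I : Ideal (𝓞 K) // Ideal.absNorm I = n} :=
      (Ideal.finite_setOfPred_absNorm_eq n).to_subtype
    have h0 : ∀ b : {I : Ideal (𝓞 K) // Ideal.absNorm I = n},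
        idealWeight s (Equiv.sigmaFiberEquiv Ideal.absNorm ⟨n, b⟩) =
          ENNReal.ofReal ((n : ℝ) ^ (-s)) := fun b => by
      simp [Equiv.sigmaFiberEquiv, idealWeight, b.2]
    have := Fintype.ofFinite {I : Ideal (𝓞 K) // Ideal.absNorm I = n}
    rw [tsum_congr h0, tsum_fintype, Finset.sum_const, ENNReal.ofReal_mul (by positivity)]
    simp

theorem tsum_idealWeight_of_dedekindZeta_ne_zero {K : Type*} [Field K] [NumberField K] {s : ℝ}
    (hs : s ≠ 0) (h : dedekindZeta K s ≠ 0) :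
    ∑' I : Ideal (𝓞 K), idealWeight s I ≠ ⊤ ∧
      dedekindZeta K s = ((∑' I : Ideal (𝓞 K), idealWeight s I).toReal : ℂ) := by
  set g : ℕ → ℝ := fun n =>
    (Nat.card {I : Ideal (𝓞 K) // Ideal.absNorm I = n} : ℝ) * (n : ℝ) ^ (-s) with hg
  have hg0 : ∀ n, 0 ≤ g n := fun n => by positivity
  have hterm : ∀ n, LSeries.term
      (fun n ↦ (Nat.card {I : Ideal (𝓞 K) // Ideal.absNorm I = n} : ℂ)) s n = (g n : ℂ) := by
    intro n
    rcases eq_or_ne n 0 with rfl | hn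
    · simp [hg, Real.zero_rpow (neg_ne_zero.mpr hs)]
    · rw [LSeries.term_of_ne_zero hn, hg]
      push_cast
      rw [Complex.ofReal_cpow (by positivity)]
      push_cast
      rw [Complex.cpow_neg, div_eq_mul_inv]
  have hsum : Summable g := by
    by_contra hns
    apply h
    apply LSeries.eq_zero_of_not_LSeriesSummable
    intro hls
    apply hns
    rw [LSeriesSummable, show LSeries.term _ _ = _ from funext hterm] at hls
    exact Complex.summable_ofReal.mp hls
  rw [tsum_idealWeight_eq hs, ← ENNReal.ofReal_tsum_of_nonneg hg0 hsum]
  refine ⟨ENNReal.ofReal_ne_top, ?_⟩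
  rw [ENNReal.toReal_ofReal (tsum_nonneg hg0), dedekindZeta, LSeries, tsum_congr hterm,
    Complex.ofReal_tsum]

theorem tendsto_sub_one_mul_tsum_idealWeight (K : Type*) [Field K] [NumberField K] :
    (∀ᶠ s : ℝ in 𝓝[>] 1, ∑' I : Ideal (𝓞 K), idealWeight s I ≠ ⊤) ∧
    Tendsto (fun s : ℝ => (s - 1) * (∑' I : Ideal (𝓞 K), idealWeight s I).toReal) (𝓝[>] 1)
      (𝓝 (dedekindZeta_residue K)) := by
  have ht := tendsto_sub_one_mul_dedekindZeta_nhdsGT K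
  have hev : ∀ᶠ s : ℝ in 𝓝[>] 1, ∑' I : Ideal (𝓞 K), idealWeight s I ≠ ⊤ ∧
      dedekindZeta K s = ((∑' I : Ideal (𝓞 K), idealWeight s I).toReal : ℂ) := by
    have hne := ht.eventually_ne
      (Complex.ofReal_ne_zero.mpr (dedekindZeta_residue_ne_zero K))
    filter_upwards [hne, self_mem_nhdsWithin] with s hs hs1
    exact tsum_idealWeight_of_dedekindZeta_ne_zero (zero_lt_one.trans hs1).ne'
      (right_ne_zero_of_mul hs)
  refine ⟨hev.mono fun s hs => hs.1, ?_⟩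
  have := (Complex.continuous_re.tendsto _).comp ht
  rw [Complex.ofReal_re] at this
  refine this.congr' ?_
  filter_upwards [hev] with s hs
  simp only [Function.comp_apply]
  rw [hs.2, ← Complex.ofReal_one, ← Complex.ofReal_sub, ← Complex.ofReal_mul, Complex.ofReal_re]

/-- The ideals divisible by no prime of `T`. -/
def IsPrimeTo {K : Type*} [Field K] (T : Finset (Ideal (𝓞 K))) (I : Ideal (𝓞 K)) : Prop :=
  ∀ P ∈ T, ¬ P ∣ I

theorem idealWeight_le_half {K : Type*} [Field K] [NumberField K] {s : ℝ} (hs : 1 < s)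
    {P : Ideal (𝓞 K)} (hP : Prime P) : idealWeight s P ≤ 2⁻¹ := by
  have h0 : Ideal.absNorm P ≠ 0 := by
    rw [Ne, Ideal.absNorm_eq_zero_iff]; exact hP.ne_zero
  have h1 : Ideal.absNorm P ≠ 1 := by
    rw [Ne, Ideal.absNorm_eq_one_iff]
    exact fun h => hP.not_isUnit (Ideal.isUnit_iff.mpr h)
  have h2 : (2 : ℝ) ≤ Ideal.absNorm P := by
    exact_mod_cast (by omega : 2 ≤ Ideal.absNorm P)
  rw [idealWeight, show (2⁻¹ : ℝ≥0∞) = ENNReal.ofReal (2⁻¹) by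
    rw [ENNReal.ofReal_inv_of_pos two_pos]; simp]
  refine ENNReal.ofReal_le_ofReal ?_
  calc ((Ideal.absNorm P : ℝ)) ^ (-s) ≤ (Ideal.absNorm P : ℝ) ^ (-1 : ℝ) :=
        Real.rpow_le_rpow_of_exponent_le (by linarith) (by linarith)
    _ = (Ideal.absNorm P : ℝ)⁻¹ := Real.rpow_neg_one _
    _ ≤ 2⁻¹ := by gcongr

open scoped Classical in
theorem tsum_idealWeight_le_of_finset {K : Type*} [Field K] [NumberField K] {s : ℝ} (hs : 1 < s)
    (hfin : ∑' I : Ideal (𝓞 K), idealWeight s I ≠ ⊤)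
    (T : Finset (Ideal (𝓞 K))) (hT : ∀ P ∈ T, Prime P) :
    ∑' I : Ideal (𝓞 K), idealWeight s I ≤
      2 ^ T.card * ∑' I : Ideal (𝓞 K), if IsPrimeTo T I then idealWeight s I else 0 := by
  induction T using Finset.induction_on with
  | empty => simp [IsPrimeTo]
  | insert P T hPT ih =>
    have hP : Prime P := hT P (Finset.mem_insert_self _ _)
    refine (ih fun Q hQ => hT Q (Finset.mem_insert_of_mem hQ)).trans ?_
    rw [Finset.card_insert_of_notMem hPT, pow_succ, mul_assoc]
    gcongr
    set Z := ∑' I : Ideal (𝓞 K), if IsPrimeTo T I then idealWeight s I else 0 with hZ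
    set Z' := ∑' I : Ideal (𝓞 K), if IsPrimeTo (insert P T) I then idealWeight s I else 0 with hZ'
    have hZtop : Z ≠ ⊤ := ne_top_of_le_ne_top hfin <| ENNReal.tsum_le_tsum fun I => by
      split_ifs <;> simp
    set f : Ideal (𝓞 K) → ℝ≥0∞ := fun I =>
      if P ∣ I ∧ IsPrimeTo T I then idealWeight s I else 0 with hf
    have hsplit : Z = Z' + ∑' I, f I := by
      rw [hZ, hZ', ← ENNReal.tsum_add]
      refine tsum_congr fun I => ?_
      have hins : IsPrimeTo (insert P T) I ↔ ¬ P ∣ I ∧ IsPrimeTo T I := by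
        simp [IsPrimeTo]
      by_cases h1 : P ∣ I <;> by_cases h2 : IsPrimeTo T I <;> simp [hf, hins, h1, h2]
    have hfle : ∑' I, f I ≤ 2⁻¹ * Z := by
      have hinj : Function.Injective fun J : Ideal (𝓞 K) => P * J :=
        mul_right_injective₀ hP.ne_zero
      rw [← hinj.tsum_eq (f := f), hZ, ← ENNReal.tsum_mul_left]
      · refine ENNReal.tsum_le_tsum fun J => ?_
        by_cases h2 : IsPrimeTo T (P * J)
        · have h3 : IsPrimeTo T J := fun Q hQ hd => h2 Q hQ (hd.mul_left P)
          simp only [hf, h2, h3, dvd_mul_right, and_self, if_true, idealWeight_mul]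
          gcongr
          exact idealWeight_le_half hs hP
        · simp [hf, h2]
      · intro I hI
        rw [Function.mem_support] at hI
        have : P ∣ I := by
          by_contra h
          simp [hf, h] at hI
        obtain ⟨J, rfl⟩ := this
        exact ⟨J, rfl⟩
    have h1 : 2⁻¹ * Z + 2⁻¹ * Z ≤ Z' + 2⁻¹ * Z := by
      rw [← add_mul, ENNReal.inv_two_add_inv_two, one_mul]
      calc Z = Z' + ∑' I, f I := hsplit
        _ ≤ _ := by gcongr
    have h2 : 2⁻¹ * Z ≤ Z' :=
      ENNReal.le_of_add_le_add_right (ENNReal.mul_ne_top (by simp) hZtop) h1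
    calc Z = 2 * (2⁻¹ * Z) := by
          rw [← mul_assoc, ENNReal.mul_inv_cancel (by simp) (by simp), one_mul]
      _ ≤ 2 * Z' := by gcongr

section Pushforward

open UniqueFactorizationMonoid

variable {K L : Type*} [Field K] [NumberField K] [Field L] [NumberField L]

/-- The multiplicative extension to ideals of a map defined on prime ideals. -/
noncomputable def idealPush (q : Ideal (𝓞 K) → Ideal (𝓞 L)) (I : Ideal (𝓞 K)) : Ideal (𝓞 L) :=
  ((normalizedFactors I).map q).prod

theorem normalizedFactors_idealPush {q : Ideal (𝓞 K) → Ideal (𝓞 L)} {I : Ideal (𝓞 K)}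
    (hq : ∀ P ∈ normalizedFactors I, Prime (q P)) :
    normalizedFactors (idealPush q I) = (normalizedFactors I).map q :=
  normalizedFactors_prod_of_prime fun Q hQ => by
    obtain ⟨P, hP, rfl⟩ := Multiset.mem_map.mp hQ
    exact hq P hP

theorem absNorm_idealPush {q : Ideal (𝓞 K) → Ideal (𝓞 L)} {I : Ideal (𝓞 K)} (hI : I ≠ ⊥)
    (hq : ∀ P ∈ normalizedFactors I, Ideal.absNorm (q P) = Ideal.absNorm P) :
    Ideal.absNorm (idealPush q I) = Ideal.absNorm I := by
  conv_rhs => rw [← Ideal.prod_normalizedFactors_eq_self hI]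
  rw [idealPush, map_multiset_prod, map_multiset_prod, Multiset.map_map]
  exact congrArg _ (Multiset.map_congr rfl hq)

/-- Away from a finite set of primes, a number field extension cannot have two primes of the same
norm as `P` above every prime `P`. -/
theorem not_exists_pair_of_primes
    (T : Finset (Ideal (𝓞 K))) (hT : ∀ P ∈ T, Prime P) (q₀ q₁ : Ideal (𝓞 K) → Ideal (𝓞 L))
    (c : Ideal (𝓞 L) → Ideal (𝓞 K))
    (h₀ : ∀ P, Prime P → P ∉ T → Prime (q₀ P)) (h₁ : ∀ P, Prime P → P ∉ T → Prime (q₁ P))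
    (hc₀ : ∀ P, Prime P → P ∉ T → c (q₀ P) = P) (hc₁ : ∀ P, Prime P → P ∉ T → c (q₁ P) = P)
    (hne : ∀ P, Prime P → P ∉ T → q₀ P ≠ q₁ P)
    (hn₀ : ∀ P, Prime P → P ∉ T → Ideal.absNorm (q₀ P) = Ideal.absNorm P)
    (hn₁ : ∀ P, Prime P → P ∉ T → Ideal.absNorm (q₁ P) = Ideal.absNorm P) : False := by
  classical
  set G : Set (Ideal (𝓞 K)) := {I | I ≠ ⊥ ∧ IsPrimeTo T I} with hG
  have hgood : ∀ I ∈ G, ∀ P ∈ normalizedFactors I, Prime P ∧ P ∉ T := fun I hI P hP =>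
    ⟨prime_of_normalized_factor P hP, fun hPT => hI.2 P hPT (dvd_of_mem_normalizedFactors hP)⟩
  have hnf₀ : ∀ I ∈ G, normalizedFactors (idealPush q₀ I) = (normalizedFactors I).map q₀ :=
    fun I hI => normalizedFactors_idealPush fun P hP => h₀ P (hgood I hI P hP).1 (hgood I hI P hP).2
  have hnf₁ : ∀ I ∈ G, normalizedFactors (idealPush q₁ I) = (normalizedFactors I).map q₁ :=
    fun I hI => normalizedFactors_idealPush fun P hP => h₁ P (hgood I hI P hP).1 (hgood I hI P hP).2
  have hN₀ : ∀ I ∈ G, Ideal.absNorm (idealPush q₀ I) = Ideal.absNorm I :=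
    fun I hI => absNorm_idealPush hI.1 fun P hP => hn₀ P (hgood I hI P hP).1 (hgood I hI P hP).2
  have hN₁ : ∀ I ∈ G, Ideal.absNorm (idealPush q₁ I) = Ideal.absNorm I :=
    fun I hI => absNorm_idealPush hI.1 fun P hP => hn₁ P (hgood I hI P hP).1 (hgood I hI P hP).2
  have hrec : ∀ I ∈ G, ∀ J ∈ G,
      ((normalizedFactors (idealPush q₀ I * idealPush q₁ J)).filter
        (fun Q => q₀ (c Q) = Q)).map c = normalizedFactors I ∧
      ((normalizedFactors (idealPush q₀ I * idealPush q₁ J)).filter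
        (fun Q => ¬ q₀ (c Q) = Q)).map c = normalizedFactors J := by
    intro I hI J hJ
    have hI0 : idealPush q₀ I ≠ 0 := by
      rw [Ne, Ideal.zero_eq_bot, ← Ideal.absNorm_eq_zero_iff, hN₀ I hI, Ideal.absNorm_eq_zero_iff]; exact hI.1
    have hJ0 : idealPush q₁ J ≠ 0 := by
      rw [Ne, Ideal.zero_eq_bot, ← Ideal.absNorm_eq_zero_iff, hN₁ J hJ, Ideal.absNorm_eq_zero_iff]; exact hJ.1
    have ha : ∀ Q ∈ (normalizedFactors I).map q₀, q₀ (c Q) = Q := fun Q hQ => by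
      obtain ⟨P, hP, rfl⟩ := Multiset.mem_map.mp hQ
      rw [hc₀ P (hgood I hI P hP).1 (hgood I hI P hP).2]
    have hb : ∀ Q ∈ (normalizedFactors J).map q₁, ¬ q₀ (c Q) = Q := fun Q hQ => by
      obtain ⟨P, hP, rfl⟩ := Multiset.mem_map.mp hQ
      rw [hc₁ P (hgood J hJ P hP).1 (hgood J hJ P hP).2]
      exact hne P (hgood J hJ P hP).1 (hgood J hJ P hP).2
    rw [normalizedFactors_mul hI0 hJ0, hnf₀ I hI, hnf₁ J hJ, Multiset.filter_add,
      Multiset.filter_add, Multiset.filter_eq_self.mpr ha, Multiset.filter_eq_nil.mpr hb,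
      Multiset.filter_eq_self.mpr hb, Multiset.filter_eq_nil.mpr (fun Q hQ h => h (ha Q hQ)),
      add_zero, zero_add, Multiset.map_map, Multiset.map_map]
    constructor
    · conv_rhs => rw [← Multiset.map_id (normalizedFactors I)]
      exact Multiset.map_congr rfl fun P hP => hc₀ P (hgood I hI P hP).1 (hgood I hI P hP).2
    · conv_rhs => rw [← Multiset.map_id (normalizedFactors J)]
      exact Multiset.map_congr rfl fun P hP => hc₁ P (hgood J hJ P hP).1 (hgood J hJ P hP).2
  have hinj : Function.Injective
      (fun x : G × G => idealPush q₀ x.1.1 * idealPush q₁ x.2.1) := by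
    rintro ⟨⟨I, hI⟩, J, hJ⟩ ⟨⟨I', hI'⟩, J', hJ'⟩ h
    have h1 := hrec I hI J hJ
    have h2 := hrec I' hI' J' hJ'
    simp only at h
    rw [h] at h1
    have e1 : I = I' := by
      rw [← Ideal.prod_normalizedFactors_eq_self hI.1, ← h1.1, h2.1,
        Ideal.prod_normalizedFactors_eq_self hI'.1]
    have e2 : J = J' := by
      rw [← Ideal.prod_normalizedFactors_eq_self hJ.1, ← h1.2, h2.2,
        Ideal.prod_normalizedFactors_eq_self hJ'.1]
    subst e1 e2
    rfl
  have hsq : ∀ s : ℝ, (∑' I : G, idealWeight s I.1) * (∑' I : G, idealWeight s I.1) ≤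
      ∑' I : Ideal (𝓞 L), idealWeight s I := by
    intro s
    refine le_trans (le_of_eq ?_) (ENNReal.tsum_comp_le_tsum_of_injective hinj (idealWeight s))
    rw [ENNReal.tsum_prod', ← ENNReal.tsum_mul_right]
    refine tsum_congr fun I => ?_
    rw [← ENNReal.tsum_mul_left]
    refine tsum_congr fun J => ?_
    rw [idealWeight_mul]
    simp only [idealWeight, hN₀ I.1 I.2, hN₁ J.1 J.2]
  have hGsum : ∀ s : ℝ, s ≠ 0 → ∑' I : G, idealWeight s I.1 =
      ∑' I : Ideal (𝓞 K), if IsPrimeTo T I then idealWeight s I else 0 := by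
    intro s hs
    rw [tsum_subtype G (idealWeight s)]
    refine tsum_congr fun I => ?_
    rcases eq_or_ne I ⊥ with rfl | hI
    · simp [idealWeight_bot hs]
    · simp [Set.indicator_apply, hG, hI]
  obtain ⟨hKfin, hK⟩ := tendsto_sub_one_mul_tsum_idealWeight K
  obtain ⟨hLfin, hL⟩ := tendsto_sub_one_mul_tsum_idealWeight L
  have hkey : ∀ᶠ s : ℝ in 𝓝[>] 1,
      ((s - 1) * (∑' I : Ideal (𝓞 K), idealWeight s I).toReal) ^ 2 ≤
        (2 ^ T.card) ^ 2 * ((s - 1) *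
          ((s - 1) * (∑' I : Ideal (𝓞 L), idealWeight s I).toReal)) := by
    filter_upwards [hKfin, hLfin, self_mem_nhdsWithin] with s hKs hLs hs
    have hs1 : (1 : ℝ) < s := hs
    have h1 := tsum_idealWeight_le_of_finset hs1 hKs T hT
    rw [← hGsum s (by linarith)] at h1
    have h2 : (∑' I : Ideal (𝓞 K), idealWeight s I) ^ 2 ≤
        (2 ^ T.card) ^ 2 * ∑' I : Ideal (𝓞 L), idealWeight s I := by
      calc _ ≤ (2 ^ T.card * ∑' I : G, idealWeight s I.1) ^ 2 := by gcongr
        _ = (2 ^ T.card) ^ 2 *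
            ((∑' I : G, idealWeight s I.1) * (∑' I : G, idealWeight s I.1)) := by ring
        _ ≤ _ := by gcongr; exact hsq s
    have h3 := ENNReal.toReal_mono (ENNReal.mul_ne_top (by finiteness) hLs) h2
    simp only [ENNReal.toReal_mul, ENNReal.toReal_pow, ENNReal.toReal_ofNat] at h3
    rw [mul_pow]
    calc _ ≤ (s - 1) ^ 2 * ((2 ^ T.card) ^ 2 * (∑' I : Ideal (𝓞 L), idealWeight s I).toReal) := by
          gcongr
      _ = _ := by ring
  have hs0 : Tendsto (fun s : ℝ => s - 1) (𝓝[>] 1) (𝓝 0) := by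
    have : Tendsto (fun s : ℝ => s - 1) (𝓝 1) (𝓝 (1 - 1)) := (continuous_sub_right 1).tendsto 1
    rw [sub_self] at this
    exact this.mono_left nhdsWithin_le_nhds
  have hlim := le_of_tendsto_of_tendsto (hK.pow 2) ((hs0.mul hL).const_mul _) hkey
  rw [zero_mul, mul_zero] at hlim
  exact absurd hlim (not_le.mpr (pow_pos (dedekindZeta_residue_pos K) 2))

end Pushforward

theorem IsPrimitiveRoot.map_of_natCast_ne_zero {R S : Type*} [CommRing R] [IsDomain R] [CommRing S]
    [IsDomain S] {ζ : R} {n : ℕ} (hn : 0 < n) (hζ : IsPrimitiveRoot ζ n) (f : R →+* S)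
    (h : (n : S) ≠ 0) : IsPrimitiveRoot (f ζ) n := by
  have : NeZero (n : S) := ⟨h⟩
  rw [← Polynomial.isRoot_cyclotomic_iff, ← Polynomial.map_cyclotomic n f]
  exact (hζ.isRoot_cyclotomic hn).map

open scoped Pointwise in
theorem exists_ne_of_mem_primesOver_kummer {K L : Type*} [Field K] [NumberField K] [Field L]
    [NumberField L] [Algebra K L] [IsGalois K L] {p : ℕ} (hp : p.Prime)
    (hrank : Module.finrank K L = p) {ζ : 𝓞 K} (hζ : IsPrimitiveRoot ζ p) {y c : 𝓞 K} {θ : 𝓞 L}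
    (hθ : θ ^ p = algebraMap (𝓞 K) (𝓞 L) y) (σ : Gal(L/K))
    (hσ : σ • θ = algebraMap (𝓞 K) (𝓞 L) ζ * θ) (P : Ideal (𝓞 K)) [P.IsMaximal]
    (hyP : y * p ∉ P) (hc : y - c ^ p ∈ P) :
    ∃ Q₀ Q₁ : Ideal (𝓞 L), Q₀ ≠ Q₁ ∧ (Q₀.IsPrime ∧ Q₀.under (𝓞 K) = P ∧
        Ideal.absNorm Q₀ = Ideal.absNorm P) ∧ (Q₁.IsPrime ∧ Q₁.under (𝓞 K) = P ∧
        Ideal.absNorm Q₁ = Ideal.absNorm P) := by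
  obtain ⟨⟨Q, hQp, hQl⟩⟩ := (inferInstance : Nonempty (P.primesOver (𝓞 L)))
  set f := algebraMap (𝓞 K) (𝓞 L) with hf
  have hmem : ∀ a : 𝓞 K, f a ∈ Q ↔ a ∈ P := fun a => by
    rw [hQl.over, Ideal.under_def, Ideal.mem_comap]
  have hyQ : f y ∉ Q := fun h => hyP (P.mul_mem_right _ ((hmem y).mp h))
  have hpP : (p : 𝓞 K) ∉ P := fun h => hyP (P.mul_mem_left _ h)
  have hθQ : θ ∉ Q := fun h => hyQ (hθ ▸ Q.pow_mem_of_mem h p hp.pos)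
  have hζL : IsPrimitiveRoot (f ζ) p :=
    hζ.map_of_injective (FaithfulSMul.algebraMap_injective (𝓞 K) (𝓞 L))
  have hprod : ∏ ξ ∈ Polynomial.nthRootsFinset p (1 : 𝓞 L), (θ - ξ * f c) ∈ Q := by
    rw [← hζL.pow_sub_pow_eq_prod_sub_mul _ _ hp.pos, hθ, ← map_pow, ← map_sub]
    exact (hmem _).mpr hc
  obtain ⟨ξ, hξ, hξQ⟩ := (Ideal.IsPrime.prod_mem_iff).mp hprod
  rw [Polynomial.mem_nthRootsFinset hp.pos] at hξ
  have : NeZero p := ⟨hp.ne_zero⟩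
  obtain ⟨i, -, rfl⟩ := hζL.eq_pow_of_pow_eq_one hξ
  have hne : Q ≠ σ • Q := by
    intro h
    have h1 : σ • (θ - f ζ ^ i * f c) ∈ Q := by
      rw [h]; exact Ideal.smul_mem_pointwise_smul _ _ _ hξQ
    rw [smul_sub, hσ, ← map_pow, ← map_mul, smul_algebraMap, map_mul, map_pow] at h1
    have h2 : (f ζ - 1) * θ ∈ Q := by
      have := Q.sub_mem h1 hξQ
      rwa [show f ζ * θ - f ζ ^ i * f c - (θ - f ζ ^ i * f c) = (f ζ - 1) * θ by ring] at this
    have h3 : f (ζ - 1) ∈ Q := by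
      rw [map_sub, map_one]
      exact (hQp.mem_or_mem h2).resolve_right hθQ
    rw [hmem, ← Ideal.Quotient.eq_zero_iff_mem, map_sub, map_one, sub_eq_zero] at h3
    have h4 := hζ.map_of_natCast_ne_zero hp.pos (Ideal.Quotient.mk P) (by
      rwa [← map_natCast (Ideal.Quotient.mk P), Ne, Ideal.Quotient.eq_zero_iff_mem])
    rw [h3] at h4
    exact hp.one_lt.ne' (h4.eq_orderOf.trans orderOf_one)
  have hQ1 : (σ • Q).LiesOver P := inferInstance
  have hQ1p : (σ • Q).IsPrime := inferInstance
  have hfin : (P.primesOver (𝓞 L)).Finite := Algebra.QuasiFinite.finite_primesOver P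
  have hcard : 1 < (P.primesOver (𝓞 L)).ncard := by
    rw [Set.one_lt_ncard hfin]
    exact ⟨Q, ⟨hQp, hQl⟩, σ • Q, ⟨hQ1p, hQ1⟩, hne⟩
  have hfund := Ideal.ncard_primesOver_mul_ramificationIdxIn_mul_inertiaDegIn P (𝓞 L) Gal(L/K)
  rw [IsGalois.card_aut_eq_finrank, hrank] at hfund
  have hinert : P.inertiaDegIn (𝓞 L) = 1 := by
    have h1 : (P.primesOver (𝓞 L)).ncard = p :=
      ((Nat.dvd_prime hp).mp ⟨_, hfund.symm⟩).resolve_left hcard.ne'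
    rw [h1] at hfund
    have h2 := Nat.eq_of_mul_eq_mul_left hp.pos (hfund.trans (mul_one p).symm)
    exact Nat.eq_one_of_mul_eq_one_left h2
  have hnorm : ∀ R : Ideal (𝓞 L), R.IsPrime → R.LiesOver P →
      Ideal.absNorm R = Ideal.absNorm P := by
    intro R hR hRl
    have := Ideal.inertiaDegIn_eq_inertiaDeg P R Gal(L/K)
    rw [← Ideal.absNorm_pow_inertiaDeg P R, ← this, hinert, pow_one]
  exact ⟨Q, σ • Q, hne, ⟨hQp, hQl.over.symm, hnorm Q hQp hQl⟩,
    ⟨hQ1p, hQ1.over.symm, hnorm _ hQ1p hQ1⟩⟩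

theorem not_exists_kummer_generator {K L : Type*} [Field K] [NumberField K] [Field L]
    [NumberField L] [Algebra K L] [IsGalois K L] {p : ℕ} (hp : p.Prime)
    (hrank : Module.finrank K L = p) {ζ : 𝓞 K} (hζ : IsPrimitiveRoot ζ p) {y : 𝓞 K} (hy : y ≠ 0)
    {θ : L} (hθ : θ ^ p = algebraMap K L y) (σ : Gal(L/K)) (hσ : σ θ = algebraMap K L ζ * θ)
    (hloc : ∀ P : Ideal (𝓞 K), P.IsMaximal → ∃ c, y - c ^ p ∈ P) : False := by
  classical
  have hθint : IsIntegral ℤ θ := by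
    refine IsIntegral.of_pow hp.pos ?_
    rw [hθ]
    exact (RingOfIntegers.isIntegral_coe y).algebraMap
  let θ' : 𝓞 L := ⟨θ, hθint⟩
  have hy0 : y * p ≠ 0 := mul_ne_zero hy (by exact_mod_cast hp.ne_zero)
  have hspan : Ideal.span {y * (p : 𝓞 K)} ≠ ⊥ := by simpa using hy0
  let T : Finset (Ideal (𝓞 K)) :=
    (UniqueFactorizationMonoid.normalizedFactors (Ideal.span {y * (p : 𝓞 K)})).toFinset
  have key : ∀ P : Ideal (𝓞 K), Prime P ∧ P ∉ T →
      ∃ Q₀ Q₁ : Ideal (𝓞 L), Q₀ ≠ Q₁ ∧ (Q₀.IsPrime ∧ Q₀.under (𝓞 K) = P ∧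
        Ideal.absNorm Q₀ = Ideal.absNorm P) ∧ (Q₁.IsPrime ∧ Q₁.under (𝓞 K) = P ∧
        Ideal.absNorm Q₁ = Ideal.absNorm P) := by
    rintro P ⟨hP, hPT⟩
    have hPp : P.IsPrime := Ideal.isPrime_of_prime hP
    have hPm : P.IsMaximal := hPp.isMaximal hP.ne_zero
    obtain ⟨c, hc⟩ := hloc P hPm
    refine exists_ne_of_mem_primesOver_kummer hp hrank hζ (y := y) (c := c) (θ := θ')
      ?_ σ ?_ P ?_ hc
    · exact RingOfIntegers.coe_injective hθ
    · exact RingOfIntegers.coe_injective hσ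
    · intro hmem
      apply hPT
      rw [Multiset.mem_toFinset, Ideal.mem_normalizedFactors_iff hspan]
      exact ⟨hPp, (Ideal.span_singleton_le_iff_mem _).mpr hmem⟩
  choose! q₀ q₁ hq using key
  have hpr : ∀ (P : Ideal (𝓞 K)) (Q : Ideal (𝓞 L)), Prime P → Q.IsPrime →
      Q.under (𝓞 K) = P → Prime Q := fun P Q hP hQ hQP => by
    refine Ideal.prime_of_isPrime ?_ hQ
    rintro rfl
    apply hP.ne_zero
    rw [← hQP, Ideal.under_bot]
    rfl
  exact not_exists_pair_of_primes T
    (fun P hP => UniqueFactorizationMonoid.prime_of_normalized_factor P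
      (Multiset.mem_toFinset.mp hP)) q₀ q₁ (fun Q => Q.under (𝓞 K))
    (fun P hP hPT => hpr P _ hP (hq P ⟨hP, hPT⟩).2.1.1 (hq P ⟨hP, hPT⟩).2.1.2.1)
    (fun P hP hPT => hpr P _ hP (hq P ⟨hP, hPT⟩).2.2.1 (hq P ⟨hP, hPT⟩).2.2.2.1)
    (fun P hP hPT => (hq P ⟨hP, hPT⟩).2.1.2.1)
    (fun P hP hPT => (hq P ⟨hP, hPT⟩).2.2.2.1)
    (fun P hP hPT => (hq P ⟨hP, hPT⟩).1)
    (fun P hP hPT => (hq P ⟨hP, hPT⟩).2.1.2.2)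
    (fun P hP hPT => (hq P ⟨hP, hPT⟩).2.2.2.2)


open Polynomial in
theorem exists_pow_prime_eq_of_forall_isMaximal {K : Type*} [Field K] [NumberField K] {p : ℕ}
    (hp : p.Prime) {ζ : 𝓞 K} (hζ : IsPrimitiveRoot ζ p) {y : 𝓞 K} (hy : y ≠ 0)
    (hloc : ∀ P : Ideal (𝓞 K), P.IsMaximal → ∃ c, y - c ^ p ∈ P) : ∃ w : K, w ^ p = y := by
  by_contra! hirr
  have H : Irreducible (X ^ p - C (y : K)) := X_pow_sub_C_irreducible_of_prime hp hirr
  have : NeZero p := ⟨hp.ne_zero⟩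
  let L := (X ^ p - C (y : K)).SplittingField
  have : NumberField L := NumberField.of_module_finite K L
  have hζK : IsPrimitiveRoot (ζ : K) p := hζ.map_of_injective RingOfIntegers.coe_injective
  have hζ' : (primitiveRoots p K).Nonempty := ⟨ζ, (mem_primitiveRoots hp.pos).mpr hζK⟩
  have : IsGalois K L := isGalois_of_isSplittingField_X_pow_sub_C hζ' H L
  have hrank : Module.finrank K L = p := finrank_of_isSplittingField_X_pow_sub_C hζ' H L
  let θ := rootOfSplitsXPowSubC hp.pos (y : K) L
  have hθ : θ ^ p = algebraMap K L y := rootOfSplitsXPowSubC_pow (y : K) L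
  let σ : Gal(L/K) := (autEquivZmod H L hζK).symm (Multiplicative.ofAdd ((1 : ℕ) : ZMod p))
  have hσ : σ θ = algebraMap K L ζ * θ := by
    have := autEquivZmod_symm_apply_natCast H L hθ hζK 1
    rwa [pow_one, Algebra.smul_def] at this
  exact not_exists_kummer_generator hp hrank hζ hy hθ σ hσ hloc

theorem exists_pow_prime_eq_of_pow_eq_pow {k : Type*} [Field k] [Finite k] {p : ℕ}
    (hp : p.Prime) (s t : ℕ)
    (hζ : (p : k) ≠ 0 → ∃ z : k, IsPrimitiveRoot z (p ^ (s + (t + 1)))) {y c : k}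
    (h : y ^ p ^ s = c ^ p ^ (s + (t + 1))) : ∃ d : k, y = d ^ p := by
  by_cases hpk : (p : k) = 0
  · have : Fact p.Prime := ⟨hp⟩
    have : CharP k p := by
      refine (CharP.charP_iff_prime_eq_zero hp).mpr hpk
    obtain ⟨d, hd⟩ := surjective_frobenius k p y
    exact ⟨d, hd.symm⟩
  obtain ⟨z, hz⟩ := hζ hpk
  rcases eq_or_ne c 0 with rfl | hc
  · refine ⟨0, ?_⟩
    rw [zero_pow hp.ne_zero]
    rw [zero_pow (pow_ne_zero _ hp.ne_zero)] at h
    exact eq_zero_of_pow_eq_zero h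
  have hz' : IsPrimitiveRoot (z ^ p ^ (t + 1)) (p ^ s) :=
    hz.pow (pow_pos hp.pos _) (by rw [pow_add, mul_comm])
  have hu : (y / c ^ p ^ (t + 1)) ^ p ^ s = 1 := by
    rw [div_pow, h, ← pow_mul, ← pow_add, add_comm (t + 1) s,
      div_self (pow_ne_zero _ hc)]
  have : NeZero (p ^ s) := ⟨pow_ne_zero _ hp.ne_zero⟩
  obtain ⟨i, -, hi⟩ := hz'.eq_pow_of_pow_eq_one hu
  refine ⟨z ^ (p ^ t * i) * c ^ p ^ t, ?_⟩
  rw [eq_div_iff (pow_ne_zero _ hc)] at hi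
  rw [← hi, pow_succ]
  ring

theorem exists_pow_prime_pow_eq_of_forall_isMaximal {K : Type*} [Field K] [NumberField K] {p : ℕ}
    (hp : p.Prime) (r : ℕ) {ζ : 𝓞 K} (hζ : IsPrimitiveRoot ζ (p ^ r)) {x : 𝓞 K} (hx : x ≠ 0)
    (hloc : ∀ P : Ideal (𝓞 K), P.IsMaximal → ∃ c, x - c ^ p ^ r ∈ P) :
    ∃ w : 𝓞 K, w ^ p ^ r = x := by
  suffices ∀ s ≤ r, ∃ w : 𝓞 K, w ^ p ^ s = x from this r le_rfl
  intro s
  induction s with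
  | zero => exact fun _ => ⟨x, by simp⟩
  | succ s ih =>
    intro hs
    obtain ⟨y, hy⟩ := ih (by lia)
    obtain ⟨t, rfl⟩ : ∃ t, r = s + (t + 1) := ⟨r - s - 1, by lia⟩
    have hy0 : y ≠ 0 := by
      rintro rfl
      exact hx (by rw [← hy, zero_pow (pow_ne_zero _ hp.ne_zero)])
    have hζp : IsPrimitiveRoot (ζ ^ p ^ (s + t)) p :=
      hζ.pow (pow_pos hp.pos _) (by ring)
    obtain ⟨w, hw⟩ := exists_pow_prime_eq_of_forall_isMaximal hp hζp hy0 fun P hP => by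
      obtain ⟨c, hc⟩ := hloc P hP
      let : Field (𝓞 K ⧸ P) := Ideal.Quotient.field P
      have hP0 : P ≠ ⊥ := Ring.ne_bot_of_isMaximal_of_not_isField hP (RingOfIntegers.not_isField K)
      have : Finite (𝓞 K ⧸ P) := Ideal.finiteQuotientOfFreeOfNeBot P hP0
      obtain ⟨d, hd⟩ := exists_pow_prime_eq_of_pow_eq_pow (k := 𝓞 K ⧸ P) hp s t
        (fun h => ⟨Ideal.Quotient.mk P ζ, hζ.map_of_natCast_ne_zero (pow_pos hp.pos _)
          (Ideal.Quotient.mk P) (by rw [Nat.cast_pow]; exact pow_ne_zero _ h)⟩)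
        (y := Ideal.Quotient.mk P y) (c := Ideal.Quotient.mk P c) (by
          rw [← map_pow, hy, ← map_pow]
          exact Ideal.Quotient.eq.mpr hc)
      obtain ⟨d, rfl⟩ := Ideal.Quotient.mk_surjective d
      exact ⟨d, Ideal.Quotient.eq.mp (by rw [hd, map_pow])⟩
    obtain ⟨w', hw'⟩ : ∃ w' : 𝓞 K, w' ^ p = y :=
      ⟨⟨w, IsIntegral.of_pow hp.pos (hw ▸ RingOfIntegers.isIntegral_coe y)⟩,
        RingOfIntegers.coe_injective hw⟩
    exact ⟨w', by rw [pow_succ', pow_mul, hw', hy]⟩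

theorem exists_forall_pow_dvd_sub_of_pow_dvd_mul_geom_sum {p : ℕ} (hp : p.Prime) {j : ℕ}
    (hj : j + 2 ≤ p * j) {a t : ℤ} (ha : ¬ (p : ℤ) ∣ a) (ht : t = 1 + p ^ j * a)
    (r : ℕ) : ∃ N : ℕ, (p : ℤ) ^ r ∣ t ^ N - 1 ∧
      ∀ b : ℤ, (p : ℤ) ^ r ∣ b * ∑ i ∈ Finset.range N, t ^ i → ∃ c, (p : ℤ) ^ r ∣ b - (t - 1) * c := by
  have hpZ : Prime (p : ℤ) := Nat.prime_iff_prime_int.mp hp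
  have hj0 : j ≠ 0 := by rintro rfl; lia
  rcases le_total r j with hrj | hrj
  · refine ⟨1, ?_, fun b hb => ⟨0, by simpa using hb⟩⟩
    rw [pow_one, ht, add_sub_cancel_left]
    exact (pow_dvd_pow _ hrj).mul_right _
  obtain ⟨m, rfl⟩ := Nat.exists_eq_add_of_le hrj
  obtain ⟨y, hy⟩ := ZMod.exists_one_add_mul_pow_prime_pow_eq (u := (p : ℤ) ^ j) (v := p) hp
    (dvd_pow_self _ hj0) (by
      rw [← pow_succ', ← pow_succ, ← pow_mul, mul_comm j p]
      exact pow_dvd_pow _ hj) a m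
  rw [← ht] at hy
  have hy' : ¬ (p : ℤ) ∣ a + p * y := by
    rwa [dvd_add_left (Dvd.intro _ rfl)]
  refine ⟨p ^ m, ⟨a + p * y, by rw [hy]; ring⟩, fun b hb => ?_⟩
  have hS : a * ∑ i ∈ Finset.range (p ^ m), t ^ i = p ^ m * (a + p * y) := by
    have h1 := mul_geom_sum t (p ^ m)
    rw [hy, ht] at h1
    have h2 : (p : ℤ) ^ j ≠ 0 := pow_ne_zero _ hpZ.ne_zero
    apply mul_left_cancel₀ h2
    rw [ht]
    linear_combination h1
  have h1 : (p : ℤ) ^ m * p ^ j ∣ p ^ m * (b * (a + p * y)) := by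
    rw [← pow_add, add_comm, show (p : ℤ) ^ m * (b * (a + p * y)) = b * (p ^ m * (a + p * y)) by ring,
      ← hS, mul_left_comm]
    exact hb.mul_left a
  have h2 := (mul_dvd_mul_iff_left (pow_ne_zero m hpZ.ne_zero)).mp h1
  obtain ⟨b', rfl⟩ := (hpZ.pow_dvd_of_dvd_mul_right j hy' h2)
  have hcop : IsCoprime a ((p : ℤ) ^ m) :=
    ((hpZ.coprime_iff_not_dvd.mpr ha).symm).pow_right
  obtain ⟨u, v, huv⟩ := hcop
  refine ⟨u * b', v * b', ?_⟩
  rw [ht, pow_add]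
  linear_combination (-(p : ℤ) ^ j * b') * huv

theorem exists_algebraMap_pow_eq_of_generator {F K : Type*} [Field F] [Field K] [Algebra F K]
    [FiniteDimensional F K] [IsGalois F K] {M : ℕ} [NeZero M] {ζ : K} (hζ : IsPrimitiveRoot ζ M)
    (hfaith : ∀ σ : Gal(K/F), σ ζ = ζ → σ = 1) {τ : Gal(K/F)}
    (hτ : ∀ σ : Gal(K/F), σ ∈ Subgroup.zpowers τ) {t : ℕ} (ht : τ ζ = ζ ^ t)
    (hN : ∃ N : ℕ, (M : ℤ) ∣ t ^ N - 1 ∧ ∀ b : ℤ, (M : ℤ) ∣ b * ∑ i ∈ Finset.range N, (t : ℤ) ^ i →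
      ∃ c, (M : ℤ) ∣ b - (t - 1) * c) {x : F} (hx : x ≠ 0) {α : K}
    (hα : α ^ M = algebraMap F K x) : ∃ z : F, z ^ M = x := by
  obtain ⟨N, hN1, hN2⟩ := hN
  have hζ0 : ζ ≠ 0 := hζ.ne_zero (NeZero.ne M)
  have hα0 : α ≠ 0 := by
    rintro rfl
    rw [zero_pow (NeZero.ne M)] at hα
    exact hx ((map_eq_zero _).mp hα.symm)
  have hroot : (τ α / α) ^ M = 1 := by
    rw [div_pow, ← map_pow, hα, AlgEquiv.commutes, div_self ((map_ne_zero _).mpr hx)]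
  obtain ⟨b, -, hb⟩ := hζ.eq_pow_of_pow_eq_one hroot
  rw [eq_div_iff hα0] at hb
  have hiterζ : ∀ n : ℕ, (τ ^ n) ζ = ζ ^ t ^ n := fun n => by
    induction n with
    | zero => simp
    | succ n ih => rw [pow_succ', AlgEquiv.mul_apply, ih, map_pow, ht, ← pow_mul, pow_succ']
  have hiterα : ∀ n : ℕ, (τ ^ n) α = ζ ^ (b * ∑ i ∈ Finset.range n, t ^ i) * α := fun n => by
    induction n with
    | zero => simp
    | succ n ih =>
      rw [pow_succ', AlgEquiv.mul_apply, ih, map_mul, map_pow, ht, ← hb, geom_sum_succ]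
      ring
  have hτN : τ ^ N = 1 := by
    apply hfaith
    rw [hiterζ]
    have : ζ ^ ((t : ℤ) ^ N - 1) = 1 := (hζ.zpow_eq_one_iff_dvd _).mpr hN1
    rw [zpow_sub₀ hζ0, zpow_one, div_eq_one_iff_eq hζ0] at this
    exact_mod_cast this
  have hMb : (M : ℤ) ∣ b * ∑ i ∈ Finset.range N, (t : ℤ) ^ i := by
    have h1 := hiterα N
    rw [hτN, AlgEquiv.one_apply, eq_comm, mul_eq_right₀ hα0, hζ.pow_eq_one_iff_dvd] at h1
    exact_mod_cast h1
  obtain ⟨c, hc⟩ := hN2 b hMb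
  have hfix : τ (ζ ^ (-c) * α) = ζ ^ (-c) * α := by
    have h1 : ζ ^ ((b : ℤ) - (t - 1) * c) = 1 := (hζ.zpow_eq_one_iff_dvd _).mpr hc
    rw [map_mul, map_zpow₀, ht, ← hb, ← mul_assoc, ← zpow_natCast ζ t, ← zpow_natCast ζ b,
      ← zpow_mul, ← zpow_add₀ hζ0]
    rw [show (t : ℤ) * -c + b = (b - (t - 1) * c) + -c by ring, zpow_add₀ hζ0, h1, one_mul]
  have hfix' : ∀ σ : Gal(K/F), σ (ζ ^ (-c) * α) = ζ ^ (-c) * α := fun σ => by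
    have : Subgroup.zpowers τ ≤ MulAction.stabilizer Gal(K/F) (ζ ^ (-c) * α) := by
      rw [Subgroup.zpowers_le]
      exact hfix
    exact this (hτ σ)
  obtain ⟨z, hz⟩ := (IsGalois.mem_range_algebraMap_iff_fixed _).mpr hfix'
  refine ⟨z, (algebraMap F K).injective ?_⟩
  rw [map_pow, hz, mul_pow, hα, ← zpow_natCast, ← zpow_mul, mul_comm (-c), zpow_mul, zpow_natCast,
    hζ.pow_eq_one, one_zpow, one_mul]

theorem exists_pow_eq_pow_gcd {F : Type*} [Field F] {x u : F} (hx : x ≠ 0) {a M : ℕ}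
    (h : u ^ M = x ^ a) : ∃ z : F, z ^ M = x ^ a.gcd M := by
  have hcomm : ∀ (y : F) (c : ℤ), (y ^ c) ^ M = (y ^ M) ^ c := fun y c => by
    rw [← zpow_natCast, ← zpow_natCast, ← zpow_mul, ← zpow_mul, mul_comm]
  refine ⟨u ^ a.gcdA M * x ^ a.gcdB M, ?_⟩
  rw [← zpow_natCast x, Nat.gcd_eq_gcd_ab, zpow_add₀ hx, zpow_mul, zpow_mul, zpow_natCast,
    zpow_natCast, ← h, mul_pow, hcomm, hcomm]

theorem exists_pow_eq_pow_gcd_of_commute {F K : Type*} [Field F] [Field K] [Algebra F K]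
    [FiniteDimensional F K] [IsGalois F K] {M : ℕ} [NeZero M] {ζ : K} (hζ : IsPrimitiveRoot ζ M)
    {τ : Gal(K/F)} (hτ : ∀ σ : Gal(K/F), Commute σ τ) {t : ℕ} (ht : τ ζ = ζ ^ (t + 1)) {x : F}
    (hx : x ≠ 0) {α : K} (hα : α ^ M = algebraMap F K x) : ∃ z : F, z ^ M = x ^ t.gcd M := by
  have hζ0 : ζ ≠ 0 := hζ.ne_zero (NeZero.ne M)
  have hα0 : α ≠ 0 := by
    rintro rfl
    rw [zero_pow (NeZero.ne M)] at hα
    exact hx ((map_eq_zero _).mp hα.symm)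
  have hfix : ∀ σ : Gal(K/F), σ (α ^ (t + 1) / τ α) = α ^ (t + 1) / τ α := fun σ => by
    have hroot : (σ α / α) ^ M = 1 := by
      rw [div_pow, ← map_pow, hα, AlgEquiv.commutes, div_self ((map_ne_zero _).mpr hx)]
    obtain ⟨e, -, he⟩ := hζ.eq_pow_of_pow_eq_one hroot
    rw [eq_div_iff hα0] at he
    have hcomm : σ (τ α) = τ (σ α) := by
      rw [← AlgEquiv.mul_apply, (hτ σ).eq, AlgEquiv.mul_apply]
    rw [map_div₀, map_pow, hcomm, ← he, map_mul, map_pow, ht, mul_pow, ← pow_mul, ← pow_mul,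
      mul_comm e, mul_div_mul_left _ _ (pow_ne_zero _ hζ0)]
  obtain ⟨u, hu⟩ := (IsGalois.mem_range_algebraMap_iff_fixed _).mpr hfix
  refine exists_pow_eq_pow_gcd hx (u := u) ?_
  · apply (algebraMap F K).injective
    rw [map_pow, hu, div_pow, ← map_pow, hα, AlgEquiv.commutes, ← pow_mul, mul_comm, pow_mul, hα,
      map_pow, pow_succ, mul_div_assoc, div_self ((map_ne_zero _).mpr hx), mul_one]

theorem ZMod.isCyclic_ker_unitsMap_four (n : ℕ) :
    IsCyclic (ZMod.unitsMap (pow_dvd_pow 2 (Nat.le_add_left 2 n) : 2 ^ 2 ∣ 2 ^ (n + 2))).ker := by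
  set f := ZMod.unitsMap (pow_dvd_pow 2 (Nat.le_add_left 2 n) : 2 ^ 2 ∣ 2 ^ (n + 2)) with hf
  have h5 : IsUnit (5 : ZMod (2 ^ (n + 2))) :=
    (ZMod.isUnit_iff_coprime 5 _).mpr (Nat.Coprime.pow_right _ (by norm_num))
  obtain ⟨u, hu⟩ := h5
  have hord : orderOf u = 2 ^ n := by
    rw [← orderOf_units, hu, ZMod.orderOf_five]
  have huker : u ∈ f.ker := by
    rw [MonoidHom.mem_ker, Units.ext_iff, hf, ZMod.unitsMap_val, hu, ← Nat.cast_ofNat (n := 5),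
      ZMod.cast_natCast (pow_dvd_pow 2 (Nat.le_add_left 2 n))]
    decide
  have hcard : Nat.card (ZMod (2 ^ (n + 2)))ˣ = 2 ^ n * 2 := by
    rw [Nat.card_eq_fintype_card, ZMod.card_units_eq_totient,
      Nat.totient_prime_pow_succ Nat.prime_two]
    norm_num [pow_succ]
  have hneg : (-1 : (ZMod (2 ^ (n + 2)))ˣ) ∉ f.ker := by
    rw [MonoidHom.mem_ker, Units.ext_iff, hf, ZMod.unitsMap_val, Units.val_neg, Units.val_one,
      ZMod.cast_neg (pow_dvd_pow 2 (Nat.le_add_left 2 n)),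
      ZMod.cast_one (pow_dvd_pow 2 (Nat.le_add_left 2 n))]
    decide
  have hkercard : Nat.card f.ker = 2 ^ n := by
    obtain ⟨d, hd⟩ : 2 ^ n ∣ Nat.card f.ker := by
      rw [← hord, ← Subgroup.orderOf_mk _ huker]
      exact orderOf_dvd_natCard _
    have h1 : d ∣ 2 := by
      have := Subgroup.card_subgroup_dvd_card f.ker
      rw [hcard, hd] at this
      exact Nat.dvd_of_mul_dvd_mul_left (by positivity) this
    rcases (Nat.dvd_prime Nat.prime_two).mp h1 with rfl | rfl
    · rw [hd, mul_one]
    · exact absurd (Subgroup.eq_top_of_card_eq _ (hd.trans hcard.symm) ▸ Subgroup.mem_top _) hneg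
  exact isCyclic_of_orderOf_eq_card ⟨u, huker⟩ (by rw [Subgroup.orderOf_mk, hord, hkercard])

theorem exists_pow_eq_of_isCyclic {F K : Type*} [Field F] [Field K] [Algebra F K]
    [FiniteDimensional F K] [IsGalois F K] {p : ℕ} (hp : p.Prime) {j₀ : ℕ}
    (hj₀ : j₀ + 2 ≤ p * j₀) {r : ℕ} {ζ : K} (hζ : IsPrimitiveRoot ζ (p ^ r))
    (hfaith : ∀ σ : Gal(K/F), σ ζ = ζ → σ = 1) {τ : Gal(K/F)}
    (hτ : ∀ σ : Gal(K/F), σ ∈ Subgroup.zpowers τ) {t : ℕ} (ht : τ ζ = ζ ^ (t + 1))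
    (hj : p ^ j₀ ∣ t) {x : F} (hx : x ≠ 0) {α : K} (hα : α ^ p ^ r = algebraMap F K x) :
    ∃ z : F, z ^ p ^ r = x := by
  have : NeZero (p ^ r) := ⟨pow_ne_zero _ hp.ne_zero⟩
  have hM : p ^ j₀ * p ^ r ≠ 0 := mul_ne_zero (pow_ne_zero _ hp.ne_zero) (pow_ne_zero _ hp.ne_zero)
  obtain ⟨j, a, ha, hja⟩ :=
    Nat.exists_eq_pow_mul_and_not_dvd (n := t + p ^ j₀ * p ^ r) (by lia) p hp.ne_one
  have hjj : j₀ ≤ j := by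
    by_contra! hlt
    have h1 : p ^ (j + 1) ∣ p ^ j * a :=
      hja ▸ (pow_dvd_pow p hlt).trans (dvd_add hj (Dvd.intro _ rfl))
    rw [pow_succ] at h1
    exact ha (Nat.dvd_of_mul_dvd_mul_left (pow_pos hp.pos _) h1)
  have hj2 : j + 2 ≤ p * j := by
    have := Nat.mul_le_mul_right (j - j₀) hp.one_le
    have h3 : p * j = p * j₀ + p * (j - j₀) := by rw [← mul_add, Nat.add_sub_cancel' hjj]
    lia
  refine exists_algebraMap_pow_eq_of_generator hζ hfaith hτ (t := t + p ^ j₀ * p ^ r + 1) ?_ ?_ hx hα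
  · rw [ht, add_right_comm, pow_add _ _ (p ^ j₀ * p ^ r), mul_comm (p ^ j₀), pow_mul ζ (p ^ r),
      hζ.pow_eq_one, one_pow, mul_one]
  · have h := exists_forall_pow_dvd_sub_of_pow_dvd_mul_geom_sum hp hj2 (a := a)
      (t := (t + p ^ j₀ * p ^ r + 1 : ℕ)) (by exact_mod_cast ha) (by rw [hja]; push_cast; ring) r
    rwa [← Nat.cast_pow] at h

theorem exists_pow_eq_of_isCyclotomicExtension {F K : Type*} [Field F] [Field K]
    [Algebra F K] [FiniteDimensional F K] [IsGalois F K] {p : ℕ} (hp : p.Prime) (r : ℕ)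
    {ζ : K} (hζ : IsPrimitiveRoot ζ (p ^ r))
    (hfaith : ∀ σ : Gal(K/F), σ ζ = ζ → σ = 1) {x : F} (hx : x ≠ 0) {α : K}
    (hα : α ^ p ^ r = algebraMap F K x) :
    (p ≠ 2 → ∃ z : F, z ^ p ^ r = x) ∧ ∃ z : F, z ^ p ^ r = x ^ 2 := by
  have : NeZero (p ^ r) := ⟨pow_ne_zero _ hp.ne_zero⟩
  rcases eq_or_ne r 0 with rfl | hr
  · exact ⟨fun _ => ⟨x, by simp⟩, x ^ 2, by simp⟩
  let φ := hζ.autToPow F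
  have hφ : Function.Injective φ := by
    rw [injective_iff_map_eq_one]
    intro σ hσ
    apply hfaith
    rw [← hζ.autToPow_spec F σ, show hζ.autToPow F σ = 1 from hσ, Units.val_one,
      ZMod.val_one_eq_one_mod, hζ.eq_orderOf, pow_mod_orderOf, pow_one]
  have hspec : ∀ σ : Gal(K/F), ∃ t : ℕ, σ ζ = ζ ^ (t + 1) ∧ (φ σ : ZMod (p ^ r)) = (t + 1 : ℕ) := by
    intro σ
    have h1 : 1 ≤ (φ σ : ZMod (p ^ r)).val + p ^ r :=
      (Nat.one_le_pow _ _ hp.pos).trans (Nat.le_add_left _ _)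
    refine ⟨(φ σ : ZMod (p ^ r)).val + p ^ r - 1, ?_, ?_⟩
    · rw [← hζ.autToPow_spec F σ, Nat.sub_add_cancel h1, pow_add, hζ.pow_eq_one, mul_one]
    · rw [Nat.sub_add_cancel h1, Nat.cast_add, ZMod.natCast_self, ZMod.natCast_zmod_val, add_zero]
  have hcomm : ∀ σ τ : Gal(K/F), Commute σ τ := fun σ τ => hφ (by
    rw [map_mul, map_mul, mul_comm])
  rcases eq_or_ne p 2 with rfl | hp2
  · refine ⟨fun h => absurd rfl h, ?_⟩
    by_cases hall : ∀ (σ : Gal(K/F)) (t : ℕ), σ ζ = ζ ^ (t + 1) → 4 ∣ t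
    · obtain rfl | ⟨n, rfl⟩ : r = 1 ∨ ∃ n, r = n + 2 := by
        rcases r with _ | _ | n
        · exact absurd rfl hr
        · exact Or.inl rfl
        · exact Or.inr ⟨n, rfl⟩
      · exact ⟨x, by rw [pow_one]⟩
      have hker : ∀ σ : Gal(K/F), φ σ ∈
          (ZMod.unitsMap (pow_dvd_pow 2 (Nat.le_add_left 2 n) : 2 ^ 2 ∣ 2 ^ (n + 2))).ker := by
        intro σ
        obtain ⟨t, ht, hφt⟩ := hspec σ
        rw [MonoidHom.mem_ker, Units.ext_iff, ZMod.unitsMap_val, hφt,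
          ZMod.cast_natCast (pow_dvd_pow 2 (Nat.le_add_left 2 n)), Nat.cast_succ,
          (ZMod.natCast_eq_zero_iff t (2 ^ 2)).mpr (hall σ t ht), zero_add, Units.val_one]
      have hcyc : IsCyclic Gal(K/F) :=
        have := ZMod.isCyclic_ker_unitsMap_four n
        isCyclic_of_injective (φ.codRestrict _ hker) fun σ τ h => hφ (congrArg Subtype.val h)
      obtain ⟨τ, hτ⟩ := hcyc.exists_generator
      obtain ⟨t, ht, -⟩ := hspec τ
      obtain ⟨z, hz⟩ := exists_pow_eq_of_isCyclic hp (j₀ := 2) le_rfl hζ hfaith hτ ht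
        (hall τ t ht) hx hα
      exact ⟨z ^ 2, by rw [← hz, pow_right_comm]⟩
    · push Not at hall
      obtain ⟨σ, t, ht, h4⟩ := hall
      have h2 : t.gcd (2 ^ r) ∣ 2 := by
        obtain ⟨k, -, hk⟩ := (Nat.dvd_prime_pow hp).mp (Nat.gcd_dvd_right t (2 ^ r))
        have hk1 : k ≤ 1 := by
          by_contra! hlt
          exact h4 ((pow_dvd_pow 2 hlt).trans (hk ▸ Nat.gcd_dvd_left t (2 ^ r)))
        rw [hk]
        exact pow_dvd_pow 2 hk1
      obtain ⟨z, hz⟩ := exists_pow_eq_pow_gcd_of_commute hζ (fun τ => hcomm τ σ) ht hx hα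
      obtain ⟨d, hd⟩ := h2
      refine ⟨z ^ d, ?_⟩
      rw [← pow_mul, mul_comm, pow_mul, hz, ← pow_mul, ← hd]
  · have hcyc : IsCyclic Gal(K/F) :=
      have := ZMod.isCyclic_units_of_prime_pow p hp hp2 r
      isCyclic_of_injective φ hφ
    obtain ⟨τ, hτ⟩ := hcyc.exists_generator
    obtain ⟨t, ht, -⟩ := hspec τ
    suffices ∃ z : F, z ^ p ^ r = x from
      ⟨fun _ => this, this.imp' (· ^ 2) fun z hz => by rw [← hz, pow_right_comm]⟩
    by_cases hpt : p ∣ t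
    · exact exists_pow_eq_of_isCyclic hp (j₀ := 1) (by have := hp.two_le; lia) hζ hfaith hτ ht
        (by simpa using hpt) hx hα
    · obtain ⟨z, hz⟩ := exists_pow_eq_pow_gcd_of_commute hζ (fun σ => hcomm σ τ) ht hx hα
      have h1 : t.gcd (p ^ r) = 1 :=
        Nat.Coprime.pow_right _ ((hp.coprime_iff_not_dvd.mpr hpt).symm)
      exact ⟨z, by rw [hz, h1, pow_one]⟩

theorem exists_pow_prime_pow_eq_or_eq_sq_of_forall_isMaximal {F : Type*} [Field F] [NumberField F]
    {p : ℕ} (hp : p.Prime) (r : ℕ) {x : 𝓞 F} (hx : x ≠ 0)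
    (hloc : ∀ P : Ideal (𝓞 F), P.IsMaximal → ∃ c, x - c ^ p ^ r ∈ P) :
    (p ≠ 2 → ∃ z : F, z ^ p ^ r = x) ∧ ∃ z : F, z ^ p ^ r = (x : F) ^ 2 := by
  have : NeZero (p ^ r) := ⟨pow_ne_zero _ hp.ne_zero⟩
  let K := CyclotomicField (p ^ r) F
  have : NumberField K := NumberField.of_module_finite F K
  have : IsGalois F K := IsCyclotomicExtension.isGalois {p ^ r} F K
  have hζ : IsPrimitiveRoot (IsCyclotomicExtension.zeta (p ^ r) F K) (p ^ r) :=
    IsCyclotomicExtension.zeta_spec (p ^ r) F K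
  obtain ⟨w, hw⟩ := exists_pow_prime_pow_eq_of_forall_isMaximal (K := K) hp r hζ.toInteger_isPrimitiveRoot
    (x := algebraMap (𝓞 F) (𝓞 K) x)
    ((map_ne_zero_iff _ (FaithfulSMul.algebraMap_injective (𝓞 F) (𝓞 K))).mpr hx) (fun P hP => by
      obtain ⟨c, hc⟩ := hloc (P.under (𝓞 F)) inferInstance
      refine ⟨algebraMap (𝓞 F) (𝓞 K) c, ?_⟩
      rw [← map_pow, ← map_sub]
      exact hc)
  refine exists_pow_eq_of_isCyclotomicExtension hp r hζ (fun σ hσ => ?_)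
    (RingOfIntegers.coe_ne_zero_iff.mpr hx) (α := (w : K)) ?_
  · have : (σ : K →ₐ[F] K) = ((1 : Gal(K/F)) : K →ₐ[F] K) :=
      (hζ.powerBasis F).algHom_ext (by simpa using hσ)
    exact AlgEquiv.ext fun y => DFunLike.congr_fun this y
  · exact congrArg (algebraMap (𝓞 K) K) hw

theorem exists_pow_mul_eq_of_coprime {F : Type*} [Field F] {x a b : F} (hx : x ≠ 0) {l m n : ℕ}
    (hmn : m.Coprime n) (ha : a ^ (l * m) = x) (hb : b ^ (l * n) = x) :
    ∃ z : F, z ^ (l * (m * n)) = x := by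
  have hcomm : ∀ (y : F) (c : ℤ) (l : ℕ), (y ^ c) ^ l = (y ^ l) ^ c := fun y c l => by
    rw [← zpow_natCast, ← zpow_natCast, ← zpow_mul, ← zpow_mul, mul_comm]
  refine ⟨b ^ m.gcdA n * a ^ m.gcdB n, ?_⟩
  rw [mul_pow, mul_left_comm l m n, pow_mul' (b ^ _), hcomm, hcomm, hb, mul_left_comm m l n,
    ← mul_assoc l m n, pow_mul (a ^ _), hcomm, hcomm, ha, ← zpow_natCast, ← zpow_natCast,
    ← zpow_mul, ← zpow_mul, ← zpow_add₀ hx, ← Nat.gcd_eq_gcd_ab, hmn.gcd_eq_one, Nat.cast_one,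
    zpow_one]

theorem exists_pow_eq_sq_of_forall_isMaximal {F : Type*} [Field F] [NumberField F] {x : 𝓞 F}
    (hx : x ≠ 0) (k : ℕ) (hk : 0 < k)
    (hloc : ∀ P : Ideal (𝓞 F), P.IsMaximal → ∃ c, x - c ^ (2 * k) ∈ P) :
    ∃ z : F, z ^ (2 * k) = (x : F) ^ 2 := by
  have hx' : (x : F) ^ 2 ≠ 0 := pow_ne_zero _ (RingOfIntegers.coe_ne_zero_iff.mpr hx)
  have hmono : ∀ {m n : ℕ}, m ∣ n → (∀ P : Ideal (𝓞 F), P.IsMaximal → ∃ c, x - c ^ n ∈ P) →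
      ∀ P : Ideal (𝓞 F), P.IsMaximal → ∃ c, x - c ^ m ∈ P := by
    rintro m _ ⟨d, rfl⟩ h P hP
    obtain ⟨c, hc⟩ := h P hP
    exact ⟨c ^ d, by rwa [← pow_mul, mul_comm]⟩
  induction k using Nat.recOnPosPrimePosCoprime with
  | zero => exact absurd hk (lt_irrefl 0)
  | one => exact ⟨x, by rw [mul_one]⟩
  | prime_pow p e hp he =>
    rcases eq_or_ne p 2 with rfl | hp2
    · rw [← pow_succ'] at hloc ⊢
      exact (exists_pow_prime_pow_eq_or_eq_sq_of_forall_isMaximal hp (e + 1) hx hloc).2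
    · obtain ⟨z, hz⟩ := (exists_pow_prime_pow_eq_or_eq_sq_of_forall_isMaximal hp e hx
        (hmono (Dvd.intro_left _ rfl) hloc)).1 hp2
      exact ⟨z, by rw [mul_comm, pow_mul, hz]⟩
  | coprime a b ha hb hab iha ihb =>
    obtain ⟨u, hu⟩ := iha (by lia) (hmono ⟨b, (mul_assoc _ _ _).symm⟩ hloc)
    obtain ⟨v, hv⟩ := ihb (by lia) (hmono ⟨a, by ring⟩ hloc)
    exact exists_pow_mul_eq_of_coprime hx' hab hu hv

theorem Valuation.map_pow_sub_pow_lt_one {R Γ₀ : Type*} [CommRing R]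
    [LinearOrderedCommGroupWithZero Γ₀] (v : Valuation R Γ₀) {a b : R} (ha : v a ≤ 1) (hb : v b ≤ 1)
    (hab : v (a - b) < 1) (m : ℕ) : v (a ^ m - b ^ m) < 1 := by
  rw [← geom_sum₂_mul, map_mul]
  refine (mul_le_of_le_one_left' (v.map_sum_le fun i _ => ?_)).trans_lt hab
  rw [map_mul, map_pow, map_pow]
  exact mul_le_one' (pow_le_one' ha _) (pow_le_one' hb _)

theorem IsDedekindDomain.HeightOneSpectrum.exists_sub_pow_mem_of_algebraMap_adicCompletion_eq_pow
    {R K : Type*} [CommRing R] [IsDedekindDomain R] [Field K] [Algebra R K] [IsFractionRing R K]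
    (v : HeightOneSpectrum R) {x : R} {m : ℕ} (hm : m ≠ 0) {y : v.adicCompletion K}
    (hy : algebraMap K (v.adicCompletion K) (algebraMap R K x) = y ^ m) :
    ∃ c : R, x - c ^ m ∈ v.asIdeal := by
  have hV : ∀ k : K, Valued.v (algebraMap K (v.adicCompletion K) k) = v.valuation K k :=
    fun k => v.valuedAdicCompletion_eq_valuation' k
  have hy1 : Valued.v y ≤ 1 := by
    rw [← pow_le_one_iff hm, ← map_pow, ← hy, hV]
    exact v.valuation_le_one x
  have hnhds : {z : v.adicCompletion K | Valued.v (z - y) < 1} ∈ nhds y := by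
    rw [Valued.mem_nhds]
    refine ⟨1, fun z hz => ?_⟩
    rwa [Set.mem_ofPred_eq, Units.val_one, Valuation.restrict_lt_one_iff] at hz
  obtain ⟨a, ha : Valued.v (algebraMap K (v.adicCompletion K) a - y) < 1⟩ :=
    (v.denseRange_algebraMap K).mem_nhds hnhds
  have ha1 : v.valuation K a ≤ 1 := by
    rw [← hV, ← sub_add_cancel (algebraMap K (v.adicCompletion K) a) y]
    exact Valuation.map_add_le _ ha.le hy1
  obtain ⟨c, hc⟩ := v.exists_valuation_sub_lt_of_integer ha1 1
  rw [Units.val_one, ← hV, map_sub] at hc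
  have hcy : Valued.v (algebraMap K (v.adicCompletion K) (algebraMap R K c) - y) < 1 := by
    rw [← sub_add_sub_cancel _ (algebraMap K (v.adicCompletion K) a)]
    exact Valuation.map_add_lt _ hc ha
  refine ⟨c, ?_⟩
  have h := Valued.v.map_pow_sub_pow_lt_one
    (by rw [hV]; exact v.valuation_le_one c) hy1 hcy m
  rw [← hy, ← map_pow, ← map_pow, ← map_sub, ← map_sub, hV, valuation_lt_one_iff_mem] at h
  rw [← neg_sub]
  exact v.asIdeal.neg_mem h

theorem exists_pow_eq_sq_of_forall_adicCompletion {F : Type*} [Field F] [NumberField F] {k : ℕ}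
    (hk : 0 < k) {x : F} (hx : x ≠ 0)
    (hloc : ∀ v : HeightOneSpectrum (𝓞 F),
      ∃ y : v.adicCompletion F, algebraMap F (v.adicCompletion F) x = y ^ (2 * k)) :
    ∃ z : F, z ^ (2 * k) = x ^ 2 := by
  obtain ⟨n, d, hd, rfl⟩ := IsFractionRing.div_surjective (A := 𝓞 F) x
  have hd0 : algebraMap (𝓞 F) F d ≠ 0 := by
    simpa using nonZeroDivisors.ne_zero hd
  have hn0 : n ≠ 0 := by
    rintro rfl
    simp at hx
  have h2k : 2 * k ≠ 0 := by lia
  have hxd : algebraMap (𝓞 F) F (n * d ^ (2 * k - 1)) =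
      algebraMap (𝓞 F) F n / algebraMap (𝓞 F) F d * algebraMap (𝓞 F) F d ^ (2 * k) := by
    rw [map_mul, map_pow, div_mul_eq_mul_div, eq_div_iff hd0, mul_assoc, pow_sub_one_mul h2k]
  obtain ⟨z, hz⟩ : ∃ z : F, z ^ (2 * k) = algebraMap (𝓞 F) F (n * d ^ (2 * k - 1)) ^ 2 :=
    exists_pow_eq_sq_of_forall_isMaximal (x := n * d ^ (2 * k - 1))
    (mul_ne_zero hn0 (pow_ne_zero _ (nonZeroDivisors.ne_zero hd))) k hk fun P hP => by
      let v : HeightOneSpectrum (𝓞 F) := ⟨P, hP.isPrime,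
        Ring.ne_bot_of_isMaximal_of_not_isField hP (RingOfIntegers.not_isField F)⟩
      obtain ⟨y, hy⟩ := hloc v
      refine v.exists_sub_pow_mem_of_algebraMap_adicCompletion_eq_pow (K := F) h2k
        (y := y * algebraMap F (v.adicCompletion F) (algebraMap (𝓞 F) F d)) ?_
      rw [hxd, map_mul, hy, map_pow, mul_pow]
  refine ⟨z / algebraMap (𝓞 F) F d ^ 2, ?_⟩
  rw [div_pow, hz, hxd, mul_pow, ← pow_mul, ← pow_mul, mul_comm 2 (2 * k),
    mul_div_cancel_right₀ _ (pow_ne_zero _ hd0)]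

/-- Let `F` be a number field and `k` a positive integer.  If `x ∈ F^×` is a
`2k`-th power in the completion `F_𝔭` at every finite place `𝔭` of `F`, then `x²` is a
`2k`-th power in `F^×`; consequently there is `y ∈ F^×` with `x = y^k` or `x = −y^k`. -/
theorem square_is_two_k_power_of_locally_two_k_power
    (F : Type*) [Field F] [NumberField F] (k : ℕ) (hk : 0 < k)
    (x : F) (hx : x ≠ 0)
    (hloc : ∀ v : HeightOneSpectrum (𝓞 F),
      ∃ y : v.adicCompletion F, algebraMap F (v.adicCompletion F) x = y ^ (2 * k)) :
    (∃ z : F, z ≠ 0 ∧ x ^ 2 = z ^ (2 * k)) ∧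
      ∃ y : F, y ≠ 0 ∧ (x = y ^ k ∨ x = -y ^ k) := by
  obtain ⟨z, hz⟩ := exists_pow_eq_sq_of_forall_adicCompletion hk hx hloc
  have hz0 : z ≠ 0 := by
    rintro rfl
    rw [zero_pow (by lia)] at hz
    exact pow_ne_zero 2 hx hz.symm
  refine ⟨⟨z, hz0, hz.symm⟩, z, hz0, ?_⟩
  rw [← sq_eq_sq_iff_eq_or_eq_neg, ← hz, ← pow_mul, mul_comm]
end

section
/- Let F be a number field and write k = 2^s·k₁ with k₁ odd. If a primitive 2^{s+1}-th root of unity lies in F_𝔭 for every finite place 𝔭 of F, then a primitive 2^{s+1}-th root of unity lies in F, and consequently −1 ∈ (F^×)^k. -/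
open IsDedekindDomain NumberField

open Filter (Tendsto atTop tendsto_id)
open Topology UniqueFactorizationMonoid Ideal nonZeroDivisors

theorem NumberField.exists_pos_tendsto_card_absNorm_le_div
    (K : Type*) [Field K] [NumberField K] :
    ∃ c : ℝ, 0 < c ∧ Tendsto (fun x : ℝ ↦
      (Nat.card {I : (Ideal (𝓞 K))⁰ // absNorm (I : Ideal (𝓞 K)) ≤ x} : ℝ) / x) atTop (𝓝 c) :=
  ⟨_, dedekindZeta_residue_pos K, Ideal.tendsto_norm_le_div_atTop₀ K⟩

theorem NumberField.finite_nonZeroDivisors_absNorm_le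
    (K : Type*) [Field K] [NumberField K] (x : ℝ) :
    {I : (Ideal (𝓞 K))⁰ | (absNorm (I : Ideal (𝓞 K)) : ℝ) ≤ x}.Finite :=
  (Ideal.finite_setOfPred_absNorm_le₀ ⌊x⌋₊).subset fun _ hI ↦ Nat.le_floor hI

theorem NumberField.absNorm_pos_of_nonZeroDivisors {K : Type*} [Field K] [NumberField K]
    (I : (Ideal (𝓞 K))⁰) : (0 : ℝ) < absNorm (I : Ideal (𝓞 K)) := by
  exact_mod_cast Nat.pos_of_ne_zero (absNorm_ne_zero_of_nonZeroDivisors I)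

theorem NumberField.not_summable_inv_absNorm (K : Type*) [Field K] [NumberField K] :
    ¬ Summable fun I : (Ideal (𝓞 K))⁰ ↦ (absNorm (I : Ideal (𝓞 K)) : ℝ)⁻¹ := by
  classical
  intro h
  obtain ⟨c, hc, hlim⟩ := exists_pos_tendsto_card_absNorm_le_div K
  obtain ⟨T, hT⟩ := summable_iff_vanishing_norm.mp h (c / 2) (by positivity)
  have hlim' : Tendsto (fun x : ℝ ↦ ((Nat.card {I : (Ideal (𝓞 K))⁰ //
      absNorm (I : Ideal (𝓞 K)) ≤ x} : ℝ) - T.card) / x) atTop (𝓝 c) := by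
    simpa [sub_div] using hlim.sub (tendsto_const_nhds (x := (T.card : ℝ)).div_atTop tendsto_id)
  obtain ⟨x, hx, hx0⟩ :=
    ((hlim'.eventually_const_lt (half_lt_self hc)).and (Filter.eventually_gt_atTop 0)).exists
  have hfin := finite_nonZeroDivisors_absNorm_le K x
  have hlt := hT (hfin.toFinset \ T) Finset.sdiff_disjoint
  refine absurd (hx.trans_le ?_) (not_lt.mpr ((le_abs_self _).trans hlt.le))
  have hcard : (Nat.card {I : (Ideal (𝓞 K))⁰ // absNorm (I : Ideal (𝓞 K)) ≤ x} : ℝ) =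
      hfin.toFinset.card := by
    exact_mod_cast Nat.card_eq_card_finite_toFinset hfin
  calc _ ≤ ((hfin.toFinset \ T).card : ℝ) / x := by
        rw [hcard]
        gcongr
        rw [sub_le_iff_le_add]
        exact_mod_cast Nat.sub_le_iff_le_add.mp (Finset.le_card_sdiff T hfin.toFinset)
    _ = ∑ I ∈ hfin.toFinset \ T, x⁻¹ := by simp [div_eq_mul_inv]
    _ ≤ _ := by
        refine Finset.sum_le_sum fun I hI ↦ ?_
        have : (absNorm (I : Ideal (𝓞 K)) : ℝ) ≤ x := by
          simpa using (Finset.mem_sdiff.mp hI).1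
        have := absNorm_pos_of_nonZeroDivisors I
        gcongr

/-- The ideals of norm at most `x` are `O(x)` in number, so an injection that multiplies norms
bounds the sum of the inverse norms. -/
theorem NumberField.summable_inv_absNorm_of_injective {F L : Type*} [Field F] [NumberField F]
    [Field L] [NumberField L] (T : Set (Ideal (𝓞 F))⁰)
    (Φ : (Ideal (𝓞 F))⁰ × T → (Ideal (𝓞 L))⁰) (hΦ : Function.Injective Φ)
    (hN : ∀ I J, absNorm (Φ (I, J) : Ideal (𝓞 L)) =
      absNorm (I : Ideal (𝓞 F)) * absNorm (J : Ideal (𝓞 F))) :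
    Summable fun J : T ↦ (absNorm (J : Ideal (𝓞 F)) : ℝ)⁻¹ := by
  classical
  obtain ⟨c, hc, hF⟩ := exists_pos_tendsto_card_absNorm_le_div F
  obtain ⟨d, -, hL⟩ := exists_pos_tendsto_card_absNorm_le_div L
  refine summable_of_sum_le (c := d / c) (fun _ ↦ by positivity) fun U ↦ ?_
  rw [le_div_iff₀ hc, Finset.sum_mul]
  have key (J : T) : Tendsto (fun x : ℝ ↦ (Nat.card {I : (Ideal (𝓞 F))⁰ //
      absNorm (I : Ideal (𝓞 F)) ≤ x / absNorm (J : Ideal (𝓞 F))} : ℝ) / x) atTop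
      (𝓝 ((absNorm (J : Ideal (𝓞 F)) : ℝ)⁻¹ * c)) := by
    have hJ := absNorm_pos_of_nonZeroDivisors J.1
    refine ((hF.comp (tendsto_id.atTop_div_const hJ)).const_mul _).congr fun x ↦ ?_
    simp only [Function.comp_apply, id]
    field_simp
  refine le_of_tendsto_of_tendsto (tendsto_finsetSum U fun J _ ↦ key J) hL ?_
  filter_upwards [Filter.eventually_gt_atTop 0] with x hx
  rw [← Finset.sum_div]
  gcongr
  have hfinF (J : T) :
      Finite {I : (Ideal (𝓞 F))⁰ // absNorm (I : Ideal (𝓞 F)) ≤ x / absNorm (J : Ideal (𝓞 F))} :=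
    finite_nonZeroDivisors_absNorm_le F _
  have hfinL : Finite {I : (Ideal (𝓞 L))⁰ // absNorm (I : Ideal (𝓞 L)) ≤ x} :=
    finite_nonZeroDivisors_absNorm_le L x
  rw [← Finset.sum_coe_sort]
  norm_cast
  rw [← Nat.card_sigma]
  refine Nat.card_le_card_of_injective (fun p ↦ ⟨Φ (p.2.1, p.1.1), ?_⟩) ?_
  · rw [hN, Nat.cast_mul]
    exact (le_div_iff₀ (absNorm_pos_of_nonZeroDivisors p.1.1.1)).mp p.2.2
  · rintro ⟨⟨J, hJ⟩, I, hI⟩ ⟨⟨J', hJ'⟩, I', hI'⟩ h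
    obtain ⟨rfl, rfl⟩ := Prod.mk.inj (hΦ (Subtype.mk.inj h))
    rfl

/-- Removing the multiples of finitely many primes keeps the sum of inverse norms divergent. -/
theorem NumberField.not_summable_inv_absNorm_of_forall_not_dvd (K : Type*) [Field K]
    [NumberField K] (S : Finset (Ideal (𝓞 K))) (hS : ∀ p ∈ S, Prime p) :
    ¬ Summable fun J : {J : (Ideal (𝓞 K))⁰ | ∀ p ∈ S, ¬ p ∣ (J : Ideal (𝓞 K))} ↦
      (absNorm (J : Ideal (𝓞 K)) : ℝ)⁻¹ := by
  classical
  induction S using Finset.induction_on with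
  | empty =>
    intro h
    obtain ⟨i, hi⟩ : ∃ i : (Ideal (𝓞 K))⁰ → {J : (Ideal (𝓞 K))⁰ |
        ∀ p ∈ (∅ : Finset (Ideal (𝓞 K))), ¬ p ∣ (J : Ideal (𝓞 K))}, ∀ I, (i I).1 = I :=
      ⟨fun I ↦ ⟨I, fun p hp ↦ absurd hp (Finset.notMem_empty p)⟩, fun _ ↦ rfl⟩
    refine not_summable_inv_absNorm K
      ((h.comp_injective (i := i) fun I J hIJ ↦ ?_).congr fun I ↦ ?_)
    · rw [← hi I, hIJ, hi J]
    · simp [hi]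
  | insert p S hp ih =>
    intro h
    refine ih (fun q hq ↦ hS q (Finset.mem_insert_of_mem hq)) ?_
    have hpp := hS p (Finset.mem_insert_self p S)
    have hp1 : 1 < absNorm p := by
      have h0 : absNorm p ≠ 0 := by simpa [absNorm_eq_zero_iff] using hpp.ne_zero
      have h1 : absNorm p ≠ 1 := by simpa [absNorm_eq_one_iff, Ideal.isUnit_iff] using hpp.not_isUnit
      lia
    have hgeom : Summable fun k : ℕ ↦ ((absNorm p : ℝ)⁻¹) ^ k :=
      summable_geometric_of_lt_one (by positivity)
        (inv_lt_one_of_one_lt₀ (by exact_mod_cast hp1))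
    have hprod := hgeom.mul_of_nonneg h (fun _ ↦ by positivity) (fun _ ↦ by positivity)
    have hex (I : {J : (Ideal (𝓞 K))⁰ | ∀ q ∈ S, ¬ q ∣ (J : Ideal (𝓞 K))}) :
        ∃ kJ : ℕ × {J : (Ideal (𝓞 K))⁰ | ∀ q ∈ insert p S, ¬ q ∣ (J : Ideal (𝓞 K))},
          (I : Ideal (𝓞 K)) = p ^ kJ.1 * kJ.2 := by
      have hI0 : (I : Ideal (𝓞 K)) ≠ 0 := nonZeroDivisors.coe_ne_zero I.1
      obtain ⟨J, hJ, hpJ⟩ :=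
        (FiniteMultiplicity.of_not_isUnit hpp.not_isUnit hI0).exists_eq_pow_mul_and_not_dvd
      have hJ0 : J ≠ 0 := by
        rintro rfl
        exact hpJ (dvd_zero p)
      refine ⟨(_, ⟨⟨J, mem_nonZeroDivisors_of_ne_zero hJ0⟩, ?_⟩), hJ⟩
      intro q hq
      rcases Finset.mem_insert.mp hq with rfl | hq
      · exact hpJ
      · exact fun hqJ ↦ I.2 q hq (hJ ▸ hqJ.mul_left _)
    choose f hf using hex
    refine (hprod.comp_injective (i := f) fun I J hIJ ↦ ?_).congr fun I ↦ ?_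
    · exact Subtype.ext (Subtype.ext (by rw [hf I, hf J, hIJ]))
    · simp [hf I, mul_comm]

theorem IsDedekindDomain.HeightOneSpectrum.exists_valued_sub_algebraMap_lt_one
    {R K : Type*} [CommRing R] [IsDedekindDomain R] [Field K] [Algebra R K] [IsFractionRing R K]
    (v : HeightOneSpectrum R) {x : v.adicCompletion K} (hx : Valued.v x ≤ 1) :
    ∃ r : R, Valued.v (x - algebraMap K (v.adicCompletion K) (algebraMap R K r)) < 1 := by
  obtain ⟨_, hk, k, rfl⟩ := (denseRange_algebraMap (K := K) v).inter_open_nonempty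
    {y | Valued.v (y - x) < 1} (by
      simpa [Set.preimage, Valuation.restrict_lt_one_iff] using
        (Valued.isOpen_ball (v.adicCompletion K) 1).preimage
          (continuous_id.sub continuous_const : Continuous fun y ↦ y - x)) ⟨x, by simp⟩
  replace hk : Valued.v (algebraMap K (v.adicCompletion K) k - x) < 1 := hk
  have hk1 : v.valuation K k ≤ 1 := by
    rw [← valuedAdicCompletion_eq_valuation' v k]
    have := Valued.v.map_add_le hk.le hx
    rwa [sub_add_cancel] at this
  obtain ⟨r, hr⟩ := exists_valuation_sub_lt_of_integer v hk1 1
  refine ⟨r, ?_⟩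
  rw [← valuedAdicCompletion_eq_valuation' v] at hr
  replace hr : Valued.v (algebraMap K (v.adicCompletion K) (algebraMap R K r - k)) < 1 := hr
  have := Valued.v.map_add_lt hk hr
  rw [map_sub, add_comm, sub_add_sub_cancel, Valuation.map_sub_swap] at this
  exact this

/-- An embedding of `L` over `F` into the completion `F_v` gives a prime of `L` of degree one
above `v`. -/
theorem NumberField.exists_prime_of_algHom_adicCompletion {F L : Type*} [Field F] [NumberField F]
    [Field L] [NumberField L] [Algebra F L] (v : HeightOneSpectrum (𝓞 F))
    (j : L →ₐ[F] v.adicCompletion F) :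
    ∃ P : Ideal (𝓞 L), P.IsPrime ∧ (∀ x : 𝓞 L, x ∈ P ↔ Valued.v (j x) < 1) ∧
      P.comap (algebraMap (𝓞 F) (𝓞 L)) = v.asIdeal ∧ absNorm P = absNorm v.asIdeal ∧
      ∀ x : 𝓞 L, ∃ y : 𝓞 F, x - algebraMap (𝓞 F) (𝓞 L) y ∈ P := by
  have hint (x : 𝓞 L) : j x ∈ v.adicCompletionIntegers F := by
    have hx : IsIntegral (𝓞 F) (j x) :=
      (x.isIntegral_coe.tower_top).map (j.restrictScalars (𝓞 F))
    have : IsScalarTower (𝓞 F) (v.adicCompletionIntegers F) (v.adicCompletion F) :=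
      .of_algebraMap_eq fun _ ↦ rfl
    exact (HeightOneSpectrum.adicCompletionIntegers.integers F v).mem_of_integral hx.tower_top
  let g : 𝓞 L →+* v.adicCompletionIntegers F :=
    (j.toRingHom.comp (algebraMap (𝓞 L) L)).codRestrict (v.adicCompletionIntegers F).toSubring hint
  let P := (IsLocalRing.maximalIdeal (v.adicCompletionIntegers F)).comap g
  have hmem (x : 𝓞 L) : x ∈ P ↔ Valued.v (j x) < 1 := by
    exact Valuation.mem_maximalIdeal_iff _ _
  have hcomap : P.comap (algebraMap (𝓞 F) (𝓞 L)) = v.asIdeal := by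
    ext x
    rw [Ideal.mem_comap, hmem, ← v.valuation_lt_one_iff_mem (K := F),
      ← v.valuedAdicCompletion_eq_valuation']
    exact iff_of_eq (congrArg (fun z ↦ Valued.v z < 1) (j.commutes _))
  have hres (x : 𝓞 L) : ∃ y : 𝓞 F, x - algebraMap (𝓞 F) (𝓞 L) y ∈ P := by
    obtain ⟨y, hy⟩ := v.exists_valued_sub_algebraMap_lt_one (hint x)
    refine ⟨y, (hmem _).mpr ?_⟩
    have hj : j (x - algebraMap (𝓞 F) (𝓞 L) y : 𝓞 L) =
        j x - algebraMap F (v.adicCompletion F) (algebraMap (𝓞 F) F y) :=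
      (map_sub j (x : L) _).trans (congrArg (j x - ·) (j.commutes _))
    rwa [hj]
  refine ⟨P, inferInstance, hmem, hcomap, ?_, hres⟩
  let q := quotientMap P (algebraMap (𝓞 F) (𝓞 L)) hcomap.ge
  have hq : Function.Bijective q := by
    refine ⟨quotientMap_injective' hcomap.le, fun z ↦ ?_⟩
    obtain ⟨x, rfl⟩ := Ideal.Quotient.mk_surjective z
    obtain ⟨y, hy⟩ := hres x
    exact ⟨Ideal.Quotient.mk _ y, by
      rw [quotientMap_mk, eq_comm, Ideal.Quotient.eq]; exact hy⟩
  simp only [absNorm_apply, Submodule.cardQuot_apply]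
  exact (Nat.card_congr (Equiv.ofBijective q hq)).symm

/-- `Q` picks, above each nonzero prime `p` of `F`, a prime of `L` with the same norm as `p`. -/
abbrev NumberField.IsDegreeOneLift {F L : Type*} [Field F] [NumberField F] [Field L]
    [NumberField L] [Algebra F L] (Q : Ideal (𝓞 F) → Ideal (𝓞 L)) : Prop :=
  ∀ p, Prime p → Prime (Q p) ∧ (Q p).comap (algebraMap (𝓞 F) (𝓞 L)) = p ∧
    absNorm (Q p) = absNorm p

/-- Two choices of a degree one prime above each prime of `F` agree at some prime outside any
given finite set. -/
theorem NumberField.exists_isDegreeOneLift_eq {F L : Type*} [Field F] [NumberField F]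
    [Field L] [NumberField L] [Algebra F L] (S : Finset (Ideal (𝓞 F))) (hS : ∀ p ∈ S, Prime p)
    (P P' : Ideal (𝓞 F) → Ideal (𝓞 L))
    (hP : IsDegreeOneLift P)
    (hP' : IsDegreeOneLift P') :
    ∃ p, Prime p ∧ p ∉ S ∧ P p = P' p := by
  classical
  by_contra! hne
  let φ (Q : Ideal (𝓞 F) → Ideal (𝓞 L)) (I : Ideal (𝓞 F)) : Ideal (𝓞 L) :=
    ((normalizedFactors I).map Q).prod
  let T : Set (Ideal (𝓞 F))⁰ := {J | ∀ p ∈ S, ¬ p ∣ (J : Ideal (𝓞 F))}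
  have hprime {Q : Ideal (𝓞 F) → Ideal (𝓞 L)} (hQ : IsDegreeOneLift Q)
      (I : Ideal (𝓞 F)) :
      ∀ q ∈ (normalizedFactors I).map Q, Prime q := by
    intro q hq
    obtain ⟨p, hp, rfl⟩ := Multiset.mem_map.mp hq
    exact (hQ p (prime_of_normalized_factor p hp)).1
  have hcomap {Q : Ideal (𝓞 F) → Ideal (𝓞 L)} (hQ : IsDegreeOneLift Q)
      (I : Ideal (𝓞 F)) :
      ((normalizedFactors I).map Q).map (comap (algebraMap (𝓞 F) (𝓞 L))) =
        normalizedFactors I := by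
    rw [Multiset.map_map]
    exact (Multiset.map_congr rfl fun p hp ↦
      (hQ p (prime_of_normalized_factor p hp)).2.1).trans (Multiset.map_id _)
  have hφ0 {Q : Ideal (𝓞 F) → Ideal (𝓞 L)} (hQ : IsDegreeOneLift Q)
      (I : Ideal (𝓞 F)) :
      φ Q I ≠ 0 := Multiset.prod_ne_zero_of_prime _ (hprime hQ I)
  have hnorm {Q : Ideal (𝓞 F) → Ideal (𝓞 L)} (hQ : IsDegreeOneLift Q)
      {I : Ideal (𝓞 F)} (hI : I ≠ 0) : absNorm (φ Q I) = absNorm I := by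
    conv_rhs => rw [← Ideal.prod_normalizedFactors_eq_self hI]
    rw [map_multiset_prod, map_multiset_prod, Multiset.map_map]
    exact congrArg _ (Multiset.map_congr rfl fun p hp ↦
      (hQ p (prime_of_normalized_factor p hp)).2.2)
  have hfac {Q : Ideal (𝓞 F) → Ideal (𝓞 L)} (hQ : IsDegreeOneLift Q)
      (I : Ideal (𝓞 F)) :
      normalizedFactors (φ Q I) = (normalizedFactors I).map Q :=
    normalizedFactors_prod_of_prime (hprime hQ I)
  let R : Ideal (𝓞 L) → Prop := fun q ↦ ∃ p, Prime p ∧ P p = q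
  have hR (I : Ideal (𝓞 F)) (J : T) :
      ((normalizedFactors I).map P + (normalizedFactors (J : Ideal (𝓞 F))).map P').filter R =
        (normalizedFactors I).map P := by
    rw [Multiset.filter_add, Multiset.filter_eq_self.mpr, Multiset.filter_eq_nil.mpr, add_zero]
    · rintro _ hq ⟨p, hp, rfl⟩
      obtain ⟨p', hp', h⟩ := Multiset.mem_map.mp hq
      have hpp := prime_of_normalized_factor p' hp'
      obtain rfl : p' = p := by rw [← (hP' p' hpp).2.1, h, (hP p hp).2.1]
      exact hne p' hp (fun hpS ↦ J.2 p' hpS (dvd_of_mem_normalizedFactors hp')) h.symm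
    · intro q hq
      obtain ⟨p, hp, rfl⟩ := Multiset.mem_map.mp hq
      exact ⟨p, prime_of_normalized_factor p hp, rfl⟩
  refine not_summable_inv_absNorm_of_forall_not_dvd F S hS
    (summable_inv_absNorm_of_injective T (fun IJ ↦ ⟨φ P IJ.1 * φ P' IJ.2.1,
      mem_nonZeroDivisors_of_ne_zero (mul_ne_zero (hφ0 hP _) (hφ0 hP' _))⟩) ?_ ?_)
  · rintro ⟨I, J⟩ ⟨I', J'⟩ h
    replace h : φ P I * φ P' J.1 = φ P I' * φ P' J'.1 := congrArg Subtype.val h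
    replace h := congrArg normalizedFactors h
    rw [normalizedFactors_mul (hφ0 hP _) (hφ0 hP' _),
      normalizedFactors_mul (hφ0 hP _) (hφ0 hP' _), hfac hP, hfac hP, hfac hP', hfac hP'] at h
    have h1 := congrArg (Multiset.filter R) h
    rw [hR, hR] at h1
    rw [h1, add_right_inj] at h
    replace h := congrArg (Multiset.map (comap (algebraMap (𝓞 F) (𝓞 L)))) h
    replace h1 := congrArg (Multiset.map (comap (algebraMap (𝓞 F) (𝓞 L)))) h1
    rw [hcomap hP', hcomap hP'] at h
    rw [hcomap hP, hcomap hP] at h1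
    have inj {I I' : (Ideal (𝓞 F))⁰}
        (h : normalizedFactors (I : Ideal (𝓞 F)) = normalizedFactors (I' : Ideal (𝓞 F))) :
        I = I' := by
      refine Subtype.ext ?_
      rw [← Ideal.prod_normalizedFactors_eq_self (nonZeroDivisors.coe_ne_zero I), h,
        Ideal.prod_normalizedFactors_eq_self (nonZeroDivisors.coe_ne_zero I')]
    exact Prod.ext (inj h1) (Subtype.ext (inj h))
  · intro I J
    rw [map_mul, hnorm hP (nonZeroDivisors.coe_ne_zero I),
      hnorm hP' (nonZeroDivisors.coe_ne_zero J.1)]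

/-- An extension of number fields that embeds into every finite completion of the base field
has no nontrivial automorphism. -/
theorem NumberField.algEquiv_eq_of_forall_algHom_adicCompletion {F L : Type*} [Field F]
    [NumberField F] [Field L] [NumberField L] [Algebra F L]
    (j : ∀ v : HeightOneSpectrum (𝓞 F), L →ₐ[F] v.adicCompletion F) (σ : L ≃ₐ[F] L)
    (θ : 𝓞 L) : σ θ = θ := by
  classical
  by_contra hθ
  let θ' : 𝓞 L := RingOfIntegers.mapRingEquiv σ.toRingEquiv θ
  have hδ : θ' - θ ≠ 0 := fun h ↦ hθ (congrArg (algebraMap (𝓞 L) L) (sub_eq_zero.mp h))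
  let S : Finset (Ideal (𝓞 F)) := ((normalizedFactors (span {θ' - θ})).toFinset.image
    (comap (algebraMap (𝓞 F) (𝓞 L)))).filter Prime
  have hex (p : Ideal (𝓞 F)) : ∃ P P' : Ideal (𝓞 L), Prime p →
      (Prime P ∧ P.comap (algebraMap (𝓞 F) (𝓞 L)) = p ∧ absNorm P = absNorm p) ∧
      (Prime P' ∧ P'.comap (algebraMap (𝓞 F) (𝓞 L)) = p ∧ absNorm P' = absNorm p) ∧
      (p ∉ S → P ≠ P') := by
    by_cases hp : Prime p
    swap
    · exact ⟨⊥, ⊥, fun h ↦ absurd h hp⟩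
    let v : HeightOneSpectrum (𝓞 F) := ⟨p, isPrime_of_prime hp, hp.ne_zero⟩
    obtain ⟨P, hP, hPmem, hPp, hPN, hPres⟩ := exists_prime_of_algHom_adicCompletion v (j v)
    obtain ⟨P', hP', hPmem', hPp', hPN', -⟩ :=
      exists_prime_of_algHom_adicCompletion v ((j v).comp σ.toAlgHom)
    have prime {Q : Ideal (𝓞 L)} (hQ : Q.IsPrime) (hN : absNorm Q = absNorm p) : Prime Q := by
      refine prime_of_isPrime (fun h ↦ hp.ne_zero ?_) hQ
      rwa [h, absNorm_bot, eq_comm, absNorm_eq_zero_iff] at hN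
    refine ⟨P, P', fun _ ↦ ⟨⟨prime hP hPN, hPp, hPN⟩, ⟨prime hP' hPN', hPp', hPN'⟩, ?_⟩⟩
    rintro hpS rfl
    obtain ⟨y, hy⟩ := hPres θ
    have h : θ' - algebraMap (𝓞 F) (𝓞 L) y ∈ P := by
      have hσ : ((j v).comp σ.toAlgHom) (θ - algebraMap (𝓞 F) (𝓞 L) y : 𝓞 L) =
          j v (θ' - algebraMap (𝓞 F) (𝓞 L) y : 𝓞 L) :=
        congrArg (j v) ((map_sub σ (θ : L) _).trans (congrArg (σ θ - ·) (σ.commutes _)))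
      rw [hPmem, ← hσ]
      exact (hPmem' _).mp hy
    have hδP : θ' - θ ∈ P := by simpa using P.sub_mem h hy
    refine hpS (Finset.mem_filter.mpr ⟨Finset.mem_image.mpr ⟨P, ?_, hPp⟩, hp⟩)
    rw [Multiset.mem_toFinset, mem_normalizedFactors_iff (by simpa using hδ)]
    exact ⟨prime hP hPN, Ideal.dvd_span_singleton.mpr hδP⟩
  choose P P' h using hex
  obtain ⟨p, hp, hpS, heq⟩ := exists_isDegreeOneLift_eq S
    (fun p hp ↦ (Finset.mem_filter.mp hp).2) P P' (fun p hp ↦ (h p hp).1)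
    (fun p hp ↦ (h p hp).2.1)
  exact (h p hp).2.2 hpS heq

theorem NumberField.exists_isPrimitiveRoot_of_forall_adicCompletion (F : Type*) [Field F]
    [NumberField F] (n : ℕ) [NeZero n]
    (hloc : ∀ v : HeightOneSpectrum (𝓞 F), ∃ ζ : v.adicCompletion F, IsPrimitiveRoot ζ n) :
    ∃ ζ : F, IsPrimitiveRoot ζ n := by
  let L := CyclotomicField n F
  have hζ : IsPrimitiveRoot (IsCyclotomicExtension.zeta n F L) n :=
    IsCyclotomicExtension.zeta_spec n F L
  have : IsGalois F L := IsCyclotomicExtension.isGalois {n} F L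
  have := IsCyclotomicExtension.isSplittingField_X_pow_sub_one n F L
  have j (v : HeightOneSpectrum (𝓞 F)) : L →ₐ[F] v.adicCompletion F := by
    refine Polynomial.IsSplittingField.lift L (Polynomial.X ^ n - 1) ?_
    simpa using Polynomial.X_pow_sub_one_splits (hloc v).choose_spec
  obtain ⟨ζ, h⟩ := IntermediateField.mem_bot.mp
    ((IsGalois.mem_bot_iff_fixed (F := F) (IsCyclotomicExtension.zeta n F L)).mpr fun σ ↦
      algEquiv_eq_of_forall_algHom_adicCompletion j σ hζ.toInteger)
  exact ⟨ζ, (h ▸ hζ).of_map_of_injective (algebraMap F L).injective⟩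

/-- Let `F` be a number field and `k = 2^s · k₁` with `k₁` odd.  If a primitive
`2^(s+1)`-th root of unity lies in the completion `F_𝔭` for every finite place `𝔭` of `F`,
then a primitive `2^(s+1)`-th root of unity lies in `F`, and consequently `−1 ∈ (F^×)^k`. -/
theorem primitive_root_descends_and_neg_one_is_kth_power
    (F : Type*) [Field F] [NumberField F] (k s k₁ : ℕ) (hk : k = 2 ^ s * k₁)
    (hk₁ : Odd k₁)
    (hloc : ∀ v : HeightOneSpectrum (𝓞 F),
      ∃ ζ : v.adicCompletion F, IsPrimitiveRoot ζ (2 ^ (s + 1))) :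
    (∃ ζ : F, IsPrimitiveRoot ζ (2 ^ (s + 1))) ∧ ∃ y : F, (-1 : F) = y ^ k := by
  obtain ⟨ζ, hζ⟩ := exists_isPrimitiveRoot_of_forall_adicCompletion F (2 ^ (s + 1)) hloc
  refine ⟨⟨ζ, hζ⟩, ζ, ?_⟩
  have h : ζ ^ 2 ^ s = -1 :=
    (hζ.pow (by positivity) (pow_succ 2 s)).eq_neg_one_of_two_right
  rw [hk, pow_mul, h, hk₁.neg_one_pow]
end

section
/- Let F be a number field, d ≥ 1, and T = 𝔾_m^d over F. For any positive integer k, every element of T(F) that lies in [2k]T(F_𝔭) for all finite places 𝔭 of F (with no condition at infinite places) lies in [k]T(F). Equivalently: if x₁, …, x_d ∈ F^× are 2k-th powers in F_𝔭^× for all finite 𝔭, then each x_i is a k-th power in F^×. -/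
open IsDedekindDomain NumberField

section
open Filter Topology UniqueFactorizationMonoid ENNReal

/-- The nonzero ideals of `R` with no divisor in `T`. -/
def idealsPrimeTo {R : Type*} [CommRing R] (T : Set (Ideal R)) : Set (Ideal R) :=
  {I | I ≠ ⊥ ∧ ∀ v ∈ T, ¬ v ∣ I}

/-- The Dedekind zeta series restricted to the ideals with no divisor in `T`, valued in
`ℝ≥0∞`. -/
noncomputable def partialZeta {K : Type*} [Field K] [NumberField K] (T : Set (Ideal (𝓞 K)))
    (s : ℝ) : ℝ≥0∞ :=
  ∑' I : idealsPrimeTo T, (Ideal.absNorm (I : Ideal (𝓞 K)) : ℝ≥0∞) ^ (-s)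

section
variable {K : Type*} [Field K] [NumberField K]

theorem partialZeta_le_two_mul (T : Set (Ideal (𝓞 K))) {s : ℝ} (hs : 1 < s)
    (v : Ideal (𝓞 K)) (hv : v.IsPrime) (hv0 : v ≠ ⊥) (hfin : partialZeta T s ≠ ∞) :
    partialZeta T s ≤ 2 * partialZeta (insert v T) s := by
  have hsub : idealsPrimeTo T ⊆
      idealsPrimeTo (insert v T) ∪ (fun J => v * J) '' idealsPrimeTo T := by
    intro I hI
    by_cases h : v ∣ I
    · obtain ⟨J, rfl⟩ := h
      refine Or.inr ⟨J, ⟨?_, fun w hw h => hI.2 w hw (h.mul_left v)⟩, rfl⟩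
      rintro rfl
      exact hI.1 (by simp)
    · refine Or.inl ⟨hI.1, ?_⟩
      rintro w (rfl | hw)
      exacts [h, hI.2 w hw]
  let f : Ideal (𝓞 K) → ℝ≥0∞ := fun I => (Ideal.absNorm I : ℝ≥0∞) ^ (-s)
  have h2 : (2 : ℝ≥0∞) ≤ Ideal.absNorm v := by
    have h0 : Ideal.absNorm v ≠ 0 := by simpa [Ideal.absNorm_eq_zero_iff] using hv0
    have h1 : Ideal.absNorm v ≠ 1 := by simpa [Ideal.absNorm_eq_one_iff] using hv.ne_top
    exact_mod_cast (by omega : 2 ≤ Ideal.absNorm v)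
  have hN : f v ≤ 2⁻¹ := by
    calc f v ≤ (2 : ℝ≥0∞) ^ (-s) := by
          simp only [f, ENNReal.rpow_neg]
          gcongr
      _ ≤ 2 ^ (-1 : ℝ) := ENNReal.rpow_le_rpow_of_exponent_le (by norm_num) (by linarith)
      _ = 2⁻¹ := ENNReal.rpow_neg_one 2
  have himg : ∑' I : (fun J => v * J) '' idealsPrimeTo T, f I ≤ 2⁻¹ * partialZeta T s := by
    rw [tsum_image f (fun a _ b _ h => mul_left_cancel₀ hv0 h), partialZeta,
      ← ENNReal.tsum_mul_left]
    refine ENNReal.tsum_le_tsum fun J => ?_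
    have : f (v * J) = f v * f J := by
      simp only [f, map_mul, Nat.cast_mul]
      rw [ENNReal.mul_rpow_of_ne_top (by simp) (by simp)]
    rw [this]
    gcongr
  have key : partialZeta T s ≤ partialZeta (insert v T) s + 2⁻¹ * partialZeta T s :=
    (ENNReal.tsum_mono_subtype f hsub).trans
      ((ENNReal.tsum_union_le f _ _).trans (add_le_add le_rfl himg))
  have hhalf : 2⁻¹ * partialZeta T s + 2⁻¹ * partialZeta T s = partialZeta T s := by
    rw [← add_mul, ENNReal.inv_two_add_inv_two, one_mul]
  have hle : 2⁻¹ * partialZeta T s ≤ partialZeta (insert v T) s := by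
    refine (ENNReal.add_le_add_iff_right (a := 2⁻¹ * partialZeta T s) ?_).1 (by rwa [hhalf])
    exact ENNReal.mul_ne_top (by simp) hfin
  calc partialZeta T s = 2 * (2⁻¹ * partialZeta T s) := by
        rw [← mul_assoc, ENNReal.mul_inv_cancel (by simp) (by simp), one_mul]
    _ ≤ _ := by gcongr

theorem partialZeta_le_partialZeta_empty (T : Set (Ideal (𝓞 K))) (s : ℝ) :
    partialZeta T s ≤ partialZeta (∅ : Set (Ideal (𝓞 K))) s :=
  ENNReal.tsum_mono_subtype (fun I : Ideal (𝓞 K) => (Ideal.absNorm I : ℝ≥0∞) ^ (-s))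
    fun _ hI => ⟨hI.1, by simp⟩

theorem partialZeta_empty_le {T : Set (Ideal (𝓞 K))} (hT : T.Finite) :
    (∀ v ∈ T, v.IsPrime ∧ v ≠ ⊥) → ∃ C : ℝ≥0∞, C ≠ ∞ ∧ ∀ s : ℝ, 1 < s →
      partialZeta (∅ : Set (Ideal (𝓞 K))) s ≠ ∞ →
      partialZeta (∅ : Set (Ideal (𝓞 K))) s ≤ C * partialZeta T s := by
  induction T, hT using Set.Finite.induction_on with
  | empty => exact fun _ => ⟨1, by simp, fun s _ _ => by simp⟩
  | @insert v T _ _ ih =>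
    intro h
    obtain ⟨C, hC, hle⟩ := ih fun w hw => h w (Set.mem_insert_of_mem _ hw)
    obtain ⟨hv, hv0⟩ := h v (Set.mem_insert _ _)
    refine ⟨C * 2, ENNReal.mul_ne_top hC (by simp), fun s hs hfin => (hle s hs hfin).trans ?_⟩
    rw [mul_assoc]
    gcongr
    exact partialZeta_le_two_mul T hs v hv hv0
      (ne_top_of_le_ne_top hfin (partialZeta_le_partialZeta_empty T s))

variable (K)

theorem partialZeta_empty_eq_tsum (s : ℝ) :
    partialZeta (∅ : Set (Ideal (𝓞 K))) s =
      ∑' n : ℕ, if n = 0 then 0 else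
        (Nat.card {I : Ideal (𝓞 K) // Ideal.absNorm I = n} : ℝ≥0∞) * (n : ℝ≥0∞) ^ (-s) := by
  have h1 : partialZeta (∅ : Set (Ideal (𝓞 K))) s = ∑' I : Ideal (𝓞 K),
      if Ideal.absNorm I = 0 then 0 else (Ideal.absNorm I : ℝ≥0∞) ^ (-s) := by
    rw [partialZeta, tsum_subtype (idealsPrimeTo ∅)
      (fun I : Ideal (𝓞 K) => (Ideal.absNorm I : ℝ≥0∞) ^ (-s))]
    refine tsum_congr fun I => ?_
    by_cases h : I = ⊥ <;> simp [h, idealsPrimeTo, Set.indicator, Ideal.absNorm_eq_zero_iff]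
  rw [h1, ← (Equiv.sigmaFiberEquiv fun I : Ideal (𝓞 K) => Ideal.absNorm I).tsum_eq,
    ENNReal.tsum_sigma']
  refine tsum_congr fun n => ?_
  have : ∀ I : {I : Ideal (𝓞 K) // Ideal.absNorm I = n},
      (if Ideal.absNorm I.1 = 0 then 0 else (Ideal.absNorm I.1 : ℝ≥0∞) ^ (-s)) =
      if n = 0 then 0 else (n : ℝ≥0∞) ^ (-s) := fun I => by rw [I.2]
  simp only [Equiv.sigmaFiberEquiv_apply]
  rw [tsum_congr this]
  by_cases hn : n = 0
  · simp [hn]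
  have := (Ideal.finite_setOfPred_absNorm_eq (S := 𝓞 K) n).to_subtype
  have hf : Finite {I : Ideal (𝓞 K) // Ideal.absNorm I = n} := this
  have := Fintype.ofFinite {I : Ideal (𝓞 K) // Ideal.absNorm I = n}
  simp [hn, tsum_fintype, Nat.card_eq_fintype_card]

theorem tendsto_partialZeta_empty :
    Tendsto (fun s : ℝ => ENNReal.ofReal (s - 1) * partialZeta (∅ : Set (Ideal (𝓞 K))) s)
      (𝓝[>] 1) (𝓝 (ENNReal.ofReal (dedekindZeta_residue K))) := by
  have hz := tendsto_sub_one_mul_dedekindZeta_nhdsGT K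
  have hr := (Complex.continuous_re.tendsto _).comp hz
  have hne := hz.eventually_ne (Complex.ofReal_ne_zero.2 (dedekindZeta_residue_ne_zero K))
  have h2 := ENNReal.tendsto_ofReal hr
  refine h2.congr' ?_
  filter_upwards [hne, self_mem_nhdsWithin] with s hs hs1
  rw [Set.mem_Ioi] at hs1
  have hsum : Summable (LSeries.term
      (fun n => (Nat.card {I : Ideal (𝓞 K) // Ideal.absNorm I = n} : ℂ)) (s : ℂ)) := by
    by_contra hcon
    refine hs ?_
    rw [dedekindZeta, LSeries, tsum_eq_zero_of_not_summable hcon, mul_zero]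
  have hterm : ∀ n, LSeries.term
      (fun n => (Nat.card {I : Ideal (𝓞 K) // Ideal.absNorm I = n} : ℂ)) (s : ℂ) n =
      ((if n = 0 then 0 else (Nat.card {I : Ideal (𝓞 K) // Ideal.absNorm I = n} : ℝ) *
        (n : ℝ) ^ (-s) : ℝ) : ℂ) := by
    intro n
    rw [LSeries.term]
    split_ifs with hn
    · simp
    · rw [Complex.ofReal_mul, Complex.ofReal_cpow n.cast_nonneg, Complex.ofReal_neg,
        Complex.cpow_neg, div_eq_mul_inv]
      simp
  have hzeta : dedekindZeta K s = ((∑' n : ℕ, if n = 0 then 0 else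
      (Nat.card {I : Ideal (𝓞 K) // Ideal.absNorm I = n} : ℝ) * (n : ℝ) ^ (-s) : ℝ) : ℂ) := by
    rw [dedekindZeta, LSeries, tsum_congr hterm, Complex.ofReal_tsum]
  rw [funext hterm, Complex.summable_ofReal] at hsum
  simp only [Function.comp_apply]
  rw [hzeta, ← Complex.ofReal_one, ← Complex.ofReal_sub, ← Complex.ofReal_mul, Complex.ofReal_re,
    ENNReal.ofReal_mul (by linarith), partialZeta_empty_eq_tsum K s,
    ENNReal.ofReal_tsum_of_nonneg (fun n => by split_ifs <;> positivity) hsum]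
  congr 1
  refine tsum_congr fun n => ?_
  split_ifs with hn
  · simp
  · rw [ENNReal.ofReal_mul (by positivity), ENNReal.ofReal_natCast,
      ← ENNReal.ofReal_rpow_of_pos (by positivity), ENNReal.ofReal_natCast]

end

section
variable {F : Type*} [Field F] [NumberField F] {L : Type*} [Field L]

/-- Transport an ideal of `𝓞 F` along a map defined on its prime factors. -/
noncomputable def mapFactors (P : Ideal (𝓞 F) → Ideal (𝓞 L)) (I : Ideal (𝓞 F)) : Ideal (𝓞 L) :=
  ((normalizedFactors I).map P).prod

theorem mapFactors_ne_bot {P : Ideal (𝓞 F) → Ideal (𝓞 L)} {I : Ideal (𝓞 F)}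
    (hP : ∀ v ∈ normalizedFactors I, Prime (P v)) : mapFactors P I ≠ ⊥ := by
  refine Multiset.prod_ne_zero fun h => ?_
  obtain ⟨v, hv, h0⟩ := Multiset.mem_map.1 h
  exact (hP v hv).ne_zero h0

variable [NumberField L]

theorem normalizedFactors_mapFactors {P : Ideal (𝓞 F) → Ideal (𝓞 L)} {I : Ideal (𝓞 F)}
    (hP : ∀ v ∈ normalizedFactors I, Prime (P v)) :
    normalizedFactors (mapFactors P I) = (normalizedFactors I).map P :=
  normalizedFactors_prod_of_prime fun _ hp => by
    obtain ⟨v, hv, rfl⟩ := Multiset.mem_map.1 hp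
    exact hP v hv

theorem absNorm_mapFactors {P : Ideal (𝓞 F) → Ideal (𝓞 L)} {I : Ideal (𝓞 F)} (hI : I ≠ ⊥)
    (hP : ∀ v ∈ normalizedFactors I, Ideal.absNorm (P v) = Ideal.absNorm v) :
    Ideal.absNorm (mapFactors P I) = Ideal.absNorm I := by
  conv_rhs => rw [← Ideal.prod_normalizedFactors_eq_self hI]
  rw [mapFactors, map_multiset_prod, map_multiset_prod, Multiset.map_map]
  congr 1
  exact Multiset.map_congr rfl hP

variable [Algebra F L]

/-- Two nowhere equal sections `P`, `Q` of the map from primes of `L` to primes of `F`, defined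
outside `T`, identify pairs of ideals of `F` prime to `T` with certain ideals of `L`. -/
theorem mapFactors_mul_injOn {T : Set (Ideal (𝓞 F))} {P Q : Ideal (𝓞 F) → Ideal (𝓞 L)}
    (hP : ∀ v ∉ T, v.IsPrime → v ≠ ⊥ → Prime (P v) ∧ (P v).under (𝓞 F) = v)
    (hQ : ∀ v ∉ T, v.IsPrime → v ≠ ⊥ → Prime (Q v) ∧ (Q v).under (𝓞 F) = v)
    (hPQ : ∀ v ∉ T, v.IsPrime → v ≠ ⊥ → P v ≠ Q v) :
    Set.InjOn (fun I : Ideal (𝓞 F) × Ideal (𝓞 F) => mapFactors P I.1 * mapFactors Q I.2)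
      (idealsPrimeTo T ×ˢ idealsPrimeTo T) := by
  classical
  have fac : ∀ {I : Ideal (𝓞 F)}, I ∈ idealsPrimeTo T → ∀ v ∈ normalizedFactors I,
      v ∉ T ∧ v.IsPrime ∧ v ≠ ⊥ := by
    intro I hI v hv
    have hp := prime_of_normalized_factor v hv
    exact ⟨fun h => hI.2 v h (dvd_of_mem_normalizedFactors hv), Ideal.isPrime_of_prime hp,
      hp.ne_zero⟩
  have nf : ∀ {I J : Ideal (𝓞 F)}, I ∈ idealsPrimeTo T → J ∈ idealsPrimeTo T →
      normalizedFactors (mapFactors P I * mapFactors Q J) =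
        (normalizedFactors I).map P + (normalizedFactors J).map Q := by
    intro I J hI hJ
    have h1 : ∀ v ∈ normalizedFactors I, Prime (P v) := fun v hv =>
      (hP v (fac hI v hv).1 (fac hI v hv).2.1 (fac hI v hv).2.2).1
    have h2 : ∀ v ∈ normalizedFactors J, Prime (Q v) := fun v hv =>
      (hQ v (fac hJ v hv).1 (fac hJ v hv).2.1 (fac hJ v hv).2.2).1
    rw [normalizedFactors_mul (mapFactors_ne_bot h1) (mapFactors_ne_bot h2),
      normalizedFactors_mapFactors h1, normalizedFactors_mapFactors h2]
  have recP : ∀ {I J : Ideal (𝓞 F)}, I ∈ idealsPrimeTo T → J ∈ idealsPrimeTo T →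
      (((normalizedFactors (mapFactors P I * mapFactors Q J)).filter
        fun R => P (R.under (𝓞 F)) = R).map fun R => R.under (𝓞 F)) = normalizedFactors I := by
    intro I J hI hJ
    rw [nf hI hJ, Multiset.filter_add, Multiset.filter_eq_self.2, Multiset.filter_eq_nil.2,
      add_zero, Multiset.map_map]
    · conv_rhs => rw [← Multiset.map_id (normalizedFactors I)]
      refine Multiset.map_congr rfl fun v hv => ?_
      obtain ⟨a, b, c⟩ := fac hI v hv
      exact (hP v a b c).2
    · intro R hR h
      obtain ⟨v, hv, rfl⟩ := Multiset.mem_map.1 hR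
      obtain ⟨a, b, c⟩ := fac hJ v hv
      rw [(hQ v a b c).2] at h
      exact hPQ v a b c h
    · intro R hR
      obtain ⟨v, hv, rfl⟩ := Multiset.mem_map.1 hR
      obtain ⟨a, b, c⟩ := fac hI v hv
      rw [(hP v a b c).2]
  have recQ : ∀ {I J : Ideal (𝓞 F)}, I ∈ idealsPrimeTo T → J ∈ idealsPrimeTo T →
      (((normalizedFactors (mapFactors P I * mapFactors Q J)).filter
        fun R => Q (R.under (𝓞 F)) = R).map fun R => R.under (𝓞 F)) = normalizedFactors J := by
    intro I J hI hJ
    rw [nf hI hJ, Multiset.filter_add, Multiset.filter_eq_nil.2, Multiset.filter_eq_self.2,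
      zero_add, Multiset.map_map]
    · conv_rhs => rw [← Multiset.map_id (normalizedFactors J)]
      refine Multiset.map_congr rfl fun v hv => ?_
      obtain ⟨a, b, c⟩ := fac hJ v hv
      exact (hQ v a b c).2
    · intro R hR
      obtain ⟨v, hv, rfl⟩ := Multiset.mem_map.1 hR
      obtain ⟨a, b, c⟩ := fac hJ v hv
      rw [(hQ v a b c).2]
    · intro R hR h
      obtain ⟨v, hv, rfl⟩ := Multiset.mem_map.1 hR
      obtain ⟨a, b, c⟩ := fac hI v hv
      rw [(hP v a b c).2] at h
      exact hPQ v a b c h.symm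
  rintro ⟨I, J⟩ ⟨hI, hJ⟩ ⟨I', J'⟩ ⟨hI', hJ'⟩ h
  dsimp only at h hI hJ hI' hJ'
  have e1 := recP hI hJ
  have e2 := recQ hI hJ
  rw [h, recP hI' hJ'] at e1
  rw [h, recQ hI' hJ'] at e2
  refine Prod.ext ?_ ?_
  · exact (Ideal.prod_normalizedFactors_eq_self hI.1).symm.trans
      (e1 ▸ Ideal.prod_normalizedFactors_eq_self hI'.1)
  · exact (Ideal.prod_normalizedFactors_eq_self hJ.1).symm.trans
      (e2 ▸ Ideal.prod_normalizedFactors_eq_self hJ'.1)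

theorem partialZeta_sq_le {T : Set (Ideal (𝓞 F))} {P Q : Ideal (𝓞 F) → Ideal (𝓞 L)}
    (hP : ∀ v ∉ T, v.IsPrime → v ≠ ⊥ → Prime (P v) ∧ (P v).under (𝓞 F) = v)
    (hQ : ∀ v ∉ T, v.IsPrime → v ≠ ⊥ → Prime (Q v) ∧ (Q v).under (𝓞 F) = v)
    (hPQ : ∀ v ∉ T, v.IsPrime → v ≠ ⊥ → P v ≠ Q v)
    (hPn : ∀ v ∉ T, v.IsPrime → v ≠ ⊥ → Ideal.absNorm (P v) = Ideal.absNorm v)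
    (hQn : ∀ v ∉ T, v.IsPrime → v ≠ ⊥ → Ideal.absNorm (Q v) = Ideal.absNorm v) (s : ℝ) :
    partialZeta T s * partialZeta T s ≤ partialZeta (∅ : Set (Ideal (𝓞 L))) s := by
  have fac : ∀ {I : Ideal (𝓞 F)}, I ∈ idealsPrimeTo T → ∀ v ∈ normalizedFactors I,
      v ∉ T ∧ v.IsPrime ∧ v ≠ ⊥ := by
    intro I hI v hv
    have hp := prime_of_normalized_factor v hv
    exact ⟨fun h => hI.2 v h (dvd_of_mem_normalizedFactors hv), Ideal.isPrime_of_prime hp,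
      hp.ne_zero⟩
  have hPI : ∀ {I : Ideal (𝓞 F)}, I ∈ idealsPrimeTo T → ∀ v ∈ normalizedFactors I,
      Prime (P v) ∧ Ideal.absNorm (P v) = Ideal.absNorm v := fun hI v hv => by
    obtain ⟨a, b, c⟩ := fac hI v hv
    exact ⟨(hP v a b c).1, hPn v a b c⟩
  have hQI : ∀ {I : Ideal (𝓞 F)}, I ∈ idealsPrimeTo T → ∀ v ∈ normalizedFactors I,
      Prime (Q v) ∧ Ideal.absNorm (Q v) = Ideal.absNorm v := fun hI v hv => by
    obtain ⟨a, b, c⟩ := fac hI v hv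
    exact ⟨(hQ v a b c).1, hQn v a b c⟩
  let φ : idealsPrimeTo T × idealsPrimeTo T → idealsPrimeTo (∅ : Set (Ideal (𝓞 L))) := fun I =>
    ⟨mapFactors P I.1.1 * mapFactors Q I.2.1,
      mul_ne_zero (mapFactors_ne_bot fun v hv => (hPI I.1.2 v hv).1)
        (mapFactors_ne_bot fun v hv => (hQI I.2.2 v hv).1), by simp⟩
  have hφ : Function.Injective φ := by
    rintro ⟨I, J⟩ ⟨I', J'⟩ h
    have h' : mapFactors P I.1 * mapFactors Q J.1 = mapFactors P I'.1 * mapFactors Q J'.1 :=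
      congrArg Subtype.val h
    have := mapFactors_mul_injOn hP hQ hPQ (Set.mk_mem_prod I.2 J.2)
      (Set.mk_mem_prod I'.2 J'.2) h'
    exact Prod.ext (Subtype.ext (congrArg Prod.fst this)) (Subtype.ext (congrArg Prod.snd this))
  refine le_trans (le_of_eq ?_) (ENNReal.tsum_comp_le_tsum_of_injective hφ
    fun I => (Ideal.absNorm (I : Ideal (𝓞 L)) : ℝ≥0∞) ^ (-s))
  rw [partialZeta, ENNReal.tsum_prod', ← ENNReal.tsum_mul_right]
  refine tsum_congr fun I => ?_
  rw [← ENNReal.tsum_mul_left]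
  refine tsum_congr fun J => ?_
  simp only [φ, map_mul, Nat.cast_mul]
  rw [absNorm_mapFactors I.2.1 fun v hv => (hPI I.2 v hv).2,
    absNorm_mapFactors J.2.1 fun v hv => (hQI J.2 v hv).2,
    ENNReal.mul_rpow_of_ne_top (by simp) (by simp)]

variable (F L) in
/-- Outside any finite set there is a prime of `F` that does not have two distinct primes of `L` of
the same norm above it. -/
theorem exists_prime_not_split {T : Set (Ideal (𝓞 F))} (hT : T.Finite) :
    ∃ v ∉ T, v.IsPrime ∧ v ≠ ⊥ ∧ ∀ P Q : Ideal (𝓞 L), P.IsPrime → P.under (𝓞 F) = v →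
      Ideal.absNorm P = Ideal.absNorm v → Q.IsPrime → Q.under (𝓞 F) = v →
      Ideal.absNorm Q = Ideal.absNorm v → P = Q := by
  by_contra! hcon
  wlog hTp : ∀ v ∈ T, v.IsPrime ∧ v ≠ ⊥ generalizing T
  · refine this (T := {v ∈ T | v.IsPrime ∧ v ≠ ⊥}) (hT.subset fun _ h => h.1) ?_ fun v hv => hv.2
    exact fun v hv h1 h2 => hcon v (fun h => hv ⟨h, h1, h2⟩) h1 h2
  choose! P Q hP1 hP2 hP3 hQ1 hQ2 hQ3 hPQ using hcon
  have prime_of : ∀ v : Ideal (𝓞 F), v ≠ ⊥ → ∀ R : Ideal (𝓞 L), R.IsPrime →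
      R.under (𝓞 F) = v → Prime R := by
    intro v hv R hR h
    refine Ideal.prime_of_isPrime ?_ hR
    rintro rfl
    refine hv (h.symm.trans ?_)
    exact Ideal.comap_bot_of_injective _ (FaithfulSMul.algebraMap_injective (𝓞 F) (𝓞 L))
  have hsq := partialZeta_sq_le (T := T) (P := P) (Q := Q)
    (fun v a b c => ⟨prime_of v c _ (hP1 v a b c) (hP2 v a b c), hP2 v a b c⟩)
    (fun v a b c => ⟨prime_of v c _ (hQ1 v a b c) (hQ2 v a b c), hQ2 v a b c⟩)
    hPQ hP3 hQ3
  obtain ⟨C, hC, hle⟩ := partialZeta_empty_le hT hTp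
  have hF := tendsto_partialZeta_empty F
  have hL := tendsto_partialZeta_empty L
  have hε : Tendsto (fun s : ℝ => ENNReal.ofReal (s - 1)) (𝓝[>] 1) (𝓝 0) := by
    have : Tendsto (fun s : ℝ => ENNReal.ofReal (s - 1)) (𝓝 1) (𝓝 (ENNReal.ofReal (1 - 1))) :=
      ENNReal.tendsto_ofReal ((continuous_id.sub continuous_const).tendsto _)
    simpa using this.mono_left nhdsWithin_le_nhds
  have hleft := ENNReal.Tendsto.mul hF (Or.inr ENNReal.ofReal_ne_top) hF
    (Or.inr ENNReal.ofReal_ne_top)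
  have hright := ENNReal.Tendsto.const_mul (a := C * C)
    (ENNReal.Tendsto.mul hε (Or.inr ENNReal.ofReal_ne_top) hL (Or.inr (by simp)))
    (Or.inr (ENNReal.mul_ne_top hC hC))
  have hbound := le_of_tendsto_of_tendsto hleft hright ?_
  · rw [zero_mul, mul_zero, nonpos_iff_eq_zero, mul_self_eq_zero, ENNReal.ofReal_eq_zero] at hbound
    exact absurd hbound (not_le.2 (dedekindZeta_residue_pos F))
  · filter_upwards [hF.eventually_lt_const ENNReal.ofReal_lt_top, self_mem_nhdsWithin] with s hs hs1
    rw [Set.mem_Ioi] at hs1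
    have hfin : partialZeta (∅ : Set (Ideal (𝓞 F))) s ≠ ∞ := by
      intro h
      rw [h, ENNReal.mul_top (by simpa using hs1)] at hs
      exact lt_irrefl _ hs
    calc _ ≤ (ENNReal.ofReal (s - 1) * (C * partialZeta T s)) *
            (ENNReal.ofReal (s - 1) * (C * partialZeta T s)) := by
          gcongr <;> exact hle s hs1 hfin
      _ = C * C * (ENNReal.ofReal (s - 1) * (ENNReal.ofReal (s - 1) *
            (partialZeta T s * partialZeta T s))) := by ring
      _ ≤ _ := by
          gcongr
          exact hsq s

end

/-- Outside the primes dividing some nonzero `D`, the element `x` of `𝓞 F` is an `n`-th power in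
every residue field. -/
def IsPowModAlmostAll {F : Type*} [Field F] (n : ℕ) (x : 𝓞 F) : Prop :=
  ∃ D : 𝓞 F, D ≠ 0 ∧ ∀ v : Ideal (𝓞 F), v.IsPrime → v ≠ ⊥ → D ∉ v → ∃ y : 𝓞 F, y ^ n - x ∈ v

section
variable {F : Type*} [Field F] [NumberField F]

theorem finite_setOf_prime_mem {D : 𝓞 F} (hD : D ≠ 0) :
    {v : Ideal (𝓞 F) | v.IsPrime ∧ v ≠ ⊥ ∧ D ∈ v}.Finite := by
  classical
  refine (normalizedFactors (Ideal.span {D})).toFinset.finite_toSet.subset ?_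
  rintro v ⟨hv, hv0, hDv⟩
  have hs : Ideal.span {D} ≠ 0 := by simpa using hD
  simp only [Multiset.mem_toFinset, Finset.mem_coe]
  rw [UniqueFactorizationMonoid.mem_normalizedFactors_iff hs]
  exact ⟨Ideal.prime_of_isPrime hv0 hv, Ideal.dvd_span_singleton.2 hDv⟩

theorem exists_ne_primes_of_ncard_ne_one {L : Type*} [Field L] [NumberField L] [Algebra F L]
    [IsGalois F L] (hp : (Nat.card Gal(L/F)).Prime) (v : Ideal (𝓞 F)) [hv : v.IsPrime]
    (h1 : (v.primesOver (𝓞 L)).ncard ≠ 1) :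
    ∃ P Q : Ideal (𝓞 L), P.IsPrime ∧ P.under (𝓞 F) = v ∧ Ideal.absNorm P = Ideal.absNorm v ∧
      Q.IsPrime ∧ Q.under (𝓞 F) = v ∧ Ideal.absNorm Q = Ideal.absNorm v ∧ P ≠ Q := by
  have hmul := Ideal.ncard_primesOver_mul_ramificationIdxIn_mul_inertiaDegIn v (𝓞 L) Gal(L/F)
  have hcard : (v.primesOver (𝓞 L)).ncard = Nat.card Gal(L/F) :=
    ((Nat.dvd_prime hp).1 (Dvd.intro _ hmul)).resolve_left h1
  rw [hcard] at hmul
  have hf : v.inertiaDegIn (𝓞 L) = 1 :=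
    Nat.eq_one_of_mul_eq_one_left (Nat.eq_of_mul_eq_mul_left hp.pos (hmul.trans (mul_one _).symm))
  have hnorm : ∀ P ∈ v.primesOver (𝓞 L), Ideal.absNorm P = Ideal.absNorm v := by
    rintro P ⟨hP, hPv⟩
    rw [← Ideal.absNorm_pow_inertiaDeg v P, ← Ideal.inertiaDegIn_eq_inertiaDeg v P Gal(L/F), hf,
      pow_one]
  have hfin : (v.primesOver (𝓞 L)).Finite :=
    Set.finite_of_ncard_ne_zero (hcard ▸ hp.ne_zero)
  obtain ⟨P, hP, Q, hQ, hPQ⟩ := (Set.one_lt_ncard hfin).1 (hcard ▸ hp.one_lt)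
  exact ⟨P, Q, hP.1, hP.2.over.symm, hnorm P hP, hQ.1, hQ.2.over.symm, hnorm Q hQ, hPQ⟩

open Polynomial Pointwise in
theorem exists_pow_eq_of_isPowModAlmostAll_prime {p : ℕ} (hp : p.Prime) {ζ : 𝓞 F}
    (hζ : IsPrimitiveRoot ζ p) {x : 𝓞 F} (hx : x ≠ 0) (h : IsPowModAlmostAll p x) :
    ∃ z : 𝓞 F, z ^ p = x := by
  by_contra hcon
  have : NeZero p := ⟨hp.ne_zero⟩
  have hζF : IsPrimitiveRoot (ζ : F) p := hζ.map_of_injective RingOfIntegers.coe_injective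
  have hprim : (primitiveRoots p F).Nonempty := ⟨ζ, (mem_primitiveRoots hp.pos).2 hζF⟩
  have hirr : Irreducible (X ^ p - C (x : F)) := by
    refine X_pow_sub_C_irreducible_of_prime hp fun b hb => hcon ?_
    have hint : IsIntegral ℤ b := IsIntegral.of_pow hp.pos (hb ▸ x.isIntegral_coe)
    exact ⟨⟨b, hint⟩, RingOfIntegers.ext hb⟩
  let L := (X ^ p - C (x : F)).SplittingField
  have : NumberField L := NumberField.of_module_finite F L
  have : IsGalois F L := isGalois_of_isSplittingField_X_pow_sub_C hprim hirr L
  have hcard : Nat.card Gal(L/F) = p := by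
    rw [IsGalois.card_aut_eq_finrank, finrank_of_isSplittingField_X_pow_sub_C hprim hirr L]
  have hα₀ : (rootOfSplitsXPowSubC hp.pos (x : F) L) ^ p = algebraMap F L x :=
    rootOfSplitsXPowSubC_pow _ _
  obtain ⟨α, hα⟩ : ∃ α : 𝓞 L, α ^ p = algebraMap (𝓞 F) (𝓞 L) x := by
    have hint : IsIntegral ℤ (rootOfSplitsXPowSubC hp.pos (x : F) L) :=
      IsIntegral.of_pow hp.pos (hα₀ ▸ x.isIntegral_coe.algebraMap)
    exact ⟨⟨_, hint⟩, RingOfIntegers.ext hα₀⟩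
  let ζ' : 𝓞 L := algebraMap (𝓞 F) (𝓞 L) ζ
  have hζ' : IsPrimitiveRoot ζ' p :=
    hζ.map_of_injective (FaithfulSMul.algebraMap_injective (𝓞 F) (𝓞 L))
  obtain ⟨σ, hσ⟩ : ∃ σ : Gal(L/F), σ • α = ζ' * α := by
    refine ⟨(autEquivZmod hirr L hζF).symm (Multiplicative.ofAdd ((1 : ℕ) : ZMod p)),
      RingOfIntegers.ext ?_⟩
    have := autEquivZmod_symm_apply_natCast hirr L (α := (α : L))
      (congrArg (algebraMap (𝓞 L) L) hα) hζF 1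
    rw [pow_one, Algebra.smul_def] at this
    exact this
  obtain ⟨D, hD, hmod⟩ := h
  have hE : D * ((ζ - 1) ^ p * x) ≠ 0 :=
    mul_ne_zero hD (mul_ne_zero (pow_ne_zero _ (sub_ne_zero.2 (hζ.ne_one hp.one_lt))) hx)
  obtain ⟨v, hvT, hv, hv0, hsplit⟩ := exists_prime_not_split F L (finite_setOf_prime_mem hE)
  have hEv : D * ((ζ - 1) ^ p * x) ∉ v := fun h => hvT ⟨hv, hv0, h⟩
  obtain ⟨y, hy⟩ := hmod v hv hv0 fun h => hEv (v.mul_mem_right _ h)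
  have hone : (v.primesOver (𝓞 L)).ncard = 1 := by
    by_contra h1
    obtain ⟨P, Q, a, b, c, d, e, f, g⟩ :=
      exists_ne_primes_of_ncard_ne_one (L := L) (by rw [hcard]; exact hp) v h1
    exact g (hsplit P Q a b c d e f)
  obtain ⟨P, hP⟩ := Set.ncard_eq_one.1 hone
  have hPmem : P ∈ v.primesOver (𝓞 L) := hP ▸ rfl
  obtain ⟨hPp, hPv⟩ := hPmem
  have hσP : σ • P = P := by
    have : σ • P ∈ v.primesOver (𝓞 L) := ⟨inferInstance, inferInstance⟩
    rwa [hP] at this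
  have hover : ∀ a : 𝓞 F, algebraMap (𝓞 F) (𝓞 L) a ∈ P ↔ a ∈ v := fun a => by
    rw [hPv.over]; rfl
  have hprod : ∏ η ∈ nthRootsFinset p (1 : 𝓞 L), (α - η * algebraMap (𝓞 F) (𝓞 L) y) ∈ P := by
    rw [← hζ'.pow_sub_pow_eq_prod_sub_mul _ _ hp.pos, hα, ← map_pow, ← map_sub, hover]
    rw [← neg_sub]
    exact v.neg_mem hy
  obtain ⟨η, hη, hmem⟩ := (hPp.prod_mem_iff).1 hprod
  obtain ⟨i, -, rfl⟩ := hζ'.eq_pow_of_pow_eq_one ((mem_nthRootsFinset hp.pos _).1 hη)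
  have hmem2 : ζ' * α - ζ' ^ i * algebraMap (𝓞 F) (𝓞 L) y ∈ P := by
    have := Ideal.smul_mem_pointwise_smul σ _ P hmem
    rw [hσP, smul_sub, hσ] at this
    have hfix : σ • (ζ' ^ i * algebraMap (𝓞 F) (𝓞 L) y) = ζ' ^ i * algebraMap (𝓞 F) (𝓞 L) y := by
      rw [← map_pow, ← map_mul, smul_algebraMap]
    rwa [hfix] at this
  have hdiff : (ζ' - 1) * α ∈ P := by
    have := P.sub_mem hmem2 hmem
    ring_nf at this ⊢
    exact this
  refine hEv (v.mul_mem_left _ ((hover _).1 ?_))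
  have := P.pow_mem_of_mem hdiff p hp.pos
  rw [mul_pow, hα] at this
  simpa [ζ'] using this

end
end

section
variable {F : Type*} [Field F]

theorem IsPowModAlmostAll.of_dvd {m n : ℕ} {x : 𝓞 F} (h : IsPowModAlmostAll n x) (hmn : m ∣ n) :
    IsPowModAlmostAll m x := by
  obtain ⟨D, hD, h⟩ := h
  obtain ⟨l, rfl⟩ := hmn
  refine ⟨D, hD, fun v hv hv0 hDv => ?_⟩
  obtain ⟨y, hy⟩ := h v hv hv0 hDv
  exact ⟨y ^ l, by rwa [← pow_mul, mul_comm l]⟩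

theorem IsPowModAlmostAll.algebraMap [NumberField F] {K : Type*} [Field K] [NumberField K]
    [Algebra F K] {n : ℕ} {x : 𝓞 F} (h : IsPowModAlmostAll n x) :
    IsPowModAlmostAll n (algebraMap (𝓞 F) (𝓞 K) x) := by
  obtain ⟨D, hD, h⟩ := h
  refine ⟨_, (map_ne_zero_iff _ (FaithfulSMul.algebraMap_injective (𝓞 F) (𝓞 K))).2 hD,
    fun w hw hw0 hDw => ?_⟩
  obtain ⟨y, hy⟩ := h (w.under (𝓞 F)) inferInstance
    (fun h0 => hw0 (Ideal.eq_bot_of_comap_eq_bot h0)) hDw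
  exact ⟨_, by simpa [Ideal.mem_comap] using hy⟩

open Polynomial in
theorem exists_pow_eq_of_isPowModAlmostAll [NumberField F] {p a : ℕ} (hp : p.Prime) {ζ : 𝓞 F}
    (hζ : IsPrimitiveRoot ζ (p ^ a)) {e : ℕ} (he : e ≤ a) {x : 𝓞 F} (hx : x ≠ 0)
    (h : IsPowModAlmostAll (p ^ e) x) : ∃ z : 𝓞 F, z ^ p ^ e = x := by
  induction e generalizing x with
  | zero => exact ⟨x, by simp⟩
  | succ e ih =>
    have hζp : IsPrimitiveRoot (ζ ^ p ^ (a - 1)) p :=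
      hζ.pow (pow_pos hp.pos a) (by rw [← pow_succ]; congr 1; omega)
    obtain ⟨w, rfl⟩ := exists_pow_eq_of_isPowModAlmostAll_prime hp hζp hx
      (h.of_dvd (dvd_pow_self p e.succ_ne_zero))
    obtain ⟨D, hD, h⟩ := h
    obtain ⟨z, rfl⟩ := ih (by omega) (ne_zero_pow hp.ne_zero hx) ⟨D, hD, fun v hv hv0 hDv => by
      obtain ⟨y, hy⟩ := h v hv hv0 hDv
      rw [pow_succ, pow_mul, ← neg_mem_iff, neg_sub, hζp.pow_sub_pow_eq_prod_sub_mul _ _ hp.pos,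
        hv.prod_mem_iff] at hy
      obtain ⟨η, hη, hmem⟩ := hy
      have : NeZero p := ⟨hp.ne_zero⟩
      obtain ⟨i, -, rfl⟩ := hζp.eq_pow_of_pow_eq_one ((mem_nthRootsFinset hp.pos _).1 hη)
      refine ⟨ζ ^ (p ^ (a - 1 - e) * i) * y, ?_⟩
      rw [← neg_mem_iff, neg_sub, mul_pow, ← pow_mul, mul_right_comm, ← pow_add,
        show a - 1 - e + e = a - 1 by omega, pow_mul]
      exact hmem⟩
    exact ⟨z, by rw [pow_succ, pow_mul]⟩

end

section
variable {F : Type*} [Field F] [NumberField F]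

theorem exists_pow_sub_mem_of_adicCompletion (v : HeightOneSpectrum (𝓞 F)) {n : ℕ} (hn : n ≠ 0)
    {x : 𝓞 F} {y : v.adicCompletion F}
    (h : algebraMap F (v.adicCompletion F) x = y ^ n) : ∃ z : 𝓞 F, z ^ n - x ∈ v.asIdeal := by
  have hopen : IsOpen {t : v.adicCompletion F |
      Valued.v (t ^ n - algebraMap F (v.adicCompletion F) x) < 1} := by
    have hcont : Continuous fun t : v.adicCompletion F =>
        t ^ n - algebraMap F (v.adicCompletion F) x := (continuous_pow n).sub continuous_const
    have := (Valued.isOpen_ball (v.adicCompletion F) 1).preimage hcont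
    simpa only [Valuation.restrict_lt_one_iff, Set.preimage_ofPred_eq] using this
  obtain ⟨t, ht⟩ := (HeightOneSpectrum.denseRange_algebraMap F v).exists_mem_open hopen
    ⟨y, by simp [h]⟩
  rw [Set.mem_ofPred_eq, ← map_pow, ← map_sub] at ht
  replace ht : v.valuation F (t ^ n - x) < 1 := by
    rwa [← HeightOneSpectrum.valuedAdicCompletion_eq_valuation']
  have hx : v.valuation F x ≤ 1 := v.valuation_le_one x
  have ht1 : v.valuation F t ≤ 1 := by
    refine (pow_le_one_iff hn).1 ?_
    rw [← map_pow, ← sub_add_cancel (t ^ n) (x : F)]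
    exact (Valuation.map_add_le _ ht.le hx)
  obtain ⟨z, hz⟩ := v.exists_valuation_sub_lt_of_integer ht1 1
  refine ⟨z, (v.valuation_lt_one_iff_mem (K := F) _).1 ?_⟩
  have hz1 : v.valuation F (z : F) ≤ 1 := v.valuation_le_one z
  have hzt : v.valuation F ((z : F) ^ n - t ^ n) < 1 := by
    rw [← (Commute.all (z : F) t).mul_geom_sum₂ n, map_mul]
    refine mul_lt_one_of_lt_of_le hz (Valuation.map_sum_le _ fun i _ => ?_)
    rw [map_mul, map_pow, map_pow]
    exact mul_le_one' (pow_le_one' hz1 _) (pow_le_one' ht1 _)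
  have := Valuation.map_add_lt _ hzt ht
  simpa using this

theorem exists_isPowModAlmostAll {n : ℕ} (hn : n ≠ 0) {x : F} (hx : x ≠ 0)
    (h : ∀ v : HeightOneSpectrum (𝓞 F), ∃ y : v.adicCompletion F,
      algebraMap F (v.adicCompletion F) x = y ^ n) :
    ∃ b : 𝓞 F, b ≠ 0 ∧ ∃ z : 𝓞 F, z ≠ 0 ∧ (z : F) = x * b ^ n ∧ IsPowModAlmostAll n z := by
  obtain ⟨a, b, hb, rfl⟩ := IsFractionRing.div_surjective (𝓞 F) x
  have hb0 : b ≠ 0 := nonZeroDivisors.ne_zero hb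
  have hbF : algebraMap (𝓞 F) F b ≠ 0 := by simpa using hb0
  have ha0 : a ≠ 0 := by
    rintro rfl
    simp at hx
  have hz : ((a * b ^ (n - 1) : 𝓞 F) : F) = algebraMap _ _ a / algebraMap _ _ b * b ^ n := by
    obtain ⟨n, rfl⟩ := Nat.exists_eq_succ_of_ne_zero hn
    change algebraMap (𝓞 F) F _ = _ * (algebraMap (𝓞 F) F b) ^ _
    rw [map_mul, map_pow, Nat.succ_sub_one, pow_succ]
    field_simp
  refine ⟨b, hb0, a * b ^ (n - 1), mul_ne_zero ha0 (pow_ne_zero _ hb0), hz, 1, one_ne_zero,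
    fun v hv hv0 _ => ?_⟩
  obtain ⟨y, hy⟩ := h ⟨v, hv, hv0⟩
  refine exists_pow_sub_mem_of_adicCompletion ⟨v, hv, hv0⟩ hn (y := y * algebraMap F _ b) ?_
  rw [hz, map_mul, hy, map_pow, mul_pow]

end

theorem emultiplicity_geom_sum {p : ℕ} (hp : p.Prime) {t : ℤ} (ht : t - 1 ≠ 0)
    (h : Odd p ∧ (p : ℤ) ∣ t - 1 ∨ p = 2 ∧ 4 ∣ t - 1) (s : ℕ) :
    emultiplicity (p : ℤ) (∑ i ∈ Finset.range (p ^ s), t ^ i) = s := by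
  have hpZ : Prime (p : ℤ) := Nat.prime_iff_prime_int.1 hp
  have hdvd : (p : ℤ) ∣ t - 1 := by
    obtain ⟨-, h⟩ | ⟨rfl, h⟩ := h
    exacts [h, dvd_trans (by norm_num) h]
  have hndvd : ¬ (p : ℤ) ∣ t := fun h' => hpZ.not_dvd_one (by simpa using dvd_sub h' hdvd)
  have hself : emultiplicity (p : ℤ) ((p ^ s : ℕ) : ℤ) = s := by
    rw [Nat.cast_pow, emultiplicity_pow_self hpZ.ne_zero hpZ.not_isUnit]
  have hmul : emultiplicity (p : ℤ) (t ^ p ^ s - 1) = emultiplicity (p : ℤ) (t - 1) + s := by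
    obtain ⟨hodd, -⟩ | ⟨rfl, h⟩ := h
    · conv_lhs => rw [← one_pow (p ^ s)]
      rw [Int.emultiplicity_pow_sub_pow hp hodd (by simpa) hndvd,
        ← Int.natCast_emultiplicity, hself]
    · conv_lhs => rw [← one_pow (2 ^ s)]
      exact (Int.two_pow_sub_pow' (2 ^ s) h hndvd).trans (congrArg _ hself)
  rw [← mul_geom_sum, emultiplicity_mul hpZ] at hmul
  exact ENat.add_right_injective_of_ne_top (finiteMultiplicity_iff_emultiplicity_ne_top.1
    (Int.finiteMultiplicity_iff.2 ⟨by simpa using hp.ne_one, ht⟩)) hmul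

theorem exists_dvd_add_mul_sub_one {p : ℕ} (hp : p.Prime) {t : ℤ}
    (h : Odd p ∧ (p : ℤ) ∣ t - 1 ∨ p = 2 ∧ 4 ∣ t - 1) (a : ℕ) (c : ℤ)
    (hc : ∀ N : ℕ, (p ^ a : ℤ) ∣ t ^ N - 1 → (p ^ a : ℤ) ∣ c * ∑ i ∈ Finset.range N, t ^ i) :
    ∃ j : ℕ, (p ^ a : ℤ) ∣ c + j * (t - 1) := by
  by_cases hta : (p ^ a : ℤ) ∣ t - 1
  · exact ⟨0, by simpa using hc 1 (by simpa using hta)⟩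
  have ht : t - 1 ≠ 0 := fun h0 => hta (h0 ▸ dvd_zero _)
  have hpZ : Prime (p : ℤ) := Nat.prime_iff_prime_int.1 hp
  have hfin : FiniteMultiplicity (p : ℤ) (t - 1) :=
    Int.finiteMultiplicity_iff.2 ⟨by simpa using hp.ne_one, ht⟩
  obtain ⟨u, hu, hpu⟩ := hfin.exists_eq_pow_mul_and_not_dvd
  set v := multiplicity (p : ℤ) (t - 1)
  have hva : v < a := by
    by_contra! hav
    exact hta (hu ▸ Dvd.dvd.mul_right (pow_dvd_pow _ hav) _)
  have hgeom := emultiplicity_geom_sum hp ht h (a - v)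
  have hpow : (p : ℤ) ^ (a - v) ∣ ∑ i ∈ Finset.range (p ^ (a - v)), t ^ i :=
    pow_dvd_of_le_emultiplicity hgeom.ge
  have hdvd := hc (p ^ (a - v)) (by
    rw [← mul_geom_sum, hu, ← Nat.add_sub_cancel' hva.le, pow_add, mul_right_comm]
    exact Dvd.dvd.mul_right (mul_dvd_mul_left _ (by simpa using hpow)) _)
  obtain ⟨S, hS⟩ := hpow
  have hpS : ¬ (p : ℤ) ∣ S := fun hpS => by
    have : (p : ℤ) ^ (a - v + 1) ∣ ∑ i ∈ Finset.range (p ^ (a - v)), t ^ i := by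
      rw [hS, pow_succ]
      exact mul_dvd_mul_left _ hpS
    have := le_emultiplicity_of_pow_dvd this
    rw [hgeom] at this
    exact absurd (ENat.natCast_le_natCast.1 this) (by omega)
  have hcv : (p : ℤ) ^ v ∣ c := by
    rw [hS, ← Nat.add_sub_cancel' hva.le, pow_add, Nat.add_sub_cancel' hva.le,
      mul_left_comm, mul_comm ((p : ℤ) ^ v)] at hdvd
    have := (mul_dvd_mul_iff_left (pow_ne_zero (a - v) hpZ.ne_zero)).1 hdvd
    exact hpZ.pow_dvd_of_dvd_mul_right v hpS this
  obtain ⟨c', rfl⟩ := hcv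
  have hcop : IsCoprime u ((p : ℤ) ^ a) :=
    ((Prime.coprime_iff_not_dvd hpZ).2 hpu).symm.pow_right
  obtain ⟨α, β, hαβ⟩ := hcop
  have hpa : (0 : ℤ) < (p : ℤ) ^ a := pow_pos (by exact_mod_cast hp.pos) a
  refine ⟨((-c' * α) % (p : ℤ) ^ a).toNat, ?_⟩
  rw [Int.toNat_of_nonneg (Int.emod_nonneg _ hpa.ne'), Int.emod_def, hu]
  refine ⟨(p : ℤ) ^ v * (c' * β - u * (-c' * α / (p : ℤ) ^ a)), ?_⟩
  linear_combination (p : ℤ) ^ v * c' * (-hαβ)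

theorem isCyclic_ker_unitsMap_four {a : ℕ} (h : 4 ∣ 2 ^ a) :
    IsCyclic (ZMod.unitsMap h).ker := by
  obtain ⟨n, rfl⟩ : ∃ n, a = n + 2 :=
    Nat.exists_eq_add_of_le' ((Nat.pow_dvd_pow_iff_le_right (x := 2) (by norm_num)).1
      (by simpa using h))
  have hfive : IsUnit (5 : ZMod (2 ^ (n + 2))) :=
    (ZMod.isUnit_iff_coprime 5 _).2 (Nat.Coprime.pow_right _ (by norm_num))
  obtain ⟨u, hu⟩ := hfive
  have hmem : u ∈ (ZMod.unitsMap h).ker := by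
    rw [MonoidHom.mem_ker]
    ext
    rw [ZMod.unitsMap_val, hu]
    have := ZMod.cast_natCast (R := ZMod 4) h 5
    rw [Nat.cast_ofNat] at this
    rw [this]
    decide
  refine isCyclic_of_orderOf_eq_card ⟨u, hmem⟩ ?_
  have hcard := (ZMod.unitsMap h).ker.card_mul_index
  rw [Subgroup.index_ker, MonoidHom.range_eq_top.2 (ZMod.unitsMap_surjective h),
    Subgroup.card_top, Nat.card_eq_fintype_card (α := (ZMod _)ˣ),
    Nat.card_eq_fintype_card (α := (ZMod _)ˣ), ZMod.card_units_eq_totient,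
    ZMod.card_units_eq_totient, Nat.totient_prime_pow_succ Nat.prime_two,
    show Nat.totient 4 = 2 by decide] at hcard
  rw [← Subgroup.orderOf_coe, ← orderOf_units, hu, ZMod.orderOf_five]
  have := pow_succ 2 n
  omega

theorem IsPrimitiveRoot.pow_eq_pow_iff_intCast_dvd_sub {K : Type*} [Field K] {n : ℕ} (hn : n ≠ 0)
    {ζ : K} (hζ : IsPrimitiveRoot ζ n) {a b : ℕ} : ζ ^ a = ζ ^ b ↔ (n : ℤ) ∣ a - b := by
  have h0 : ζ ≠ 0 := hζ.ne_zero hn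
  rw [← hζ.zpow_eq_one_iff_dvd, zpow_sub₀ h0, zpow_natCast, zpow_natCast,
    div_eq_one_iff_eq (pow_ne_zero b h0)]

section
variable {F K : Type*} [Field F] [Field K] [Algebra F K]

/-- If `σ ζ = ζ ^ t` and `σ α = ζ ^ c * α`, then the powers of `σ` act on `α` through the cocycle
`N ↦ c * (1 + t + ⋯ + t ^ (N - 1))`. -/
theorem pow_apply_eq_of_apply_eq (σ : Gal(K/F)) {ζ α : K} {t c : ℕ} (hζ : σ ζ = ζ ^ t)
    (hα : σ α = ζ ^ c * α) (N : ℕ) :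
    (σ ^ N) ζ = ζ ^ t ^ N ∧ (σ ^ N) α = ζ ^ (c * ∑ i ∈ Finset.range N, t ^ i) * α := by
  induction N with
  | zero => simp
  | succ N ih =>
    rw [pow_succ', AlgEquiv.mul_apply, AlgEquiv.mul_apply, ih.1, ih.2, map_mul, map_pow, map_pow,
      hζ, hα, ← mul_assoc, ← pow_mul, ← pow_mul, ← pow_add, geom_sum_succ, pow_succ']
    refine ⟨rfl, ?_⟩
    congr 2
    ring

theorem exists_algebraMap_eq_of_zpowers_eq_top [IsGalois F K] [FiniteDimensional F K]
    {σ : Gal(K/F)} (hσ : ∀ τ, τ ∈ Subgroup.zpowers σ) {β : K} (hβ : σ β = β) :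
    ∃ y : F, algebraMap F K y = β := by
  refine IsGalois.mem_range_algebraMap_iff_fixed (F := F) β |>.2 fun τ => ?_
  have : Subgroup.zpowers σ ≤ MulAction.stabilizer Gal(K/F) β := by
    rw [Subgroup.zpowers_le]
    exact hβ
  exact this (hσ τ)

theorem exists_pow_eq_of_isCyclotomicExtension_s6 {p a m : ℕ} (hp : p.Prime)
    (hm : p ≠ 2 ∧ m = p ∨ p = 2 ∧ m = 4) (hma : m ∣ p ^ a) [IsCyclotomicExtension {p ^ a} F K]
    [CharZero F] {η : F} (hη : IsPrimitiveRoot η m) {x : F} {α : K}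
    (hα : α ^ p ^ a = algebraMap F K x) : ∃ y : F, y ^ p ^ a = x := by
  have : NeZero (p ^ a) := ⟨(pow_pos hp.pos a).ne'⟩
  have : CharZero K := charZero_of_injective_algebraMap (algebraMap F K).injective
  have : FiniteDimensional F K := IsCyclotomicExtension.finiteDimensional {p ^ a} F K
  have : IsGalois F K := IsCyclotomicExtension.isGalois {p ^ a} F K
  obtain rfl | hx := eq_or_ne x 0
  · exact ⟨0, zero_pow (NeZero.ne _)⟩
  have hα0 : α ≠ 0 := by
    rintro rfl
    rw [zero_pow (NeZero.ne _), eq_comm, map_eq_zero] at hα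
    exact hx hα
  set ζ := IsCyclotomicExtension.zeta (p ^ a) F K
  have hζ : IsPrimitiveRoot ζ (p ^ a) := IsCyclotomicExtension.zeta_spec (p ^ a) F K
  let f := hζ.autToPow F
  have hf : Function.Injective f := hζ.autToPow_injective F
  have hspec : ∀ τ : Gal(K/F), τ ζ = ζ ^ (f τ : ZMod (p ^ a)).val := fun τ =>
    (hζ.autToPow_spec F τ).symm
  have hm0 : m ≠ 0 := ne_zero_of_dvd_ne_zero (NeZero.ne _) hma
  have : NeZero m := ⟨hm0⟩
  have hmod : ∀ τ, (((f τ : ZMod (p ^ a)).val : ℕ) : ZMod m) = 1 := by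
    intro τ
    obtain ⟨l, hl⟩ := hma
    have hξ : IsPrimitiveRoot (ζ ^ l) m := hζ.pow (pow_pos hp.pos a) (by rw [hl, mul_comm])
    have hηK : IsPrimitiveRoot (algebraMap F K η) m :=
      hη.map_of_injective (algebraMap F K).injective
    obtain ⟨i, -, hi⟩ := hηK.eq_pow_of_pow_eq_one hξ.pow_eq_one
    have h1 : τ (ζ ^ l) = ζ ^ l := by rw [← hi, ← map_pow, AlgEquiv.commutes]
    rw [map_pow, hspec, pow_right_comm] at h1
    conv_rhs at h1 => rw [← pow_one (ζ ^ l)]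
    rw [hξ.pow_eq_pow_iff_intCast_dvd_sub hm0, ← ZMod.intCast_zmod_eq_zero_iff_dvd] at h1
    simpa only [Int.cast_sub, Int.cast_natCast, Nat.cast_one, Int.cast_one, sub_eq_zero] using h1
  have hcyc : IsCyclic Gal(K/F) := by
    obtain ⟨hp2, -⟩ | ⟨rfl, rfl⟩ := hm
    · have := ZMod.isCyclic_units_of_prime_pow p hp hp2 a
      exact isCyclic_of_injective f hf
    · have := isCyclic_ker_unitsMap_four hma
      refine isCyclic_of_injective (f.codRestrict (ZMod.unitsMap hma).ker fun τ => ?_)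
        fun τ τ' h => hf (congrArg Subtype.val h)
      rw [MonoidHom.mem_ker]
      ext
      rw [ZMod.unitsMap_val, Units.val_one, ← hmod τ, ZMod.natCast_val]
  obtain ⟨σ, hσ⟩ := hcyc
  set t := (f σ : ZMod (p ^ a)).val
  obtain ⟨c, -, hc⟩ : ∃ c < p ^ a, ζ ^ c = σ α / α := hζ.eq_pow_of_pow_eq_one (by
    rw [div_pow, ← map_pow, hα, AlgEquiv.commutes, ← hα, div_self (pow_ne_zero _ hα0)])
  have hσα : σ α = ζ ^ c * α := by rw [hc, div_mul_cancel₀ _ hα0]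
  have hmt : (m : ℤ) ∣ t - 1 := by
    rw [← ZMod.intCast_zmod_eq_zero_iff_dvd]
    simpa only [Int.cast_sub, Int.cast_natCast, Int.cast_one, sub_eq_zero] using hmod σ
  have hpt : Odd p ∧ (p : ℤ) ∣ t - 1 ∨ p = 2 ∧ 4 ∣ (t : ℤ) - 1 := by
    obtain ⟨hp2, rfl⟩ | ⟨rfl, rfl⟩ := hm
    exacts [Or.inl ⟨hp.odd_of_ne_two hp2, hmt⟩, Or.inr ⟨rfl, hmt⟩]
  obtain ⟨j, hj⟩ := exists_dvd_add_mul_sub_one hp hpt a c fun N hN => by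
    obtain ⟨h1, h2⟩ := pow_apply_eq_of_apply_eq σ (hspec σ) hσα N
    have hone : σ ^ N = 1 := hf (by
      rw [map_one]
      ext
      have hfix : ζ ^ (f (σ ^ N) : ZMod (p ^ a)).val = ζ ^ 1 := by
        rw [← hspec, h1, hζ.pow_eq_pow_iff_intCast_dvd_sub (NeZero.ne _)]
        exact_mod_cast hN
      rw [hζ.pow_eq_pow_iff_intCast_dvd_sub (NeZero.ne _), ← ZMod.intCast_zmod_eq_zero_iff_dvd,
        Int.cast_sub, Int.cast_natCast, ZMod.natCast_zmod_val, sub_eq_zero] at hfix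
      simpa using hfix)
    rw [hone, AlgEquiv.one_apply, eq_comm, mul_eq_right₀ hα0, hζ.pow_eq_one_iff_dvd] at h2
    exact_mod_cast h2
  obtain ⟨y, hy⟩ := exists_algebraMap_eq_of_zpowers_eq_top (β := ζ ^ j * α) hσ (by
    rw [map_mul, map_pow, hspec, hσα, ← pow_mul, ← mul_assoc, ← pow_add]
    congr 1
    rw [hζ.pow_eq_pow_iff_intCast_dvd_sub (NeZero.ne _)]
    convert hj using 1 <;> push_cast <;> ring)
  refine ⟨y, (algebraMap F K).injective ?_⟩
  rw [map_pow, hy, mul_pow, ← pow_mul, mul_comm j, pow_mul, hζ.pow_eq_one, one_pow, one_mul, hα]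

end

section
variable {F : Type*} [Field F] [NumberField F]

theorem exists_pow_eq_of_isPowModAlmostAll_of_isPrimitiveRoot {p a m : ℕ} (hp : p.Prime)
    (hm : p ≠ 2 ∧ m = p ∨ p = 2 ∧ m = 4) (hma : m ∣ p ^ a) {η : F} (hη : IsPrimitiveRoot η m)
    {x : 𝓞 F} (hx : x ≠ 0) (h : IsPowModAlmostAll (p ^ a) x) : ∃ y : F, y ^ p ^ a = x := by
  have : NeZero (p ^ a) := ⟨(pow_pos hp.pos a).ne'⟩
  let K := CyclotomicField (p ^ a) F
  have : NumberField K := IsCyclotomicExtension.numberField {p ^ a} F K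
  obtain ⟨z, hz⟩ := exists_pow_eq_of_isPowModAlmostAll hp
    (IsCyclotomicExtension.zeta_spec (p ^ a) F K).toInteger_isPrimitiveRoot le_rfl
    ((map_ne_zero_iff _ (FaithfulSMul.algebraMap_injective (𝓞 F) (𝓞 K))).2 hx) h.algebraMap
  exact exists_pow_eq_of_isCyclotomicExtension_s6 hp hm hma hη (α := (z : K))
    (congrArg (algebraMap (𝓞 K) K) hz)

/-- Taking norms from the `m`-th cyclotomic extension, where `m` is `p` for odd `p` and `4` for
`p = 2`. -/
theorem exists_pow_totient_eq_pow {p a m : ℕ} (hp : p.Prime)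
    (hm : p ≠ 2 ∧ m = p ∨ p = 2 ∧ m = 4) (hma : m ∣ p ^ a)
    {x : 𝓞 F} (hx : x ≠ 0) (h : IsPowModAlmostAll (p ^ a) x) :
    ∃ y : F, (x : F) ^ m.totient = y ^ p ^ a := by
  have : NeZero m := ⟨ne_zero_of_dvd_ne_zero (pow_pos hp.pos a).ne' hma⟩
  let K := CyclotomicField m F
  have : NumberField K := IsCyclotomicExtension.numberField {m} F K
  have : IsGalois F K := IsCyclotomicExtension.isGalois {m} F K
  have hζ := IsCyclotomicExtension.zeta_spec m F K
  obtain ⟨y, hy⟩ := exists_pow_eq_of_isPowModAlmostAll_of_isPrimitiveRoot hp hm hma hζ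
    ((map_ne_zero_iff _ (FaithfulSMul.algebraMap_injective (𝓞 F) (𝓞 K))).2 hx) h.algebraMap
  have hdvd : Module.finrank F K ∣ m.totient := by
    rw [← IsGalois.card_aut_eq_finrank, ← ZMod.card_units_eq_totient, ← Nat.card_eq_fintype_card]
    exact Subgroup.card_dvd_of_injective _ (hζ.autToPow_injective F)
  obtain ⟨l, hl⟩ := hdvd
  have hnorm := congrArg (Algebra.norm F) hy
  rw [map_pow] at hnorm
  refine ⟨Algebra.norm F y ^ l, ?_⟩
  rw [hl, pow_mul, pow_right_comm (Algebra.norm F y), hnorm]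
  exact congrArg (· ^ l) (Algebra.norm_algebraMap (x : F)).symm

theorem exists_pow_eq_of_isPowModAlmostAll_odd_prime_pow {p a : ℕ} (hp : p.Prime) (hp2 : p ≠ 2)
    {x : 𝓞 F} (hx : x ≠ 0) (h : IsPowModAlmostAll (p ^ a) x) : ∃ y : F, y ^ p ^ a = x := by
  obtain rfl | ha := eq_or_ne a 0
  · exact ⟨x, by simp⟩
  obtain ⟨y, hy⟩ := exists_pow_totient_eq_pow hp (Or.inl ⟨hp2, rfl⟩) (dvd_pow_self p ha) hx h
  refine (pow_mem_range_pow_of_coprime ?_ (x : F)).1 ⟨y, hy.symm⟩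
  rw [Nat.totient_prime hp]
  exact Nat.Coprime.pow_right _ ((Nat.coprime_self_sub_left hp.one_le).2 (by simp))

theorem exists_pow_two_pow_eq_neg_one {a : ℕ} {x z : 𝓞 F} (hx : x ≠ 0) (hz : z ^ 2 ^ a = -x)
    (h : IsPowModAlmostAll (2 ^ (a + 1)) x) {j : ℕ} (hj : j ≤ a) :
    ∃ ζ : 𝓞 F, ζ ^ 2 ^ j = -1 := by
  induction j with
  | zero => exact ⟨-1, by simp⟩
  | succ j ih =>
    obtain ⟨ζ, hζ⟩ := ih (by omega)
    have hζa : ζ ^ 2 ^ a = 1 := by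
      rw [← Nat.add_sub_cancel' hj, pow_add, pow_mul, pow_succ, pow_mul, hζ, neg_one_sq, one_pow]
    have hζ0 : ζ ≠ 0 := by
      rintro rfl
      rw [zero_pow (by positivity)] at hζa
      exact zero_ne_one hζa
    obtain ⟨D, hD, h⟩ := h
    obtain ⟨s, hs⟩ := exists_pow_eq_of_isPowModAlmostAll_prime Nat.prime_two
      (IsPrimitiveRoot.neg_one 0 (by norm_num)) hζ0
      ⟨D * (2 * x), by simp [hD, hx], fun v hv hv0 hv' => by
        obtain ⟨y, hy⟩ := h v hv hv0 fun h' => hv' (v.mul_mem_right _ h')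
        have h2 : (2 : 𝓞 F) ∉ v := fun h' => hv' (v.mul_mem_left _ (v.mul_mem_right _ h'))
        have hxv : x ∉ v := fun h' => hv' (v.mul_mem_left _ (v.mul_mem_left _ h'))
        have := hv.isMaximal hv0
        let := Ideal.Quotient.field v
        let q := Ideal.Quotient.mk v
        have hqx : q x ≠ 0 := fun h' => hxv (Ideal.Quotient.eq_zero_iff_mem.1 h')
        have hqz : q z ^ 2 ^ a = - q x := by rw [← map_pow, hz, map_neg]
        have hqy : q y ^ 2 ^ (a + 1) = q x := by
          rw [← map_pow]
          exact Ideal.Quotient.eq.2 hy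
        have hW : (q y ^ 2 / q z) ^ 2 ^ a = -1 := by
          rw [div_pow, hqz, ← pow_mul, ← pow_succ', hqy, div_neg, div_self hqx]
        have hq2 : (-1 : 𝓞 F ⧸ v) ≠ 1 := fun h' => h2 (Ideal.Quotient.eq_zero_iff_mem.1 (by
          rw [map_ofNat, ← one_add_one_eq_two]
          nth_rewrite 1 [← h']
          exact neg_add_cancel 1))
        have hprim : IsPrimitiveRoot (q y ^ 2 / q z) (2 ^ (a + 1)) := by
          rw [← orderOf_eq_prime_pow (p := 2) (by rwa [hW])
            (by rw [pow_succ 2 a, pow_mul, hW, neg_one_sq])]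
          exact IsPrimitiveRoot.orderOf _
        have hprim2 := hprim.pow (by positivity) (pow_succ' 2 a)
        obtain ⟨i, -, hi⟩ := hprim2.eq_pow_of_pow_eq_one (ξ := q ζ)
          (by rw [← map_pow, hζa, map_one])
        obtain ⟨s, hs⟩ := Ideal.Quotient.mk_surjective ((q y ^ 2 / q z) ^ i)
        refine ⟨s, Ideal.Quotient.eq.1 ?_⟩
        rw [map_pow, hs, pow_right_comm]
        exact hi⟩
    exact ⟨s, by rw [pow_succ', pow_mul, hs, hζ]⟩

theorem exists_pow_eq_of_isPowModAlmostAll_two_pow {a : ℕ} {x : 𝓞 F} (hx : x ≠ 0)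
    (h : IsPowModAlmostAll (2 ^ (a + 1)) x) : ∃ y : F, y ^ 2 ^ a = x := by
  obtain rfl | ha := eq_or_ne a 0
  · exact ⟨x, by simp⟩
  obtain ⟨y, hy⟩ := exists_pow_totient_eq_pow Nat.prime_two (Or.inr ⟨rfl, rfl⟩)
    (pow_dvd_pow 2 (show 2 ≤ a + 1 by omega)) hx h
  rw [show Nat.totient 4 = 2 by decide, pow_succ 2 a, pow_mul, sq_eq_sq_iff_eq_or_eq_neg] at hy
  obtain hy | hy := hy
  · exact ⟨y, hy.symm⟩
  have hint : IsIntegral ℤ y := IsIntegral.of_pow (n := 2 ^ a) (by positivity) (by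
    rw [← neg_eq_iff_eq_neg.2 hy]
    exact x.isIntegral_coe.neg)
  obtain ⟨ζ, hζ⟩ := exists_pow_two_pow_eq_neg_one (z := ⟨y, hint⟩) hx
    (RingOfIntegers.ext (neg_eq_iff_eq_neg.2 hy).symm) h le_rfl
  refine ⟨ζ * y, ?_⟩
  have hζF : (ζ : F) ^ 2 ^ a = -1 := by
    simpa using congrArg (algebraMap (𝓞 F) F) hζ
  rw [mul_pow, hζF, hy, neg_one_mul]

theorem exists_pow_eq_of_isPowModAlmostAll_two_mul {k : ℕ} (hk : 0 < k) {x : 𝓞 F} (hx : x ≠ 0)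
    (h : IsPowModAlmostAll (2 * k) x) : ∃ y : F, y ^ k = x := by
  induction k using Nat.recOnPosPrimePosCoprime with
  | prime_pow p n hp hn =>
    obtain rfl | hp2 := eq_or_ne p 2
    · exact exists_pow_eq_of_isPowModAlmostAll_two_pow hx (by rwa [pow_succ'])
    · exact exists_pow_eq_of_isPowModAlmostAll_odd_prime_pow hp hp2 hx
        (h.of_dvd (dvd_mul_left _ _))
  | zero => exact absurd hk (lt_irrefl 0)
  | one => exact ⟨x, pow_one _⟩
  | coprime a b ha hb hab iha ihb =>
    obtain ⟨y, hy⟩ := iha (by omega) (h.of_dvd (mul_dvd_mul_left 2 (dvd_mul_right a b)))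
    obtain ⟨z, hz⟩ := ihb (by omega) (h.of_dvd (mul_dvd_mul_left 2 (dvd_mul_left b a)))
    obtain ⟨t, rfl, -⟩ := (pow_eq_pow_iff_of_coprime hab).1 (hy.trans hz.symm)
    exact ⟨t, by rw [mul_comm, pow_mul, hy]⟩

end

/-- Let `F` be a number field, `d ≥ 1` and `T = 𝔾_m^d`.  For any positive
integer `k`, every `F`-point of `T` lying in `[2k]T(F_𝔭)` for all finite places `𝔭`
lies in `[k]T(F)`: if `x₁, …, x_d ∈ F^×` are `2k`-th powers in `F_𝔭^×` for every finite
place `𝔭`, then each `x_i` is a `k`-th power in `F^×`. -/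
theorem kth_power_of_locally_two_kth_power
    (F : Type*) [Field F] [NumberField F] (d : ℕ) (hd : 1 ≤ d) (k : ℕ) (hk : 0 < k)
    (x : Fin d → Fˣ)
    (hloc : ∀ i : Fin d, ∀ v : HeightOneSpectrum (𝓞 F),
      ∃ y : (v.adicCompletion F)ˣ,
        algebraMap F (v.adicCompletion F) (x i : F) = (y : v.adicCompletion F) ^ (2 * k)) :
    ∀ i : Fin d, ∃ y : Fˣ, x i = y ^ k := by
  intro i
  obtain ⟨b, hb, z, hz, hzx, hpow⟩ := exists_isPowModAlmostAll (n := 2 * k) (by omega)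
    (x i).ne_zero fun v => (hloc i v).imp' _ fun _ h => h
  obtain ⟨y, hy⟩ := exists_pow_eq_of_isPowModAlmostAll_two_mul hk hz hpow
  have hbF : (b : F) ≠ 0 := by simpa using hb
  have hxy : (x i : F) = (y / b ^ 2) ^ k := by
    rw [div_pow, hy, hzx, ← pow_mul, mul_div_cancel_right₀ _ (pow_ne_zero _ hbF)]
  have hy0 : y / (b : F) ^ 2 ≠ 0 := by
    intro h0
    rw [h0, zero_pow hk.ne'] at hxy
    exact (x i).ne_zero hxy
  exact ⟨Units.mk0 _ hy0, Units.ext hxy⟩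
end
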